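/- Let d = 2, c ∈ (0, √2), and let c_n ∈ (0, √2) with c_n → c. Let ψ_n be nontrivial finite energy solutions of the Gross–Pitaevskii traveling wave equation with speed c_n on ℝ², normalized so that ψ_n(x) → 1 as |x| → ∞, such that there is C > 0 with I^{c_n}(ψ_n) ≤ C for all n and each ψ_n has Morse index at most 1. Assume in addition that either (a) each ψ_n is vortexless, i.e. ψ_n(x) ≠ 0 for all x ∈ ℝ², or (b) there exist R > 0 and δ > 0 such that for every n the zero set {x : ψ_n(x) = 0} is contained in the ball B(0,R) and |ψ_n(x)| ≥ δ for all x ∈ ∂B(0,R). Then there exist points ξ_n ∈ ℝ² and a subsequence such that ψ_n(· − ξ_n) converges, uniformly together with all derivatives up to any fixed order on every compact subset of ℝ², to a nontrivial finite energy solution ψ of the Gross–Pitaevskii traveling wave equation with speed c. -/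

import Mathlib

/-!
The coordinates are `x₀`, the direction of propagation, and `x₁`, the transverse one; `η = 1 - |ψ|²`.
All the work goes into a uniform bound for the energy of the `ψₙ`; elliptic estimates and
Arzelà–Ascoli do the rest.

*Transverse energy.* The virial identity `∫ |∂₁ψ|² = I^c(ψ)` (`virial1`) bounds `∫ |∂₁ψₙ|²`
(`transverse_bound`; when the momentum density is not integrable its integral is `0` by convention,
and the bound is even simpler). The other virial identity (`virial0`, `energy_eq`) gives
`E(ψ) = ∫ |∂₁ψ|² + (1/2) ∫ η²`, so only `∫ η²` remains to be controlled.

*Few dips.* Fix `r` with `c²/2 < r < min 1 (2λ/3)`, where `λ = 1 + c²/4`; this is possible because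
`c² < 2`. The number of horizontal strips of unit size in which `|ψₙ|²` falls below `r` is bounded
(`few_dips`). Otherwise, by pigeonhole, some of them sit in wide strips where `∂₁ψₙ` is negligible.
Translating there, one gets in the limit a solution depending on `x₀` only, which after the gauge
change `e^{icx₀/2}` is a bounded solution of `U'' = -(λ - |U|²) U` whose modulus has a critical point
with `|U|² < 2λ/3`. Such a profile is linearly unstable (`oned_unstable`): the kernel of the second
variation contains an element vanishing at the critical point, and cutting it there lowers the
quadratic form; the remaining cases, plane waves and `0`, are unstable by an explicit computation.
Spread out in `x₁` and placed at two distant heights, the unstable direction gives Morse index at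
least two (`morse_two`).

*Energy bound.* Where `ψ ≠ 0` the transverse momentum flux `XX` is divergence free. On strips without
a dip, lying in a half plane free of zeros, it controls `∫ η²` by `∫ |∂₁ψ|²` because `r > c²/2`
(`strip_coercive`). The hypothesis on the zeros leaves out only the strips close to the axis, so that
together with the dips boundedly many strips remain; on these, integration by parts in `x₁` gives the
estimate up to an absorbable part (`bad_bound`). This yields `energy_bound`.

*Limit.* A nontrivial solution satisfies `|ψ|² ≤ r` somewhere (`dip_exists`). Translating such a point
to the origin, the uniform bounds on all derivatives (`sup_bound`, `uniform_bounds`) and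
Arzelà–Ascoli (`compactness`) provide a limit. It has finite energy by Fatou's lemma, and is
nontrivial because `|ψ(0)|² ≤ r < 1`.
-/

open MeasureTheory Filter Complex Metric Topology

noncomputable section

abbrev Ed (d : ℕ) := EuclideanSpace ℝ (Fin d)

/-- Partial derivative of `ψ` in the `i`-th coordinate direction. -/
def pd {d : ℕ} (ψ : Ed d → ℂ) (i : Fin d) (x : Ed d) : ℂ :=
  fderiv ℝ ψ x (EuclideanSpace.single i 1)

/-- Laplacian of `ψ`. -/
def lap {d : ℕ} (ψ : Ed d → ℂ) (x : Ed d) : ℂ :=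
  ∑ i : Fin d, fderiv ℝ (fun y => fderiv ℝ ψ y (EuclideanSpace.single i 1)) x
      (EuclideanSpace.single i 1)

/-- The Gross–Pitaevskii traveling wave equation with speed `c` on `ℝ^d`:
`ic ∂_{x₁}ψ + Δψ + (1 - |ψ|²)ψ = 0`. -/
def GPeq {d : ℕ} [NeZero d] (c : ℝ) (ψ : Ed d → ℂ) : Prop :=
  ∀ x, Complex.I * (c : ℂ) * pd ψ 0 x + lap ψ x + (1 - (‖ψ x‖ : ℂ) ^ 2) * ψ x = 0

/-- `|∇ψ|²`. -/
def gradSq {d : ℕ} (ψ : Ed d → ℂ) (x : Ed d) : ℝ := ∑ i : Fin d, ‖pd ψ i x‖ ^ 2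

/-- Energy density `(1/2)|∇ψ|² + (1/4)(1 - |ψ|²)²`. -/
def eDen {d : ℕ} (ψ : Ed d → ℂ) (x : Ed d) : ℝ :=
  1 / 2 * gradSq ψ x + 1 / 4 * (1 - ‖ψ x‖ ^ 2) ^ 2

/-- Energy `E(ψ)`. -/
def energy {d : ℕ} (ψ : Ed d → ℂ) : ℝ := ∫ x, eDen ψ x

/-- Finite energy. -/
def FiniteEnergy {d : ℕ} (ψ : Ed d → ℂ) : Prop := Integrable (eDen ψ)

/-- Momentum `P(ψ) = -∫ ∂_{x₁}(Im ψ)(Re ψ - 1)`. -/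
def mom {d : ℕ} [NeZero d] (ψ : Ed d → ℂ) : ℝ :=
  -∫ x, (pd ψ 0 x).im * ((ψ x).re - 1)

/-- Lagrangian `I^c(ψ) = E(ψ) - c P(ψ)`. -/
def lagr {d : ℕ} [NeZero d] (c : ℝ) (ψ : Ed d → ℂ) : ℝ := energy ψ - c * mom ψ

/-- `ψ` is not a constant of modulus 1. -/
def Nontriv {d : ℕ} (ψ : Ed d → ℂ) : Prop := ¬∃ z : ℂ, ‖z‖ = 1 ∧ ψ = fun _ => z

/-- The quadratic form `Q` of the second variation of `I^c` at `ψ`: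
`Q(φ) = ∫ |∇φ|² - c⟨φ, i∂₁φ⟩ - (1-|ψ|²)|φ|² + 2⟨φ,ψ⟩²` with `⟨z₁,z₂⟩ = Re (z₁ conj z₂)`. -/
def Qform {d : ℕ} [NeZero d] (c : ℝ) (ψ φ : Ed d → ℂ) : ℝ :=
  ∫ x, (gradSq φ x - c * (φ x * (starRingEnd ℂ) (Complex.I * pd φ 0 x)).re
    - (1 - ‖ψ x‖ ^ 2) * ‖φ x‖ ^ 2 + 2 * ((φ x * (starRingEnd ℂ) (ψ x)).re) ^ 2)

/-- The Morse index of `ψ` is at most `m`: every subspace of smooth compactly supported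
functions on which `Q` is negative definite has dimension at most `m`. -/
def MorseIndexLE {d : ℕ} [NeZero d] (c : ℝ) (ψ : Ed d → ℂ) (m : ℕ) : Prop :=
  ∀ Y : Submodule ℝ (Ed d → ℂ),
    (∀ φ ∈ Y, ContDiff ℝ (⊤ : ℕ∞) φ ∧ HasCompactSupport φ) →
    (∀ φ ∈ Y, φ ≠ 0 → Qform c ψ φ < 0) → Module.rank ℝ Y ≤ m

/-- `C^k_loc` convergence: uniform convergence of all iterated derivatives on every
compact set. -/
def LocCk {d : ℕ} (ψn : ℕ → Ed d → ℂ) (ψ : Ed d → ℂ) : Prop :=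
  ∀ (k : ℕ) (K : Set (Ed d)), IsCompact K →
    TendstoUniformlyOn (fun n => iteratedFDeriv ℝ k (ψn n)) (iteratedFDeriv ℝ k ψ) atTop K

/-! ### Partial derivatives in the plane -/

/-- Partial derivative of a vector-valued function on the plane in the `i`-th direction. -/
def dd {F : Type*} [NormedAddCommGroup F] [NormedSpace ℝ F] (i : Fin 2) (f : Ed 2 → F)
    (x : Ed 2) : F := fderiv ℝ f x (EuclideanSpace.single i 1)

section dd
variable {F : Type*} [NormedAddCommGroup F] [NormedSpace ℝ F]

/-- `C^∞` functions on the plane. -/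
abbrev Smooth (f : Ed 2 → F) : Prop := ContDiff ℝ (⊤ : ℕ∞) f

lemma ContDiff.dd {f : Ed 2 → F} (hf : Smooth f) (i : Fin 2) : Smooth (dd i f) := by
  unfold _root_.dd
  have h : ContDiff ℝ (⊤ : ℕ∞) (fderiv ℝ f) := hf.fderiv_right (by simp)
  exact h.clm_apply contDiff_const

lemma ContDiff.diff {f : Ed 2 → F} (hf : Smooth f) : Differentiable ℝ f :=
  hf.differentiable (by simp)

lemma lap_eq (ψ : Ed 2 → ℂ) (x : Ed 2) : lap ψ x = dd 0 (dd 0 ψ) x + dd 1 (dd 1 ψ) x := by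
  simp only [lap, Fin.sum_univ_two]
  rfl

lemma dd_comm {f : Ed 2 → F} (hf : Smooth f) (i j : Fin 2) : dd i (dd j f) = dd j (dd i f) := by
  funext x
  have hd : Differentiable ℝ (fderiv ℝ f) :=
    (hf.fderiv_right (m := (⊤ : ℕ∞)) (by simp)).differentiable (by simp)
  have h2 : ∀ i j : Fin 2, dd i (dd j f) x = fderiv ℝ (fderiv ℝ f) x (EuclideanSpace.single i 1)
      (EuclideanSpace.single j 1) := by
    intro i j
    unfold dd
    rw [fderiv_clm_apply (hd x) (by fun_prop)]
    simp
  rw [h2, h2]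
  exact second_derivative_symmetric (fun y => (hf.diff y).hasFDerivAt) (hd x).hasFDerivAt _ _

lemma hasDerivAt_line {f : Ed 2 → F} (hf : Differentiable ℝ f) (x : Ed 2) (i : Fin 2) (t : ℝ) :
    HasDerivAt (fun t : ℝ => f (x + t • EuclideanSpace.single i 1))
      (dd i f (x + t • EuclideanSpace.single i 1)) t := by
  have h1 : HasDerivAt (fun t : ℝ => x + t • (EuclideanSpace.single i 1 : Ed 2))
      (EuclideanSpace.single i 1) t := by
    simpa using ((hasDerivAt_id t).smul_const (EuclideanSpace.single i 1 : Ed 2)).const_add x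
  exact (hf _).hasFDerivAt.comp_hasDerivAt t h1

end dd

/-- Second derivative test: at a local maximum the second derivative is nonpositive. -/
lemma second_deriv_nonpos {g g' : ℝ → ℝ} {g'' : ℝ} {a : ℝ} (hg : ∀ t, HasDerivAt g (g' t) t)
    (hg' : HasDerivAt g' g'' a) (hmax : IsLocalMax g a) : g'' ≤ 0 := by
  by_contra! hpos
  have e1 : deriv g = g' := funext fun t => (hg t).deriv
  have hd : deriv g a = 0 := hmax.deriv_eq_zero
  have hmin : IsLocalMin g a := by
    refine isLocalMin_of_deriv_deriv_pos ?_ hd (hg a).continuousAt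
    rw [e1, hg'.deriv]; exact hpos
  have hc : g =ᶠ[𝓝 a] fun _ => g a := by
    filter_upwards [hmax, hmin] with t h1 h2
    exact le_antisymm h1 h2
  have hc' : g' =ᶠ[𝓝 a] fun _ => 0 := by
    have := hc.deriv
    rw [e1] at this
    simpa using this
  have h0 : g'' = 0 := by
    rw [← hg'.deriv, hc'.deriv_eq]; simp
  linarith

lemma second_deriv_nonneg {g g' : ℝ → ℝ} {g'' : ℝ} {a : ℝ} (hg : ∀ t, HasDerivAt g (g' t) t)
    (hg' : HasDerivAt g' g'' a) (hmin : IsLocalMin g a) : 0 ≤ g'' := by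
  have := second_deriv_nonpos (g := fun t => - g t) (g' := fun t => - g' t) (g'' := -g'') (a := a)
    (fun t => (hg t).neg) hg'.neg hmin.neg
  linarith

lemma dd_max {f : Ed 2 → ℝ} (hf : Smooth f) {x : Ed 2} (hmax : IsLocalMax f x) (i : Fin 2) :
    dd i (dd i f) x ≤ 0 := by
  have h1 := hasDerivAt_line hf.diff x i
  have h2 := hasDerivAt_line (hf.dd i).diff x i 0
  simp only [zero_smul, add_zero] at h2
  refine second_deriv_nonpos h1 h2 ?_
  have hc : ContinuousAt (fun t : ℝ => x + t • (EuclideanSpace.single i 1 : Ed 2)) 0 := by fun_prop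
  have hx : Tendsto (fun t : ℝ => x + t • (EuclideanSpace.single i 1 : Ed 2)) (𝓝 0) (𝓝 x) := by
    simpa [ContinuousAt] using hc
  unfold IsLocalMax IsMaxFilter
  simpa using hx.eventually hmax

/-- Interior gradient estimate for the Laplacian on a half square, by comparison of the odd part
`v` of `f` in `t` with the barrier `A (s² + 2t - t²) + (B + ε)/2 (t - t²)`. -/
lemma grad_aux {f fs fss ft ftt : ℝ → ℝ → ℝ} {A B : ℝ}
    (hc : Continuous (fun p : ℝ × ℝ => f p.1 p.2))
    (h1 : ∀ s t, HasDerivAt (fun s => f s t) (fs s t) s)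
    (h2 : ∀ s t, HasDerivAt (fun s => fs s t) (fss s t) s)
    (h3 : ∀ s t, HasDerivAt (fun t => f s t) (ft s t) t)
    (h4 : ∀ s t, HasDerivAt (fun t => ft s t) (ftt s t) t)
    (hA : ∀ s t, |f s t| ≤ A) (hB : ∀ s t, |fss s t + ftt s t| ≤ B) :
    ft 0 0 ≤ 2 * A + B / 2 := by
  have hA0 : 0 ≤ A := (abs_nonneg _).trans (hA 0 0)
  refine le_of_forall_pos_le_add fun ε hε => ?_
  set D := B + 2 * ε with hD
  have hB0 : 0 ≤ B := (abs_nonneg _).trans (hB 0 0)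
  set h : ℝ → ℝ → ℝ := fun s t => A * (s ^ 2 + 2 * t - t ^ 2) + D / 2 * (t - t ^ 2)
    - (f s t - f s (-t)) / 2 with hh
  have key : ∀ s ∈ Set.Icc (-1 : ℝ) 1, ∀ t ∈ Set.Icc (0 : ℝ) 1, 0 ≤ h s t := by
    have hcomp : IsCompact (Set.Icc (-1 : ℝ) 1 ×ˢ Set.Icc (0 : ℝ) 1) :=
      isCompact_Icc.prod isCompact_Icc
    have hcont : Continuous (fun p : ℝ × ℝ => h p.1 p.2) := by
      have : Continuous (fun p : ℝ × ℝ => f p.1 (-p.2)) :=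
        hc.comp (continuous_fst.prodMk continuous_snd.neg)
      simp only [hh]; fun_prop
    obtain ⟨⟨s0, t0⟩, hmem, hmin⟩ := hcomp.exists_isMinOn ⟨(0, 0), by simp⟩ hcont.continuousOn
    intro s hs t ht
    have hle : h s0 t0 ≤ h s t := hmin (Set.mk_mem_prod hs ht)
    refine le_trans ?_ hle
    by_contra! hneg
    obtain ⟨⟨hs1, hs2⟩, ht1, ht2⟩ := hmem
    simp only at hs1 hs2 ht1 ht2
    have hf1 := abs_le.1 (hA s0 t0)
    have hf2 := abs_le.1 (hA s0 (-t0))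
    have hDD : 0 ≤ D := by positivity
    -- on the sides other than `t = 0` the barrier is at least `A`
    have hbd : s0 ^ 2 + 2 * t0 - t0 ^ 2 < 1 := by
      by_contra! hge
      have : A ≤ A * (s0 ^ 2 + 2 * t0 - t0 ^ 2) := by nlinarith
      have : 0 ≤ D / 2 * (t0 - t0 ^ 2) := by
        apply mul_nonneg (by linarith); nlinarith
      simp only [hh] at hneg; linarith
    have hs1' : -1 < s0 := lt_of_le_of_ne hs1 (by rintro rfl; nlinarith)
    have hs2' : s0 < 1 := lt_of_le_of_ne hs2 (by rintro rfl; nlinarith)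
    have ht2' : t0 < 1 := lt_of_le_of_ne ht2 (by rintro rfl; nlinarith [sq_nonneg s0])
    have ht1' : 0 < t0 := lt_of_le_of_ne ht1 (by
      rintro rfl
      simp only [hh] at hneg
      norm_num at hneg
      nlinarith [mul_nonneg hA0 (sq_nonneg s0)])
    have ms : IsLocalMin (fun s => h s t0) s0 := by
      filter_upwards [Ioo_mem_nhds hs1' hs2'] with s hs
      exact hmin (Set.mk_mem_prod ⟨hs.1.le, hs.2.le⟩ ⟨ht1, ht2⟩)
    have mt : IsLocalMin (fun t => h s0 t) t0 := by
      filter_upwards [Ioo_mem_nhds ht1' ht2'] with t ht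
      exact hmin (Set.mk_mem_prod ⟨hs1, hs2⟩ ⟨ht.1.le, ht.2.le⟩)
    have ds := second_deriv_nonneg (g := fun s => h s t0)
      (g' := fun s => A * (2 * s) - (fs s t0 - fs s (-t0)) / 2)
      (g'' := A * 2 - (fss s0 t0 - fss s0 (-t0)) / 2) (a := s0)
      (fun s => by
        have := ((((((hasDerivAt_id s).pow 2).add_const (2 * t0)).sub_const (t0 ^ 2)).const_mul
          A).add_const (D / 2 * (t0 - t0 ^ 2))).sub (((h1 s t0).sub (h1 s (-t0))).div_const 2)
        refine this.congr_deriv ?_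
        simp) (by
        have := (((hasDerivAt_id s0).const_mul 2).const_mul
          A).sub (((h2 s0 t0).sub (h2 s0 (-t0))).div_const 2)
        refine this.congr_deriv ?_
        simp) ms
    have hneg' : ∀ (g g' : ℝ → ℝ), (∀ t, HasDerivAt g (g' t) t) → ∀ t,
        HasDerivAt (fun t => g (-t)) (- g' (-t)) t := by
      intro g g' hg t
      have := (hg (-t)).comp t (hasDerivAt_neg t)
      exact this.congr_deriv (by simp)
    have dt := second_deriv_nonneg (g := fun t => h s0 t)
      (g' := fun t => A * (2 - 2 * t) + D / 2 * (1 - 2 * t) - (ft s0 t - - ft s0 (-t)) / 2)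
      (g'' := A * (- 2) + D / 2 * (-2) - (ftt s0 t0 - - - ftt s0 (-t0)) / 2) (a := t0)
      (fun t => by
        have := (((((hasDerivAt_id t).const_mul 2).const_add (s0 ^ 2)).sub
          ((hasDerivAt_id t).pow 2)).const_mul A).add
          (((hasDerivAt_id t).sub ((hasDerivAt_id t).pow 2)).const_mul (D / 2)) |>.sub
          (((h3 s0 t).sub (hneg' _ _ (h3 s0) t)).div_const 2)
        refine this.congr_deriv ?_
        simp) (by
        have := ((((hasDerivAt_id t0).const_mul 2).const_sub 2).const_mul A).add
          ((((hasDerivAt_id t0).const_mul 2).const_sub 1).const_mul (D / 2)) |>.sub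
          (((h4 s0 t0).sub ((hneg' _ _ (h4 s0) t0)).neg).div_const 2)
        refine this.congr_deriv ?_
        simp) mt
    have b1 := abs_le.1 (hB s0 t0)
    have b2 := abs_le.1 (hB s0 (-t0))
    linarith
  -- compare difference quotients at `t = 0`
  have hlim : HasDerivAt (fun t => h 0 t) (A * 2 + D / 2 - ft 0 0) 0 := by
    have hn : HasDerivAt (fun t => f 0 (-t)) (- ft 0 0) 0 := by
      have := (show HasDerivAt (fun t => f 0 t) (ft 0 0) (-0) by simpa using h3 0 0).comp 0
        (hasDerivAt_neg (0 : ℝ))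
      exact this.congr_deriv (by simp)
    have := (((((hasDerivAt_id (0:ℝ)).const_mul 2).const_add ((0:ℝ) ^ 2)).sub
          ((hasDerivAt_id (0:ℝ)).pow 2)).const_mul A).add
          (((hasDerivAt_id (0:ℝ)).sub ((hasDerivAt_id (0:ℝ)).pow 2)).const_mul (D / 2)) |>.sub
          (((h3 0 0).sub hn).div_const 2)
    refine this.congr_deriv ?_
    simp
  have h0 : h 0 0 = 0 := by simp [hh]
  have hnn : 0 ≤ A * 2 + D / 2 - ft 0 0 := by
    have hs := hlim.hasDerivWithinAt (s := Set.Ioi 0)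
    rw [hasDerivWithinAt_iff_tendsto_slope' (by simp)] at hs
    refine ge_of_tendsto hs ?_
    have : Set.Ioo (0:ℝ) 1 ∈ 𝓝[>] (0:ℝ) := Ioo_mem_nhdsGT (by norm_num)
    filter_upwards [this] with t ht
    rw [slope_def_field, h0]
    have := key 0 (by norm_num) t ⟨ht.1.le, ht.2.le⟩
    apply div_nonneg <;> linarith [ht.1]
  rw [hD] at hnn
  linarith

/-! ### The equation in components -/

section ddcalc
variable {F : Type*} [NormedAddCommGroup F] [NormedSpace ℝ F]
  {𝔸 : Type*} [NormedCommRing 𝔸] [NormedAlgebra ℝ 𝔸]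

lemma dd_of_line {f : Ed 2 → F} (hf : Differentiable ℝ f) {i : Fin 2} {x : Ed 2} {f' : F}
    (h : HasDerivAt (fun t : ℝ => f (x + t • EuclideanSpace.single i 1)) f' 0) :
    dd i f x = f' := by
  have := (hasDerivAt_line hf x i 0).unique h
  simpa using this

lemma dd_line {f : Ed 2 → F} (hf : Differentiable ℝ f) (i : Fin 2) (x : Ed 2) :
    HasDerivAt (fun t : ℝ => f (x + t • EuclideanSpace.single i 1)) (dd i f x) 0 := by
  simpa using hasDerivAt_line hf x i 0

lemma dd_mul {f g : Ed 2 → 𝔸} (hf : Differentiable ℝ f) (hg : Differentiable ℝ g) (i : Fin 2) :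
    dd i (fun x => f x * g x) = fun x => dd i f x * g x + f x * dd i g x := by
  funext x
  exact dd_of_line (hf.mul hg) (((dd_line hf i x).mul (dd_line hg i x)).congr_deriv (by simp))

lemma dd_add {f g : Ed 2 → F} (hf : Differentiable ℝ f) (hg : Differentiable ℝ g) (i : Fin 2) :
    dd i (fun x => f x + g x) = fun x => dd i f x + dd i g x := by
  funext x
  exact dd_of_line (hf.add hg) (((dd_line hf i x).add (dd_line hg i x)).congr_deriv (by simp))

lemma dd_sub {f g : Ed 2 → F} (hf : Differentiable ℝ f) (hg : Differentiable ℝ g) (i : Fin 2) :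
    dd i (fun x => f x - g x) = fun x => dd i f x - dd i g x := by
  funext x
  exact dd_of_line (hf.sub hg) (((dd_line hf i x).sub (dd_line hg i x)).congr_deriv (by simp))

lemma dd_const (a : F) (i : Fin 2) : dd i (fun _ : Ed 2 => a) = fun _ => 0 := by
  funext x
  simp [dd]

lemma dd_const_mul (a : 𝔸) {f : Ed 2 → 𝔸} (hf : Differentiable ℝ f) (i : Fin 2) :
    dd i (fun x => a * f x) = fun x => a * dd i f x := by
  rw [dd_mul (by fun_prop) hf, dd_const]; simp

lemma dd_clm {G : Type*} [NormedAddCommGroup G] [NormedSpace ℝ G] (L : F →L[ℝ] G) {f : Ed 2 → F}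
    (hf : Differentiable ℝ f) (i : Fin 2) : dd i (fun x => L (f x)) = fun x => L (dd i f x) := by
  funext x
  refine dd_of_line (by fun_prop) ?_
  exact L.hasFDerivAt.comp_hasDerivAt 0 (dd_line hf i x)

lemma dd_re {f : Ed 2 → ℂ} (hf : Differentiable ℝ f) (i : Fin 2) :
    dd i (fun x => (f x).re) = fun x => (dd i f x).re := dd_clm reCLM hf i

lemma dd_im {f : Ed 2 → ℂ} (hf : Differentiable ℝ f) (i : Fin 2) :
    dd i (fun x => (f x).im) = fun x => (dd i f x).im := dd_clm imCLM hf i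

lemma dd_conj {f : Ed 2 → ℂ} (hf : Differentiable ℝ f) (i : Fin 2) :
    dd i (fun x => (starRingEnd ℂ) (f x)) = fun x => (starRingEnd ℂ) (dd i f x) :=
  dd_clm conjCLE.toContinuousLinearMap hf i

end ddcalc

lemma ContDiff.re {f : Ed 2 → ℂ} (hf : Smooth f) : Smooth (fun x => (f x).re) :=
  reCLM.contDiff.comp hf

lemma ContDiff.im {f : Ed 2 → ℂ} (hf : Smooth f) : Smooth (fun x => (f x).im) :=
  imCLM.contDiff.comp hf

lemma ContDiff.conj {f : Ed 2 → ℂ} (hf : Smooth f) : Smooth (fun x => (starRingEnd ℂ) (f x)) :=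
  conjCLE.toContinuousLinearMap.contDiff.comp hf

/-- The complex form of the equation. -/
lemma GPeq_iff (c : ℝ) (ψ : Ed 2 → ℂ) : GPeq c ψ ↔ ∀ x, I * c * dd 0 ψ x +
    (dd 0 (dd 0 ψ) x + dd 1 (dd 1 ψ) x) + (1 - (‖ψ x‖ : ℂ) ^ 2) * ψ x = 0 := by
  unfold GPeq
  simp only [lap_eq]
  rfl

lemma normSq_eq (z : ℂ) : ‖z‖ ^ 2 = z.re ^ 2 + z.im ^ 2 := by
  rw [← Complex.normSq_eq_norm_sq, Complex.normSq_apply]; ring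

/-- The equation for the real part. -/
lemma GPeq_re {c : ℝ} {ψ : Ed 2 → ℂ} (h : GPeq c ψ) (x : Ed 2) :
    (dd 0 (dd 0 ψ) x).re + (dd 1 (dd 1 ψ) x).re = c * (dd 0 ψ x).im -
      (1 - ‖ψ x‖ ^ 2) * (ψ x).re := by
  have := congrArg Complex.re ((GPeq_iff c ψ).1 h x)
  have e : (1 - (‖ψ x‖ : ℂ) ^ 2) = ((1 - ‖ψ x‖ ^ 2 : ℝ) : ℂ) := by push_cast; ring
  rw [e] at this
  simp [-ofReal_sub, -ofReal_pow] at this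
  linarith

/-- The equation for the imaginary part. -/
lemma GPeq_im {c : ℝ} {ψ : Ed 2 → ℂ} (h : GPeq c ψ) (x : Ed 2) :
    (dd 0 (dd 0 ψ) x).im + (dd 1 (dd 1 ψ) x).im = - c * (dd 0 ψ x).re -
      (1 - ‖ψ x‖ ^ 2) * (ψ x).im := by
  have := congrArg Complex.im ((GPeq_iff c ψ).1 h x)
  have e : (1 - (‖ψ x‖ : ℂ) ^ 2) = ((1 - ‖ψ x‖ ^ 2 : ℝ) : ℂ) := by push_cast; ring
  rw [e] at this
  simp [-ofReal_sub, -ofReal_pow] at this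
  linarith

/-! ### Uniform bounds for solutions -/

lemma smooth_normSq {ψ : Ed 2 → ℂ} (hs : Smooth ψ) : Smooth (fun x => ‖ψ x‖ ^ 2) := by
  have : (fun x => ‖ψ x‖ ^ 2) = fun x => (ψ x).re ^ 2 + (ψ x).im ^ 2 :=
    funext fun x => normSq_eq _
  rw [this]
  exact (hs.re.pow 2).add (hs.im.pow 2)

lemma dd_normSq {ψ : Ed 2 → ℂ} (hs : Smooth ψ) (i : Fin 2) : dd i (fun x => ‖ψ x‖ ^ 2) =
    fun x => 2 * ((ψ x).re * (dd i ψ x).re + (ψ x).im * (dd i ψ x).im) := by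
  funext x
  have : (fun x => ‖ψ x‖ ^ 2) = fun x => (ψ x).re ^ 2 + (ψ x).im ^ 2 :=
    funext fun x => normSq_eq _
  rw [this]
  refine dd_of_line ((hs.re.pow 2).add (hs.im.pow 2)).diff ?_
  have h1 := dd_line hs.re.diff i x
  have h2 := dd_line hs.im.diff i x
  rw [dd_re hs.diff] at h1
  rw [dd_im hs.diff] at h2
  refine ((h1.pow 2).add (h2.pow 2)).congr_deriv ?_
  simp; ring

lemma dd_dd_normSq {ψ : Ed 2 → ℂ} (hs : Smooth ψ) (i : Fin 2) :
    dd i (dd i (fun x => ‖ψ x‖ ^ 2)) = fun x => 2 * (‖dd i ψ x‖ ^ 2 +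
      ((ψ x).re * (dd i (dd i ψ) x).re + (ψ x).im * (dd i (dd i ψ) x).im)) := by
  funext x
  rw [dd_normSq hs]
  have hs1 := hs.re; have hs2 := hs.im; have hs3 := (hs.dd i).re; have hs4 := (hs.dd i).im
  refine dd_of_line (contDiff_const.mul ((hs1.mul hs3).add (hs2.mul hs4))).diff ?_
  have h1 := dd_line hs.re.diff i x
  have h2 := dd_line hs.im.diff i x
  have h3 := dd_line (hs.dd i).re.diff i x
  have h4 := dd_line (hs.dd i).im.diff i x
  rw [dd_re hs.diff] at h1
  rw [dd_im hs.diff] at h2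
  rw [dd_re (hs.dd i).diff] at h3
  rw [dd_im (hs.dd i).diff] at h4
  refine (((h1.mul h3).add (h2.mul h4)).const_mul 2).congr_deriv ?_
  rw [normSq_eq]
  simp; ring

/-- Maximum principle: `|ψ|² ≤ 1 + c²/4`. -/
lemma sup_bound {c : ℝ} {ψ : Ed 2 → ℂ} (hs : Smooth ψ) (h : GPeq c ψ)
    (hlim : Tendsto ψ (cocompact (Ed 2)) (𝓝 1)) (x : Ed 2) : ‖ψ x‖ ^ 2 ≤ 1 + c ^ 2 / 4 := by
  by_contra! hx
  have hcont : Continuous (fun x => ‖ψ x‖ ^ 2) := (smooth_normSq hs).continuous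
  have hl : Tendsto (fun x => ‖ψ x‖ ^ 2) (cocompact (Ed 2)) (𝓝 1) := by
    simpa using (hlim.norm.pow 2)
  obtain ⟨y, hy⟩ := hcont.exists_forall_ge' x (by
    filter_upwards [hl.eventually_lt_const (show (1:ℝ) < ‖ψ x‖ ^ 2 by nlinarith [sq_nonneg c])]
      with z hz using hz.le)
  have hmax : IsLocalMax (fun x => ‖ψ x‖ ^ 2) y := Eventually.of_forall hy
  have h0 := dd_max (smooth_normSq hs) hmax 0
  have h1 := dd_max (smooth_normSq hs) hmax 1
  rw [dd_dd_normSq hs] at h0 h1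
  have hyx : 1 + c ^ 2 / 4 < ‖ψ y‖ ^ 2 := hx.trans_le (hy x)
  have e1 := GPeq_re h y
  have e2 := GPeq_im h y
  have hp : 0 ≤ ‖dd 1 ψ y‖ ^ 2 := by positivity
  simp only [normSq_eq] at *
  set a := (ψ y).re
  set b := (ψ y).im
  set p := (dd 0 ψ y).re
  set q := (dd 0 ψ y).im
  have hkey : a * ((dd 0 (dd 0 ψ) y).re + (dd 1 (dd 1 ψ) y).re) +
      b * ((dd 0 (dd 0 ψ) y).im + (dd 1 (dd 1 ψ) y).im) =
      c * (a * q - b * p) + (a^2+b^2 - 1) * (a^2+b^2) := by rw [e1, e2]; ring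
  have : 0 < (a^2+b^2 - 1 - c^2/4) * (a^2+b^2) := by
    apply mul_pos <;> nlinarith [sq_nonneg c]
  nlinarith [sq_nonneg (p - c/2*b), sq_nonneg (q + c/2*a)]

lemma add_single (x : Ed 2) : x = (x 0) • EuclideanSpace.single 0 1 +
    (x 1) • EuclideanSpace.single 1 1 := by
  ext i; fin_cases i <;> simp

lemma grad_real {f : Ed 2 → ℝ} (hf : Smooth f) {A B : ℝ} (hA : ∀ x, |f x| ≤ A)
    (hB : ∀ x, |dd 0 (dd 0 f) x + dd 1 (dd 1 f) x| ≤ B) (i : Fin 2) (x : Ed 2) :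
    dd i f x ≤ 2 * A + B / 2 := by
  set e : Fin 2 → Ed 2 := fun i => EuclideanSpace.single i 1 with he
  have hline : ∀ (g : Ed 2 → ℝ), Smooth g → ∀ (i : Fin 2) (y : Ed 2) (t : ℝ),
      HasDerivAt (fun t : ℝ => g (y + t • e i)) (dd i g (y + t • e i)) t :=
    fun g hg i y t => hasDerivAt_line hg.diff y i t
  have main : ∀ i j : Fin 2, (∀ y, |dd j (dd j f) y + dd i (dd i f) y| ≤ B) →
      dd i f x ≤ 2 * A + B / 2 := by
    intro i j hB
    have sw : ∀ s t : ℝ, x + s • e j + t • e i = x + t • e i + s • e j := fun s t => by abel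
    have := grad_aux (f := fun s t => f (x + s • e j + t • e i))
      (fs := fun s t => dd j f (x + s • e j + t • e i))
      (fss := fun s t => dd j (dd j f) (x + s • e j + t • e i))
      (ft := fun s t => dd i f (x + s • e j + t • e i))
      (ftt := fun s t => dd i (dd i f) (x + s • e j + t • e i)) (A := A) (B := B)
      (hf.continuous.comp (by fun_prop))
      (fun s t => by simpa only [sw] using hline f hf j (x + t • e i) s)
      (fun s t => by simpa only [sw] using hline _ (hf.dd j) j (x + t • e i) s)
      (fun s t => hline f hf i (x + s • e j) t)
      (fun s t => hline _ (hf.dd i) i (x + s • e j) t)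
      (fun s t => hA _) (fun s t => hB _)
    simpa using this
  fin_cases i
  · exact main 0 1 (fun y => by rw [add_comm]; exact hB y)
  · exact main 1 0 hB

lemma grad_complex {f : Ed 2 → ℂ} (hf : Smooth f) {A B : ℝ} (hA : ∀ x, ‖f x‖ ≤ A)
    (hB : ∀ x, ‖dd 0 (dd 0 f) x + dd 1 (dd 1 f) x‖ ≤ B) (i : Fin 2) (x : Ed 2) :
    ‖dd i f x‖ ≤ 4 * A + B := by
  have key : ∀ L : ℂ →L[ℝ] ℝ, (∀ z, |L z| ≤ ‖z‖) → L (dd i f x) ≤ 2 * A + B / 2 := by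
    intro L hL
    have hs : Smooth (fun x => L (f x)) := L.contDiff.comp hf
    have := grad_real hs (A := A) (B := B) (fun x => (hL _).trans (hA x)) (fun x => by
      rw [dd_clm L hf.diff, dd_clm L (hf.dd 0).diff, dd_clm L hf.diff, dd_clm L (hf.dd 1).diff]
      simp only [← map_add]
      exact (hL _).trans (hB x)) i x
    rwa [dd_clm L hf.diff] at this
  have h1 := key reCLM (fun z => abs_re_le_norm z)
  have h2 := key (-reCLM) (fun z => by simpa using abs_re_le_norm z)
  have h3 := key imCLM (fun z => abs_im_le_norm z)
  have h4 := key (-imCLM) (fun z => by simpa using abs_im_le_norm z)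
  simp at h1 h2 h3 h4
  refine (norm_le_abs_re_add_abs_im _).trans ?_
  have h5 : |(dd i f x).re| ≤ 2 * A + B / 2 := abs_le.2 ⟨by linarith, h1⟩
  have h6 : |(dd i f x).im| ≤ 2 * A + B / 2 := abs_le.2 ⟨by linarith, h3⟩
  linarith

/-- A sequence of functions whose partial derivatives of order at most `k` are bounded,
uniformly along the sequence. -/
def BD : ℕ → (ℕ → Ed 2 → ℂ) → Prop
  | 0, f => ∃ M, ∀ n x, ‖f n x‖ ≤ M
  | k + 1, f => (∃ M, ∀ n x, ‖f n x‖ ≤ M) ∧ ∀ i, BD k (fun n => dd i (f n))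

lemma BD.zero {k : ℕ} {f : ℕ → Ed 2 → ℂ} (h : BD k f) : ∃ M, ∀ n x, ‖f n x‖ ≤ M := by
  cases k with
  | zero => exact h
  | succ k => exact h.1

lemma BD.mono {k : ℕ} : ∀ {f : ℕ → Ed 2 → ℂ}, BD (k + 1) f → BD k f := by
  induction k with
  | zero => exact fun h => h.1
  | succ k ih => exact fun h => ⟨h.1, fun i => ih (h.2 i)⟩

lemma BD.add {k : ℕ} : ∀ {f g : ℕ → Ed 2 → ℂ}, (∀ n, Smooth (f n)) → (∀ n, Smooth (g n)) →
    BD k f → BD k g → BD k (fun n x => f n x + g n x) := by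
  have base : ∀ {f g : ℕ → Ed 2 → ℂ}, (∃ M, ∀ n x, ‖f n x‖ ≤ M) → (∃ M, ∀ n x, ‖g n x‖ ≤ M) →
      ∃ M, ∀ n x, ‖f n x + g n x‖ ≤ M := by
    rintro f g ⟨M, hM⟩ ⟨N, hN⟩
    exact ⟨M + N, fun n x => (norm_add_le _ _).trans (add_le_add (hM n x) (hN n x))⟩
  induction k with
  | zero => exact fun _ _ h1 h2 => base h1 h2
  | succ k ih =>
    intro f g hf hg h1 h2
    refine ⟨base h1.1 h2.1, fun i => ?_⟩
    have : (fun n => dd i (fun x => f n x + g n x)) = fun n x => dd i (f n) x + dd i (g n) x :=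
      funext fun n => dd_add (hf n).diff (hg n).diff i
    rw [this]
    exact ih (fun n => (hf n).dd i) (fun n => (hg n).dd i) (h1.2 i) (h2.2 i)

lemma BD.mul {k : ℕ} : ∀ {f g : ℕ → Ed 2 → ℂ}, (∀ n, Smooth (f n)) → (∀ n, Smooth (g n)) →
    BD k f → BD k g → BD k (fun n x => f n x * g n x) := by
  have base : ∀ {f g : ℕ → Ed 2 → ℂ}, (∃ M, ∀ n x, ‖f n x‖ ≤ M) → (∃ M, ∀ n x, ‖g n x‖ ≤ M) →
      ∃ M, ∀ n x, ‖f n x * g n x‖ ≤ M := by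
    rintro f g ⟨M, hM⟩ ⟨N, hN⟩
    refine ⟨M * N, fun n x => ?_⟩
    rw [norm_mul]
    exact mul_le_mul (hM n x) (hN n x) (norm_nonneg _) ((norm_nonneg _).trans (hM n x))
  induction k with
  | zero => exact fun _ _ h1 h2 => base h1 h2
  | succ k ih =>
    intro f g hf hg h1 h2
    refine ⟨base h1.1 h2.1, fun i => ?_⟩
    have : (fun n => dd i (fun x => f n x * g n x)) =
        fun n x => dd i (f n) x * g n x + f n x * dd i (g n) x :=
      funext fun n => dd_mul (hf n).diff (hg n).diff i
    rw [this]
    exact BD.add (fun n => ((hf n).dd i).mul (hg n)) (fun n => (hf n).mul ((hg n).dd i))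
      (ih (fun n => (hf n).dd i) hg (h1.2 i) h2.mono)
      (ih hf (fun n => (hg n).dd i) h1.mono (h2.2 i))

lemma BD.conj {k : ℕ} : ∀ {f : ℕ → Ed 2 → ℂ}, (∀ n, Smooth (f n)) →
    BD k f → BD k (fun n x => (starRingEnd ℂ) (f n x)) := by
  induction k with
  | zero => exact fun _ ⟨M, hM⟩ => ⟨M, fun n x => by simpa using hM n x⟩
  | succ k ih =>
    intro f hf h1
    refine ⟨h1.1.imp fun M hM n x => by simpa using hM n x, fun i => ?_⟩
    have : (fun n => dd i (fun x => (starRingEnd ℂ) (f n x))) =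
        fun n x => (starRingEnd ℂ) (dd i (f n) x) :=
      funext fun n => dd_conj (hf n).diff i
    rw [this]
    exact ih (fun n => (hf n).dd i) (h1.2 i)

lemma BD.const {k : ℕ} : ∀ {a : ℕ → ℂ}, (∃ M, ∀ n, ‖a n‖ ≤ M) → BD k (fun n _ => a n) := by
  induction k with
  | zero => exact fun ⟨M, hM⟩ => ⟨M, fun n _ => hM n⟩
  | succ k ih =>
    rintro a ⟨M, hM⟩
    refine ⟨⟨M, fun n _ => hM n⟩, fun i => ?_⟩
    simp only [dd_const]
    exact ih ⟨0, by simp⟩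

/-- Bounds on `f` and on its Laplacian gain one derivative. -/
lemma BD.step {k : ℕ} : ∀ {f : ℕ → Ed 2 → ℂ}, (∀ n, Smooth (f n)) → BD k f →
    BD k (fun n x => dd 0 (dd 0 (f n)) x + dd 1 (dd 1 (f n)) x) → BD (k + 1) f := by
  induction k with
  | zero =>
    rintro f hf ⟨A, hA⟩ ⟨B, hB⟩
    exact ⟨⟨A, hA⟩, fun i => ⟨4 * A + B, fun n x => grad_complex (hf n) (hA n) (hB n) i x⟩⟩
  | succ k ih =>
    intro f hf h1 h2
    refine ⟨h1.1, fun i => ih (fun n => (hf n).dd i) (h1.2 i) ?_⟩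
    have : (fun n x => dd 0 (dd 0 (dd i (f n))) x + dd 1 (dd 1 (dd i (f n))) x) =
        fun n => dd i (fun x => dd 0 (dd 0 (f n)) x + dd 1 (dd 1 (f n)) x) := by
      funext n
      rw [dd_add (((hf n).dd 0).dd 0).diff (((hf n).dd 1).dd 1).diff]
      funext x
      rw [dd_comm (hf n) 0 i, dd_comm ((hf n).dd 0) 0 i, dd_comm (hf n) 1 i,
        dd_comm ((hf n).dd 1) 1 i]
    rw [this]
    exact h2.2 i

/-- The gauge factor `exp (i c x₀ / 2)`. -/
def gaugeF (c : ℝ) (x : Ed 2) : ℂ := Complex.exp (I * (c / 2 * x 0 : ℝ))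

lemma norm_gauge (c : ℝ) (x : Ed 2) : ‖gaugeF c x‖ = 1 := by
  rw [gaugeF, mul_comm]; exact norm_exp_ofReal_mul_I _

lemma gauge_smooth (c : ℝ) : Smooth (gaugeF c) := by
  unfold gaugeF
  have h1 : Smooth (fun x : Ed 2 => (c / 2 * x 0 : ℝ)) := by
    unfold Smooth; fun_prop
  have h2 : Smooth (fun x : Ed 2 => ((c / 2 * x 0 : ℝ) : ℂ)) := ofRealCLM.contDiff.comp h1
  exact (contDiff_const.mul h2).cexp

lemma dd_gauge (c : ℝ) : dd 0 (gaugeF c) = (fun x => (I * (c / 2)) * gaugeF c x) ∧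
    dd 1 (gaugeF c) = fun _ => 0 := by
  constructor
  · funext x
    refine dd_of_line (gauge_smooth c).diff ?_
    simp only [gaugeF]
    have : HasDerivAt (fun t : ℝ => I * ((c / 2 * (x + t • (EuclideanSpace.single 0 1 : Ed 2)) 0
        : ℝ) : ℂ)) (I * (c / 2)) 0 := by
      have h1 : HasDerivAt (fun t : ℝ => (c / 2 * (x 0 + t) : ℝ)) (c/2) 0 := by
        simpa using ((hasDerivAt_id (0:ℝ)).const_add (x 0)).const_mul (c/2)
      have := (h1.ofReal_comp).const_mul I
      simpa using this
    have h2 := this.cexp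
    refine h2.congr_deriv ?_
    simp; ring
  · funext x
    refine dd_of_line (gauge_smooth c).diff ?_
    have : (fun t : ℝ => gaugeF c (x + t • (EuclideanSpace.single 1 1 : Ed 2))) =
        fun _ => gaugeF c x := by
      funext t; simp [gaugeF]
    rw [this]
    exact hasDerivAt_const _ _

lemma conj_gauge_mul (c : ℝ) (x : Ed 2) : (starRingEnd ℂ) (gaugeF c x) * gaugeF c x = 1 := by
  rw [mul_comm, Complex.mul_conj, Complex.normSq_eq_norm_sq, norm_gauge]; simp

/-- The gauged function `U = exp (i c x₀ / 2) ψ` solves `ΔU = -(1 + c²/4 - |U|²) U`. -/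
lemma lap_gauged {c : ℝ} {ψ : Ed 2 → ℂ} (hs : Smooth ψ) (h : GPeq c ψ) (x : Ed 2) :
    dd 0 (dd 0 (fun x => gaugeF c x * ψ x)) x + dd 1 (dd 1 (fun x => gaugeF c x * ψ x)) x =
      -((1 + c ^ 2 / 4) * (gaugeF c x * ψ x)) + (gaugeF c x * ψ x) *
        ((gaugeF c x * ψ x) * (starRingEnd ℂ) (gaugeF c x * ψ x)) := by
  have hg := gauge_smooth c
  obtain ⟨g0, g1⟩ := dd_gauge c
  have e0 : dd 0 (dd 0 (fun x => gaugeF c x * ψ x)) x = gaugeF c x * (dd 0 (dd 0 ψ) x +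
      I * c * dd 0 ψ x - c ^ 2 / 4 * ψ x) := by
    rw [dd_mul hg.diff hs.diff, g0,
      dd_add ((contDiff_const.mul hg).mul hs).diff (hg.mul (hs.dd 0)).diff,
      dd_mul (contDiff_const.mul hg).diff hs.diff, dd_mul hg.diff (hs.dd 0).diff,
      dd_const_mul _ hg.diff, g0]
    have : I * I = -1 := I_mul_I
    linear_combination (gaugeF c x * ψ x * c ^ 2 / 4) * this
  have e1 : dd 1 (dd 1 (fun x => gaugeF c x * ψ x)) x = gaugeF c x * dd 1 (dd 1 ψ) x := by
    rw [dd_mul hg.diff hs.diff, g1]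
    simp only [zero_mul, zero_add]
    rw [dd_mul hg.diff (hs.dd 1).diff, g1]
    simp
  have hq := (GPeq_iff c ψ).1 h x
  have hn : ψ x * (starRingEnd ℂ) (ψ x) = (‖ψ x‖ : ℂ) ^ 2 := by
    rw [Complex.mul_conj, Complex.normSq_eq_norm_sq]; push_cast; rfl
  have hcg := conj_gauge_mul c x
  rw [e0, e1, map_mul]
  linear_combination (gaugeF c x) * hq - gaugeF c x * ψ x * hn -
    gaugeF c x * ψ x * (ψ x * (starRingEnd ℂ) (ψ x)) * hcg

/-- All partial derivatives of a sequence of solutions are uniformly bounded. -/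
lemma uniform_bounds {cn : ℕ → ℝ} (hcn : ∃ M, ∀ n, |cn n| ≤ M) {ψn : ℕ → Ed 2 → ℂ}
    (hs : ∀ n, Smooth (ψn n)) (h : ∀ n, GPeq (cn n) (ψn n))
    (hb : ∃ M, ∀ n x, ‖ψn n x‖ ≤ M) (k : ℕ) : BD k ψn := by
  set U : ℕ → Ed 2 → ℂ := fun n x => gaugeF (cn n) x * ψn n x with hU
  have hgs : ∀ n, Smooth (gaugeF (cn n)) := fun n => gauge_smooth _
  have hUs : ∀ n, Smooth (U n) := fun n => (hgs n).mul (hs n)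
  obtain ⟨M, hM⟩ := hcn
  have hE : ∀ k, BD k (fun n => gaugeF (cn n)) := by
    intro k
    induction k with
    | zero => exact ⟨1, fun n x => (norm_gauge _ _).le⟩
    | succ k ih =>
      refine ⟨⟨1, fun n x => (norm_gauge _ _).le⟩, fun i => ?_⟩
      fin_cases i
      · show BD k (fun n => dd 0 (gaugeF (cn n)))
        simp only [(dd_gauge _).1]
        refine BD.mul (f := fun n _ => I * (cn n / 2)) (fun n => contDiff_const) hgs
          (BD.const ⟨M / 2, fun n => ?_⟩) ih
        simpa using div_le_div_of_nonneg_right (hM n) (by norm_num : (0:ℝ) ≤ 2)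
      · show BD k (fun n => dd 1 (gaugeF (cn n)))
        simp only [(dd_gauge _).2]
        exact BD.const ⟨0, by simp⟩
  have hUB : ∀ k, BD k U := by
    intro k
    induction k with
    | zero =>
      obtain ⟨N, hN⟩ := hb
      exact ⟨N, fun n x => by simpa [hU, norm_gauge] using hN n x⟩
    | succ k ih =>
      refine BD.step hUs ih ?_
      have : (fun n x => dd 0 (dd 0 (U n)) x + dd 1 (dd 1 (U n)) x) = fun n x =>
          (-(1 + (cn n : ℂ) ^ 2 / 4)) * U n x + U n x * (U n x * (starRingEnd ℂ) (U n x)) := by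
        funext n x
        rw [lap_gauged (hs n) (h n) x]; simp only [hU]; ring
      rw [this]
      have hconj : ∀ n, Smooth (fun x => (starRingEnd ℂ) (U n x)) := fun n => (hUs n).conj
      refine BD.add (fun n => contDiff_const.mul (hUs n))
        (fun n => (hUs n).mul ((hUs n).mul (hconj n)))
        (BD.mul (f := fun n _ => (-(1 + (cn n : ℂ) ^ 2 / 4))) (fun n => contDiff_const) hUs
          (BD.const ⟨1 + M ^ 2 / 4, fun n => ?_⟩) ih)
        (BD.mul hUs (fun n => (hUs n).mul (hconj n)) ih
          (BD.mul hUs hconj ih (BD.conj hUs ih)))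
      rw [norm_neg]
      refine (norm_add_le _ _).trans ?_
      have : |cn n| ^ 2 ≤ M ^ 2 := pow_le_pow_left₀ (abs_nonneg _) (hM n) 2
      simp at this ⊢
      linarith
  have : ψn = fun n x => (starRingEnd ℂ) (gaugeF (cn n) x) * U n x := by
    funext n x
    simp only [hU]
    rw [← mul_assoc, conj_gauge_mul, one_mul]
  rw [this]
  exact BD.mul (fun n => (hgs n).conj) hUs (BD.conj hgs (hE k)) (hUB k)

/-! ### Compactness for sequences with bounded derivatives -/

section lift
variable {F : Type*} [NormedAddCommGroup F] [NormedSpace ℝ F]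

/-- The map sending `z` to the linear map `v ↦ v i • z`. -/
def coordL (i : Fin 2) : F →L[ℝ] (Ed 2 →L[ℝ] F) :=
  ContinuousLinearMap.smulRightL ℝ (Ed 2) F (EuclideanSpace.proj i)

lemma coordL_apply (i : Fin 2) (z : F) (v : Ed 2) : coordL i z v = v i • z := rfl

lemma fderiv_eq_coord (f : Ed 2 → F) (x : Ed 2) :
    fderiv ℝ f x = coordL 0 (dd 0 f x) + coordL 1 (dd 1 f x) := by
  ext v
  rw [add_apply, coordL_apply, coordL_apply]
  conv_lhs => rw [add_single v, map_add, map_smul, map_smul]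
  rfl

lemma norm_coordL_apply_le (i : Fin 2) (z : F) : ‖coordL i z‖ ≤ ‖z‖ := by
  refine ContinuousLinearMap.opNorm_le_bound _ (norm_nonneg _) fun v => ?_
  rw [coordL_apply, norm_smul, mul_comm]
  exact mul_le_mul_of_nonneg_left (PiLp.norm_apply_le v i) (norm_nonneg _)

lemma norm_fderiv_le (f : Ed 2 → F) (x : Ed 2) :
    ‖fderiv ℝ f x‖ ≤ ‖dd 0 f x‖ + ‖dd 1 f x‖ := by
  rw [fderiv_eq_coord]
  exact (norm_add_le _ _).trans (add_le_add (norm_coordL_apply_le _ _) (norm_coordL_apply_le _ _))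

end lift

/-- Iterated partial derivatives. -/
def Dl : List (Fin 2) → (Ed 2 → ℂ) → Ed 2 → ℂ
  | [], f => f
  | i :: l, f => Dl l (dd i f)

lemma Dl_smooth {l : List (Fin 2)} : ∀ {f : Ed 2 → ℂ}, Smooth f → Smooth (Dl l f) := by
  induction l with
  | nil => exact fun h => h
  | cons i l ih => exact fun h => ih (h.dd i)

lemma dd_Dl {i : Fin 2} {l : List (Fin 2)} : ∀ {f : Ed 2 → ℂ}, Smooth f →
    dd i (Dl l f) = Dl (i :: l) f := by
  induction l with
  | nil => exact fun h => rfl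
  | cons j l ih =>
    intro f h
    show dd i (Dl l (dd j f)) = Dl l (dd j (dd i f))
    rw [ih (h.dd j), dd_comm h j i]
    rfl

lemma BD.Dl_bound {l : List (Fin 2)} : ∀ {f : ℕ → Ed 2 → ℂ}, (∀ k, BD k f) →
    ∃ M, ∀ n x, ‖Dl l (f n) x‖ ≤ M := by
  induction l with
  | nil => exact fun h => h 0
  | cons i l ih => exact fun h => ih (f := fun n => dd i (_)) fun k => (h (k + 1)).2 i

lemma BD.comp {k : ℕ} (φ : ℕ → ℕ) : ∀ {f : ℕ → Ed 2 → ℂ}, BD k f → BD k (fun n => f (φ n)) := by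
  induction k with
  | zero => exact fun ⟨M, h⟩ => ⟨M, fun n x => h _ x⟩
  | succ k ih => exact fun ⟨⟨M, h⟩, h'⟩ => ⟨⟨M, fun n x => h _ x⟩, fun i => ih (h' i)⟩

lemma dd_translate {F : Type*} [NormedAddCommGroup F] [NormedSpace ℝ F] (f : Ed 2 → F)
    (i : Fin 2) (ξ : Ed 2) : dd i (fun x => f (x - ξ)) = fun x => dd i f (x - ξ) := by
  funext x
  unfold dd
  rw [fderiv_comp_sub]

lemma BD.translate {k : ℕ} (ξ : ℕ → Ed 2) : ∀ {f : ℕ → Ed 2 → ℂ}, BD k f →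
    BD k (fun n x => f n (x - ξ n)) := by
  induction k with
  | zero => exact fun ⟨M, h⟩ => ⟨M, fun n x => h _ _⟩
  | succ k ih =>
    rintro f ⟨⟨M, h⟩, h'⟩
    refine ⟨⟨M, fun n x => h _ _⟩, fun i => ?_⟩
    simp only [dd_translate]
    exact ih (h' i)

/-- Equi-Lipschitz functions that converge at the points of a dense sequence converge locally
uniformly. -/
lemma unif_of_dense {f : ℕ → Ed 2 → ℂ} {L : ℝ} (hL : ∀ n x y, ‖f n x - f n y‖ ≤ L * ‖x - y‖)
    (hd : ∀ j, ∃ z, Tendsto (fun n => f n (TopologicalSpace.denseSeq (Ed 2) j)) atTop (𝓝 z)) :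
    ∃ g : Ed 2 → ℂ, TendstoLocallyUniformly f g atTop := by
  have hpt : ∀ x, ∃ z, Tendsto (fun n => f n x) atTop (𝓝 z) := by
    intro x
    refine cauchySeq_tendsto_of_complete ?_
    rw [Metric.cauchySeq_iff']
    intro ε hε
    obtain ⟨y, ⟨j, rfl⟩, hy⟩ := Metric.mem_closure_iff.1
      ((TopologicalSpace.denseRange_denseSeq (Ed 2)) x) (ε / (4 * (|L| + 1))) (by positivity)
    obtain ⟨z, hz⟩ := hd j
    obtain ⟨N, hN⟩ := Metric.cauchySeq_iff'.1 hz.cauchySeq (ε / 2) (by positivity)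
    refine ⟨N, fun n hn => ?_⟩
    set p := TopologicalSpace.denseSeq (Ed 2) j
    have hxp : ∀ n, ‖f n x - f n p‖ ≤ ε / 4 := by
      intro n
      refine (hL n x p).trans ?_
      rw [← dist_eq_norm]
      have h1 : L * dist x p ≤ (|L| + 1) * dist x p :=
        mul_le_mul_of_nonneg_right (by linarith [le_abs_self L]) dist_nonneg
      have h2 : (|L| + 1) * dist x p ≤ (|L| + 1) * (ε / (4 * (|L| + 1))) :=
        mul_le_mul_of_nonneg_left hy.le (by positivity)
      have h3 : (|L| + 1) * (ε / (4 * (|L| + 1))) = ε / 4 := by field_simp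
      linarith
    have h1 := hxp n
    have h2 := hxp N
    have h3 := hN n hn
    rw [← dist_eq_norm] at h1 h2
    have := dist_triangle4 (f n x) (f n p) (f N p) (f N x)
    rw [dist_comm (f N p)] at this
    linarith
  choose g hg using hpt
  refine ⟨g, ?_⟩
  have hLg : ∀ x y, ‖g x - g y‖ ≤ L * ‖x - y‖ := fun x y =>
    le_of_tendsto ((hg x).sub (hg y)).norm (Eventually.of_forall fun n => hL n x y)
  rw [Metric.tendstoLocallyUniformly_iff]
  intro ε hε x
  refine ⟨ball x (ε / (4 * (|L| + 1))), ball_mem_nhds _ (by positivity), ?_⟩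
  filter_upwards [Metric.tendsto_nhds.1 (hg x) (ε / 2) (by positivity)] with n hn y hy
  have hb : L * ‖y - x‖ ≤ ε / 4 := by
    rw [← dist_eq_norm]
    have h1 : L * dist y x ≤ (|L| + 1) * dist y x :=
      mul_le_mul_of_nonneg_right (by linarith [le_abs_self L]) dist_nonneg
    have h2 : (|L| + 1) * dist y x ≤ (|L| + 1) * (ε / (4 * (|L| + 1))) :=
      mul_le_mul_of_nonneg_left (mem_ball.1 hy).le (by positivity)
    have h3 : (|L| + 1) * (ε / (4 * (|L| + 1))) = ε / 4 := by field_simp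
    linarith
  have h1 := (hLg y x).trans hb
  have h2 := (hL n y x).trans hb
  rw [← dist_eq_norm] at h1 h2
  have := dist_triangle4 (g y) (g x) (f n x) (f n y)
  rw [dist_comm (g x), dist_comm (f n x) (f n y)] at this
  linarith

/-- Arzelà–Ascoli for all derivatives at once, by a diagonal extraction. -/
lemma compactness {f : ℕ → Ed 2 → ℂ} (hs : ∀ n, Smooth (f n)) (hb : ∀ k, BD k f) :
    ∃ φ : ℕ → ℕ, StrictMono φ ∧ ∃ g : Ed 2 → ℂ, Smooth g ∧
      ∀ l, TendstoLocallyUniformly (fun n => Dl l (f (φ n))) (Dl l g) atTop := by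
  choose M hM using fun l => BD.Dl_bound (l := l) hb
  set p := TopologicalSpace.denseSeq (Ed 2)
  have hc : IsCompact (Set.pi Set.univ
      (fun a : List (Fin 2) × ℕ => closedBall (0:ℂ) (M a.1))) :=
    isCompact_univ_pi fun a => isCompact_closedBall _ _
  obtain ⟨z, -, φ, hφ, hz⟩ := hc.tendsto_subseq (x := fun n a => Dl a.1 (f n) (p a.2))
    (fun n a _ => by simpa using hM _ _ _)
  have hLip : ∀ l n x y, ‖Dl l (f (φ n)) x - Dl l (f (φ n)) y‖ ≤
      (M (0 :: l) + M (1 :: l)) * ‖x - y‖ := by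
    intro l n x y
    refine Convex.norm_image_sub_le_of_norm_fderiv_le (𝕜 := ℝ) (s := Set.univ)
      (fun w _ => (Dl_smooth (hs _)).diff w) (fun w _ => ?_) convex_univ trivial trivial
    refine (norm_fderiv_le _ w).trans (add_le_add ?_ ?_)
    · rw [dd_Dl (hs _)]; exact hM _ _ _
    · rw [dd_Dl (hs _)]; exact hM _ _ _
  have hg : ∀ l, ∃ g : Ed 2 → ℂ, TendstoLocallyUniformly (fun n => Dl l (f (φ n))) g atTop := by
    intro l
    refine unif_of_dense (hLip l) fun j => ⟨z (l, j), ?_⟩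
    exact (tendsto_pi_nhds.1 hz) (l, j)
  choose g hg using hg
  have hpt : ∀ l x, Tendsto (fun n => Dl l (f (φ n)) x) atTop (𝓝 (g l x)) := fun l x => by
    have := (tendstoLocallyUniformlyOn_univ.2 (hg l)).tendsto_at (Set.mem_univ x)
    exact this
  have hder : ∀ l x, HasFDerivAt (g l) (coordL 0 (g (0 :: l) x) + coordL 1 (g (1 :: l) x)) x := by
    intro l x
    refine hasFDerivAt_of_tendstoLocallyUniformlyOn (𝕜 := ℝ) (l := atTop) (s := Set.univ)
      (f := fun n => Dl l (f (φ n))) (g' := fun x => coordL 0 (g (0 :: l) x) +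
        coordL 1 (g (1 :: l) x))
      (f' := fun n x => coordL 0 (Dl (0 :: l) (f (φ n)) x) + coordL 1 (Dl (1 :: l) (f (φ n)) x))
      isOpen_univ ?_ (fun n x _ => ?_) (fun x _ => hpt l x) (Set.mem_univ x)
    · rw [tendstoLocallyUniformlyOn_univ]
      have h0 := hg (0 :: l)
      have h1 := hg (1 :: l)
      rw [Metric.tendstoLocallyUniformly_iff] at h0 h1 ⊢
      intro ε hε x
      obtain ⟨s, hs, h0⟩ := h0 (ε / 2) (by positivity) x
      obtain ⟨t, ht, h1⟩ := h1 (ε / 2) (by positivity) x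
      refine ⟨s ∩ t, inter_mem hs ht, ?_⟩
      filter_upwards [h0, h1] with n h0 h1 y hy
      have a0 := h0 y hy.1
      have a1 := h1 y hy.2
      refine (dist_add_add_le _ _ _ _).trans_lt ?_
      rw [dist_eq_norm] at a0 a1
      rw [dist_eq_norm, dist_eq_norm, ← map_sub, ← map_sub]
      have b0 := norm_coordL_apply_le 0 (g (0 :: l) y - Dl (0 :: l) (f (φ n)) y)
      have b1 := norm_coordL_apply_le 1 (g (1 :: l) y - Dl (1 :: l) (f (φ n)) y)
      linarith
    · have := ((Dl_smooth (l := l) (hs (φ n))).diff x).hasFDerivAt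
      rw [fderiv_eq_coord, dd_Dl (hs _), dd_Dl (hs _)] at this
      exact this
  have hdd : ∀ l i, dd i (g l) = g (i :: l) := by
    intro l i
    funext x
    unfold dd
    rw [(hder l x).fderiv, add_apply, coordL_apply, coordL_apply]
    fin_cases i <;> simp
  have hsm : ∀ k : ℕ, ∀ l, ContDiff ℝ k (g l) := by
    intro k
    induction k with
    | zero =>
      intro l
      exact contDiff_zero.2 (continuous_iff_continuousAt.2 fun x => (hder l x).continuousAt)
    | succ k ih =>
      intro l
      push_cast
      rw [contDiff_succ_iff_fderiv]
      refine ⟨fun x => (hder l x).differentiableAt, by simp, ?_⟩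
      have : fderiv ℝ (g l) = fun x => coordL 0 (g (0 :: l) x) + coordL 1 (g (1 :: l) x) :=
        funext fun x => (hder l x).fderiv
      rw [this]
      exact ((coordL 0).contDiff.comp (ih _)).add ((coordL 1).contDiff.comp (ih _))
  have hsm' : ∀ l, Smooth (g l) := fun l => contDiff_infty.2 fun k => hsm k l
  have hDl : ∀ l, g l = Dl l (g []) := by
    intro l
    induction l with
    | nil => rfl
    | cons i l ih => rw [← hdd, ih, dd_Dl (hsm' [])]
  refine ⟨φ, hφ, g [], hsm' [], fun l => ?_⟩
  rw [← hDl]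
  exact hg l

lemma Dl_sub {l : List (Fin 2)} : ∀ {f g : Ed 2 → ℂ}, Smooth f → Smooth g →
    Dl l (fun x => f x - g x) = fun x => Dl l f x - Dl l g x := by
  induction l with
  | nil => exact fun _ _ => rfl
  | cons i l ih =>
    intro f g hf hg
    show Dl l (dd i _) = _
    rw [dd_sub hf.diff hg.diff, ih (hf.dd i) (hg.dd i)]
    rfl

lemma norm_iteratedFDeriv_clm_le {G : Type*} [NormedAddCommGroup G] [NormedSpace ℝ G]
    {f : Ed 2 → ℂ} (hf : Smooth f) (k : ℕ) (x : Ed 2) (L : ℂ →L[ℝ] G) (hL : ‖L‖ ≤ 1) :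
    ‖iteratedFDeriv ℝ k (fun x => L (f x)) x‖ ≤ ‖iteratedFDeriv ℝ k f x‖ := by
  have hk : ContDiffAt ℝ (k : WithTop ℕ∞) f x := (hf.of_le (by exact_mod_cast le_top)).contDiffAt
  exact (L.norm_iteratedFDeriv_comp_left hk le_rfl).trans
    (mul_le_of_le_one_left (norm_nonneg _) hL)

lemma norm_iteratedFDeriv_succ_le {f : Ed 2 → ℂ} (hf : Smooth f) (k : ℕ) (x : Ed 2) :
    ‖iteratedFDeriv ℝ (k + 1) f x‖ ≤
      ‖iteratedFDeriv ℝ k (dd 0 f) x‖ + ‖iteratedFDeriv ℝ k (dd 1 f) x‖ := by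
  have h : ∀ i, Smooth (fun x => coordL i (dd i f x)) := fun i =>
    (coordL (F := ℂ) i).contDiff.comp (hf.dd i)
  have hk : ∀ i, ContDiff ℝ k (fun x => coordL i (dd i f x)) := fun i =>
    (h i).of_le (by exact_mod_cast le_top)
  have hn : ∀ i : Fin 2, ‖(coordL i : ℂ →L[ℝ] _)‖ ≤ 1 := fun i =>
    ContinuousLinearMap.opNorm_le_bound _ zero_le_one fun z => by
      simpa using norm_coordL_apply_le i z
  have hi : ∀ i, ‖iteratedFDeriv ℝ k (fun x => coordL i (dd i f x)) x‖ ≤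
      ‖iteratedFDeriv ℝ k (dd i f) x‖ := by
    intro i
    exact norm_iteratedFDeriv_clm_le (hf.dd i) k x _ (hn i)
  rw [← norm_iteratedFDeriv_fderiv]
  have : fderiv ℝ f = fun x => coordL 0 (dd 0 f x) + coordL 1 (dd 1 f x) :=
    funext fun x => fderiv_eq_coord f x
  rw [this, fun_iteratedFDeriv_add_apply (hk 0).contDiffAt (hk 1).contDiffAt]
  exact (norm_add_le _ _).trans (add_le_add (hi 0) (hi 1))

lemma small_iteratedFDeriv (K : Set (Ed 2)) (k : ℕ) : ∀ {h : ℕ → Ed 2 → ℂ},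
    (∀ n, Smooth (h n)) →
    (∀ l, ∀ ε > 0, ∀ᶠ n in atTop, ∀ x ∈ K, ‖Dl l (h n) x‖ < ε) →
    ∀ ε > 0, ∀ᶠ n in atTop, ∀ x ∈ K, ‖iteratedFDeriv ℝ k (h n) x‖ < ε := by
  induction k with
  | zero =>
    intro h _ hl ε hε
    filter_upwards [hl [] ε hε] with n hn x hx
    rw [norm_iteratedFDeriv_zero]
    exact hn x hx
  | succ k ih =>
    intro h hs hl ε hε
    have h0 := ih (h := fun n => dd 0 (h n)) (fun n => (hs n).dd 0) (fun l => hl (0 :: l))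
      (ε / 2) (by positivity)
    have h1 := ih (h := fun n => dd 1 (h n)) (fun n => (hs n).dd 1) (fun l => hl (1 :: l))
      (ε / 2) (by positivity)
    filter_upwards [h0, h1] with n h0 h1 x hx
    have := norm_iteratedFDeriv_succ_le (hs n) k x
    linarith [h0 x hx, h1 x hx]

lemma locCk_of_Dl {f : ℕ → Ed 2 → ℂ} {g : Ed 2 → ℂ} (hs : ∀ n, Smooth (f n)) (hg : Smooth g)
    (h : ∀ l, TendstoLocallyUniformly (fun n => Dl l (f n)) (Dl l g) atTop) : LocCk f g := by
  intro k K hK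
  rw [Metric.tendstoUniformlyOn_iff]
  intro ε hε
  have := small_iteratedFDeriv K k (h := fun n x => f n x - g x) (fun n => (hs n).sub hg)
    (fun l ε hε => by
      have := tendstoLocallyUniformly_iff_forall_isCompact.1 (h l) K hK
      rw [Metric.tendstoUniformlyOn_iff] at this
      filter_upwards [this ε hε] with n hn x hx
      rw [Dl_sub (hs n) hg, ← dist_eq_norm, dist_comm]
      exact hn x hx) ε hε
  filter_upwards [this] with n hn x hx
  have h1 := hn x hx
  have hk : ∀ {f : Ed 2 → ℂ}, Smooth f → ContDiffAt ℝ k f x := fun h =>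
    (h.of_le (by exact_mod_cast le_top)).contDiffAt
  have e : iteratedFDeriv ℝ k (fun x => f n x - g x) x =
      iteratedFDeriv ℝ k (f n) x - iteratedFDeriv ℝ k g x :=
    iteratedFDeriv_sub_apply (hk (hs n)) (hk hg)
  rwa [e, ← dist_eq_norm, dist_comm] at h1

/-- Pointwise convergence of the iterated partial derivatives passes the equation to the limit. -/
lemma GPeq_limit {f : ℕ → Ed 2 → ℂ} {g : Ed 2 → ℂ} {cn : ℕ → ℝ} {c : ℝ}
    (hc : Tendsto cn atTop (𝓝 c)) (h : ∀ n, GPeq (cn n) (f n))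
    (hl : ∀ l x, Tendsto (fun n => Dl l (f n) x) atTop (𝓝 (Dl l g x))) : GPeq c g := by
  rw [GPeq_iff]
  intro x
  have h1 : Tendsto (fun n => I * (cn n) * dd 0 (f n) x +
      (dd 0 (dd 0 (f n)) x + dd 1 (dd 1 (f n)) x) + (1 - (‖f n x‖ : ℂ) ^ 2) * f n x) atTop
      (𝓝 (I * c * dd 0 g x +
      (dd 0 (dd 0 g) x + dd 1 (dd 1 g) x) + (1 - (‖g x‖ : ℂ) ^ 2) * g x)) := by
    have hc' : Tendsto (fun n => (cn n : ℂ)) atTop (𝓝 (c : ℂ)) :=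
      (continuous_ofReal.tendsto c).comp hc
    have hn : Tendsto (fun n => (‖f n x‖ : ℂ)) atTop (𝓝 (‖g x‖ : ℂ)) :=
      (continuous_ofReal.tendsto _).comp (hl [] x).norm
    exact (((tendsto_const_nhds.mul hc').mul (hl [0] x)).add
      ((hl [0, 0] x).add (hl [1, 1] x))).add ((tendsto_const_nhds.sub (hn.pow 2)).mul (hl [] x))
  refine tendsto_nhds_unique h1 ?_
  simp only [fun n => (GPeq_iff _ _).1 (h n) x]
  exact tendsto_const_nhds

lemma GPeq_translate {c : ℝ} {ψ : Ed 2 → ℂ} (h : GPeq c ψ) (ξ : Ed 2) :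
    GPeq c (fun x => ψ (x - ξ)) := by
  rw [GPeq_iff] at h ⊢
  intro x
  simp only [dd_translate]
  exact h (x - ξ)

lemma smooth_translate {F : Type*} [NormedAddCommGroup F] [NormedSpace ℝ F] {ψ : Ed 2 → F}
    (h : Smooth ψ) (ξ : Ed 2) : Smooth (fun x => ψ (x - ξ)) :=
  h.comp (contDiff_id.sub contDiff_const)

/-! ### Fluxes of divergence-free fields -/

/-- Radial cutoff, equal to `1` on the unit ball and supported in the ball of radius `2`. -/
def bump2 : ContDiffBump (0 : Ed 2) := ⟨1, 2, one_pos, one_lt_two⟩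

/-- The cutoff at scale `L`. -/
def cut (L : ℝ) (x : Ed 2) : ℝ := bump2 (L⁻¹ • x)

lemma cut_smooth (L : ℝ) : Smooth (cut L) := by
  have : ContDiff ℝ (⊤ : ℕ∞) (fun x : Ed 2 => bump2 x) := bump2.contDiff
  exact this.comp (contDiff_const_smul _)

lemma cut_le (L : ℝ) (x : Ed 2) : ‖cut L x‖ ≤ 1 := by
  unfold cut
  rw [Real.norm_of_nonneg bump2.nonneg]; exact bump2.le_one

lemma cut_one {L : ℝ} (hL : 0 < L) {x : Ed 2} (hx : ‖x‖ ≤ L) : cut L x = 1 := by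
  apply bump2.one_of_mem_closedBall
  have : ‖L⁻¹ • x‖ ≤ 1 := by
    rw [norm_smul, norm_inv, Real.norm_of_nonneg hL.le, inv_mul_le_iff₀ hL, mul_one]; exact hx
  simpa [bump2] using this

lemma cut_zero {L : ℝ} (hL : 0 < L) {x : Ed 2} (hx : 2 * L ≤ ‖x‖) : cut L x = 0 := by
  apply bump2.zero_of_le_dist
  have : 2 ≤ ‖L⁻¹ • x‖ := by
    rw [norm_smul, norm_inv, Real.norm_of_nonneg hL.le, le_inv_mul_iff₀ hL, mul_comm]; exact hx
  simpa [bump2] using this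

lemma cut_compact {L : ℝ} (hL : 0 < L) : HasCompactSupport (cut L) := by
  refine HasCompactSupport.intro (isCompact_closedBall (0 : Ed 2) (2 * L)) fun x hx => ?_
  apply cut_zero hL
  simp at hx
  exact hx.le

lemma dd_cut : ∃ K > 0, ∀ L > 0, ∀ i x, |dd i (cut L) x| ≤ K / L ∧
    (‖x‖ < L ∨ 2 * L < ‖x‖ → dd i (cut L) x = 0) := by
  have hc : ContDiff ℝ (⊤ : ℕ∞) (fun x : Ed 2 => bump2 x) := bump2.contDiff
  have hcont : Continuous (fderiv ℝ (fun x : Ed 2 => bump2 x)) :=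
    hc.continuous_fderiv (by simp)
  obtain ⟨K, hK⟩ := hcont.bounded_above_of_compact_support
    (bump2.hasCompactSupport.fderiv ℝ)
  refine ⟨|K| + 1, by positivity, fun L hL i x => ⟨?_, ?_⟩⟩
  · have h2 : dd i (cut L) x = fderiv ℝ (fun x : Ed 2 => bump2 x) (L⁻¹ • x)
        (L⁻¹ • EuclideanSpace.single i 1) := by
      refine dd_of_line (cut_smooth L).diff ?_
      have h1 : HasDerivAt (fun t : ℝ => L⁻¹ • (x + t • (EuclideanSpace.single i 1 : Ed 2)))
          (L⁻¹ • EuclideanSpace.single i 1) 0 := by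
        exact ((((hasDerivAt_id (0:ℝ)).smul_const
          (EuclideanSpace.single i 1 : Ed 2)).const_add x).const_smul L⁻¹).congr_deriv (by simp)
      have h3 := (hc.differentiable (by simp) (L⁻¹ • (x + (0:ℝ) •
        (EuclideanSpace.single i 1 : Ed 2)))).hasFDerivAt
      have := h3.comp_hasDerivAt (0:ℝ) h1
      exact this.congr_deriv (by simp)
    rw [h2, map_smul, smul_eq_mul, abs_mul, abs_inv, abs_of_pos hL, inv_mul_eq_div]
    apply div_le_div_of_nonneg_right _ hL.le
    have := (fderiv ℝ (fun x : Ed 2 => bump2 x) (L⁻¹ • x)).le_opNorm (EuclideanSpace.single i 1)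
    simp at this
    linarith [hK (L⁻¹ • x), le_abs_self K]
  · rintro (h | h)
    · have : cut L =ᶠ[𝓝 x] fun _ => 1 := by
        filter_upwards [continuous_norm.continuousAt.eventually_lt_const h] with y hy
        exact cut_one hL hy.le
      unfold dd
      rw [this.fderiv_eq]; simp
    · have : cut L =ᶠ[𝓝 x] fun _ => 0 := by
        filter_upwards [continuous_norm.continuousAt.eventually_const_lt h] with y hy
        exact cut_zero hL hy.le
      unfold dd
      rw [this.fderiv_eq]; simp

lemma int_parts {f g : Ed 2 → ℝ} (hf : Smooth f) (hg : Smooth g) (hfc : HasCompactSupport f)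
    (i : Fin 2) : ∫ x, f x * dd i g x = - ∫ x, dd i f x * g x := by
  have hfc' : HasCompactSupport (dd i f) := by
    have := hfc.fderiv (𝕜 := ℝ)
    exact this.comp_left (g := fun L : Ed 2 →L[ℝ] ℝ => L (EuclideanSpace.single i 1)) (by simp)
  exact integral_mul_fderiv_eq_neg_fderiv_mul_of_integrable
    (((hf.dd i).continuous.mul hg.continuous).integrable_of_hasCompactSupport hfc'.mul_right)
    ((hf.continuous.mul (hg.dd i).continuous).integrable_of_hasCompactSupport hfc.mul_right)
    ((hf.continuous.mul hg.continuous).integrable_of_hasCompactSupport hfc.mul_right)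
    (fun x _ => hf.diff x) (fun x _ => hg.diff x)

/-- Divergence theorem on the whole plane: there is no boundary term at infinity for a field
dominated by `g + |h| |k|`, with `g` integrable, `k` square integrable and `h → 0` at infinity. -/
lemma div_thm {X : Fin 2 → Ed 2 → ℝ} (hX : ∀ i, Smooth (X i)) {g h k : Ed 2 → ℝ}
    (hg : Integrable g) (hg0 : ∀ x, 0 ≤ g x) (hk : Integrable (fun x => k x ^ 2))
    (hh : Tendsto h (cocompact (Ed 2)) (𝓝 0)) (hb : ∀ i x, |X i x| ≤ g x + |h x| * |k x|)
    (hdiv : Integrable (fun x => dd 0 (X 0) x + dd 1 (X 1) x)) :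
    ∫ x, (dd 0 (X 0) x + dd 1 (X 1) x) = 0 := by
  obtain ⟨K, hK, hcut⟩ := dd_cut
  set W := fun x => dd 0 (X 0) x + dd 1 (X 1) x with hW
  have hWc : Continuous W := ((hX 0).dd 0).continuous.add ((hX 1).dd 1).continuous
  -- `∫ χ_L div X = - ∫ ∇χ_L · X`
  have e1 : ∀ L > 0, ∫ x, cut L x * W x =
      - ∫ x, (dd 0 (cut L) x * X 0 x + dd 1 (cut L) x * X 1 x) := by
    intro L hL
    have hi : ∀ i, Integrable (fun x => cut L x * dd i (X i) x) := fun i =>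
      ((cut_smooth L).continuous.mul ((hX i).dd i).continuous).integrable_of_hasCompactSupport
        (cut_compact hL).mul_right
    have hfc' : ∀ i, HasCompactSupport (dd i (cut L)) := fun i => by
      have := (cut_compact hL).fderiv (𝕜 := ℝ)
      exact this.comp_left (g := fun L : Ed 2 →L[ℝ] ℝ => L (EuclideanSpace.single i 1)) (by simp)
    have hj : ∀ i, Integrable (fun x => dd i (cut L) x * X i x) := fun i =>
      (((cut_smooth L).dd i).continuous.mul (hX i).continuous).integrable_of_hasCompactSupport
        (hfc' i).mul_right
    simp only [hW, mul_add]
    rw [integral_add (hi 0) (hi 1), integral_add (hj 0) (hj 1),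
      int_parts (cut_smooth L) (hX 0) (cut_compact hL), int_parts (cut_smooth L) (hX 1)
        (cut_compact hL)]
    ring
  have l1 : Tendsto (fun n : ℕ => ∫ x, cut (n + 1) x * W x) atTop (𝓝 (∫ x, W x)) := by
    refine tendsto_integral_of_dominated_convergence (fun x => ‖W x‖)
      (fun n => ((cut_smooth _).continuous.mul hWc).aestronglyMeasurable) hdiv.norm
      (fun n => ae_of_all _ fun x => ?_) (ae_of_all _ fun x => ?_)
    · rw [norm_mul]
      exact mul_le_of_le_one_left (norm_nonneg _) (cut_le _ _)
    · refine tendsto_const_nhds.congr' ?_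
      obtain ⟨N, hN⟩ := exists_nat_ge ‖x‖
      filter_upwards [eventually_ge_atTop N] with n hn
      have : (N : ℝ) ≤ n := by exact_mod_cast hn
      rw [cut_one (by positivity) (by linarith), one_mul]
  set V := (volume (ball (0 : Ed 2) 1)).toReal
  set A := ∫ x, g x
  set A2 := ∫ x, k x ^ 2
  have hA2 : 0 ≤ A2 := integral_nonneg fun x => sq_nonneg _
  have hV : 0 ≤ V := ENNReal.toReal_nonneg
  have bound : ∀ ε > 0, ∀ᶠ n : ℕ in atTop, |∫ x, cut (n + 1) x * W x| ≤
      2 * K * A / (n + 1) + K * ε * (9 * V + A2) := by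
    intro ε hε
    have hhε := hh (ball_mem_nhds 0 hε)
    obtain ⟨t, ht, hts⟩ := mem_cocompact.1 hhε
    obtain ⟨R, hR⟩ := ht.isBounded.subset_ball (0 : Ed 2)
    obtain ⟨N, hN⟩ := exists_nat_ge R
    filter_upwards [eventually_ge_atTop N] with n hn
    have hnN : (N : ℝ) ≤ n := by exact_mod_cast hn
    set L : ℝ := n + 1 with hL
    have hL0 : 0 < L := by positivity
    rw [e1 L hL0, abs_neg]
    set D : Ed 2 → ℝ := fun x => 2 * K / L * g x + K * ε *
      ((ball (0 : Ed 2) (3 * L)).indicator (fun _ => (L ^ 2)⁻¹) x + k x ^ 2)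
    have hind : Integrable ((ball (0 : Ed 2) (3 * L)).indicator (fun _ => (L ^ 2)⁻¹)) :=
      (integrable_indicator_iff measurableSet_ball).2
        (integrableOn_const measure_ball_lt_top.ne)
    have hD : Integrable D := (hg.const_mul _).add ((hind.add hk).const_mul _)
    have hDi : ∫ x, D x = 2 * K / L * A + K * ε * (9 * V + A2) := by
      simp only [D]
      have i1 : Integrable fun x => 2 * K / L * g x := hg.const_mul _
      have i2 : Integrable fun x => K * ε *
        ((ball (0 : Ed 2) (3 * L)).indicator (fun _ => (L ^ 2)⁻¹) x + k x ^ 2) :=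
        (hind.add hk).const_mul _
      rw [integral_add i1 i2, integral_const_mul, integral_const_mul, integral_add hind hk,
        integral_indicator measurableSet_ball, setIntegral_const]
      have hv : volume.real (ball (0 : Ed 2) (3 * L)) = 9 * L ^ 2 * V := by
        rw [Measure.real, Measure.addHaar_ball _ _ (by positivity)]
        simp only [finrank_euclideanSpace, Fintype.card_fin, ENNReal.toReal_mul]
        rw [ENNReal.toReal_ofReal (by positivity)]; ring
      rw [hv, smul_eq_mul]
      have : 9 * L ^ 2 * V * (L ^ 2)⁻¹ = 9 * V := by field_simp
      rw [this]
    have hpt : ∀ x, ‖dd 0 (cut L) x * X 0 x + dd 1 (cut L) x * X 1 x‖ ≤ D x := by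
      intro x
      have hgx : 0 ≤ g x + |h x| * |k x| := (abs_nonneg _).trans (hb 0 x)
      by_cases hx : ‖x‖ < L ∨ 2 * L < ‖x‖
      · rw [(hcut L hL0 0 x).2 hx, (hcut L hL0 1 x).2 hx]
        simp only [zero_mul, add_zero, norm_zero, D]
        have h1 : 0 ≤ (ball (0 : Ed 2) (3 * L)).indicator (fun _ => (L ^ 2)⁻¹) x :=
          Set.indicator_nonneg (fun _ _ => by positivity) _
        have h2 := hg0 x
        positivity
      · push Not at hx
        have hm : x ∈ ball (0 : Ed 2) (3 * L) := by simp; linarith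
        have hhx : |h x| < ε := by
          have : x ∈ tᶜ := fun hxt => by
            have := hR hxt
            simp at this
            linarith
          simpa using hts this
        have hi : ∀ i, ‖dd i (cut L) x * X i x‖ ≤ K / L * (g x + |h x| * |k x|) := fun i => by
          rw [norm_mul]
          exact mul_le_mul (hcut L hL0 i x).1 (hb i x) (norm_nonneg _) (by positivity)
        refine (norm_add_le _ _).trans ((add_le_add (hi 0) (hi 1)).trans ?_)
        simp only [D, Set.indicator_of_mem hm]
        have h1 : |h x| * |k x| ≤ ε * |k x| := mul_le_mul_of_nonneg_right hhx.le (abs_nonneg _)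
        have h2 : 2 * (L⁻¹ * |k x|) ≤ (L ^ 2)⁻¹ + k x ^ 2 := by
          have := two_mul_le_add_sq L⁻¹ |k x|
          rw [sq_abs, inv_pow] at this
          linarith
        have h3 : K / L * (|h x| * |k x|) ≤ K / L * (ε * |k x|) :=
          mul_le_mul_of_nonneg_left h1 (by positivity)
        have h4 : K * ε * (2 * (L⁻¹ * |k x|)) ≤ K * ε * ((L ^ 2)⁻¹ + k x ^ 2) :=
          mul_le_mul_of_nonneg_left h2 (by positivity)
        have h5 : K / L * (ε * |k x|) = K * ε * (L⁻¹ * |k x|) := by ring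
        have h6 : 2 * K / L * g x = 2 * (K / L * g x) := by ring
        rw [mul_add]
        linarith
    calc |∫ x, (dd 0 (cut L) x * X 0 x + dd 1 (cut L) x * X 1 x)|
        ≤ ∫ x, D x := norm_integral_le_of_norm_le hD (ae_of_all _ hpt)
      _ = _ := by rw [hDi]; ring
  have hz : ∀ ε > 0, |∫ x, W x| ≤ K * ε * (9 * V + A2) := by
    intro ε hε
    have l2 : Tendsto (fun n : ℕ => 2 * K * A / ((n:ℝ) + 1) + K * ε * (9 * V + A2)) atTop
        (𝓝 (0 + K * ε * (9 * V + A2))) := by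
      refine Tendsto.add ?_ tendsto_const_nhds
      exact tendsto_const_nhds.div_atTop
        (tendsto_atTop_add_const_right _ _ tendsto_natCast_atTop_atTop)
    rw [zero_add] at l2
    exact le_of_tendsto_of_tendsto l1.abs l2 (bound ε hε)
  have : |∫ x, W x| ≤ 0 := by
    refine le_of_forall_pos_le_add fun ε hε => ?_
    have := hz (ε / (K * (9 * V + A2 + 1))) (by positivity)
    refine this.trans ?_
    rw [zero_add]
    have e : K * (ε / (K * (9 * V + A2 + 1))) * (9 * V + A2) =
      ε * ((9 * V + A2) / (9 * V + A2 + 1)) := by field_simp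
    rw [e]
    refine mul_le_of_le_one_right hε.le ?_
    rw [div_le_one (by positivity)]; linarith
  exact abs_nonpos_iff.1 this

lemma hasDerivAt_coord (i j : Fin 2) (x : Ed 2) :
    HasDerivAt (fun t : ℝ => (x + t • (EuclideanSpace.single i 1 : Ed 2)) j)
      (if j = i then 1 else 0) 0 := by
  have h : HasDerivAt (fun t : ℝ => x j + t * (if j = i then 1 else 0)) (if j = i then 1 else 0) 0 := by
    simpa using ((hasDerivAt_id (0:ℝ)).mul_const (if j = i then (1:ℝ) else 0)).const_add (x j)
  refine h.congr_of_eventuallyEq (Eventually.of_forall fun t => ?_)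
  simp

lemma smooth_coord {B : ℝ → ℝ} (hB : ContDiff ℝ (⊤ : ℕ∞) B) (j : Fin 2) :
    Smooth (fun x : Ed 2 => B (x j)) := by
  have : Smooth (fun x : Ed 2 => x j) := by unfold Smooth; fun_prop
  exact hB.comp this

lemma dd_coord {B : ℝ → ℝ} (hB : ContDiff ℝ (⊤ : ℕ∞) B) (i j : Fin 2) :
    dd i (fun x : Ed 2 => B (x j)) = fun x => if j = i then deriv B (x j) else 0 := by
  funext x
  refine dd_of_line (smooth_coord hB j).diff ?_
  have h1 := (hB.differentiable (by simp) ((x + (0:ℝ) • (EuclideanSpace.single i 1 : Ed 2)) j)).hasDerivAt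
  have := h1.comp (0:ℝ) (hasDerivAt_coord i j x)
  refine this.congr_deriv ?_
  simp

/-- Testing a divergence-free field with a bounded function of one coordinate. -/
lemma flux {X : Fin 2 → Ed 2 → ℝ} (hX : ∀ i, Smooth (X i)) {g h k : Ed 2 → ℝ}
    (hg : Integrable g) (hg0 : ∀ x, 0 ≤ g x) (hk : Integrable (fun x => k x ^ 2))
    (hh : Tendsto h (cocompact (Ed 2)) (𝓝 0)) (hb : ∀ i x, |X i x| ≤ g x + |h x| * |k x|)
    (hdiv : ∀ x, dd 0 (X 0) x + dd 1 (X 1) x = 0) (j : Fin 2) (hj : Integrable (X j))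
    {B : ℝ → ℝ} (hB : ContDiff ℝ (⊤ : ℕ∞) B) {M M' : ℝ} (hM : ∀ t, |B t| ≤ M)
    (hM' : ∀ t, |deriv B t| ≤ M') : ∫ x, deriv B (x j) * X j x = 0 := by
  have hs := smooth_coord hB j
  have hM0 : 0 ≤ M := (abs_nonneg _).trans (hM 0)
  have hd : ∀ x, dd 0 (fun x => B (x j) * X 0 x) x + dd 1 (fun x => B (x j) * X 1 x) x =
      deriv B (x j) * X j x := by
    intro x
    rw [dd_mul hs.diff (hX 0).diff, dd_mul hs.diff (hX 1).diff, dd_coord hB, dd_coord hB]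
    have := hdiv x
    fin_cases j
    · simp; linear_combination B (x 0) * this
    · simp; linear_combination B (x 1) * this
  have h_intble : Integrable (fun x => deriv B (x j) * X j x) := by
    refine hj.bdd_mul (c := M') ?_ (ae_of_all _ fun x => hM' _)
    have : Continuous (deriv B) := hB.continuous_deriv (by simp)
    exact (this.comp (by fun_prop)).aestronglyMeasurable
  have := div_thm (X := fun i x => B (x j) * X i x) (fun i => hs.mul (hX i))
    (g := fun x => M * g x) (h := fun x => M * h x) (k := k) (hg.const_mul M)
    (fun x => mul_nonneg hM0 (hg0 x)) hk (by simpa using hh.const_mul M)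
    (fun i x => by
      rw [abs_mul, abs_mul, abs_of_nonneg hM0]
      have := mul_le_mul (hM (x j)) (hb i x) (abs_nonneg _) hM0
      linarith) (by simpa only [hd] using h_intble)
  simpa only [hd] using this

lemma sin_test (L : ℝ) (hL : 1 ≤ L) : ContDiff ℝ (⊤ : ℕ∞) (fun t => L * Real.sin (t / L)) ∧
    (∀ t, |L * Real.sin (t / L)| ≤ L) ∧ deriv (fun t => L * Real.sin (t / L)) =
      fun t => Real.cos (t / L) := by
  have hL0 : 0 < L := by linarith
  refine ⟨by fun_prop, fun t => ?_, ?_⟩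
  · rw [abs_mul, abs_of_pos hL0]
    exact mul_le_of_le_one_right hL0.le (Real.abs_sin_le_one _)
  · funext t
    have h1 : HasDerivAt (fun t : ℝ => t / L) (1 / L) t := (hasDerivAt_id t).div_const L
    have h2 : HasDerivAt (fun t => L * Real.sin (t / L)) _ t := h1.sin.const_mul L
    rw [h2.deriv]
    field_simp

/-- Slowly varying test functions recover the total integral. -/
lemma flux_limit {X : Ed 2 → ℝ} (hX : Integrable X) (j : Fin 2)
    (h : ∀ L : ℝ, 1 ≤ L → ∫ x, Real.cos (x j / L) * X x = 0) : ∫ x, X x = 0 := by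
  have l1 : Tendsto (fun n : ℕ => ∫ x, Real.cos (x j / ((n : ℝ) + 1)) * X x) atTop
      (𝓝 (∫ x, X x)) := by
    refine tendsto_integral_of_dominated_convergence (fun x => ‖X x‖)
      (fun n => ?_) hX.norm (fun n => ae_of_all _ fun x => ?_) (ae_of_all _ fun x => ?_)
    · refine Continuous.aestronglyMeasurable ?_ |>.mul hX.aestronglyMeasurable
      fun_prop
    · rw [norm_mul]
      exact mul_le_of_le_one_left (norm_nonneg _) (Real.abs_cos_le_one _)
    · have h1 : Tendsto (fun n : ℕ => x j / ((n : ℝ) + 1)) atTop (𝓝 0) :=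
        tendsto_const_nhds.div_atTop
          (tendsto_atTop_add_const_right _ _ tendsto_natCast_atTop_atTop)
      have h2 := ((Real.continuous_cos.tendsto 0).comp h1).mul_const (X x)
      simpa using h2
  have : (fun n : ℕ => ∫ x, Real.cos (x j / ((n : ℝ) + 1)) * X x) = fun _ => 0 := by
    funext n
    exact h _ (by linarith [Nat.cast_nonneg (α := ℝ) n])
  rw [this] at l1
  exact (tendsto_nhds_unique l1 tendsto_const_nhds)

/-- The components of an integrable divergence-free field have zero integral. -/
lemma total_flux {X : Fin 2 → Ed 2 → ℝ} (hX : ∀ i, Smooth (X i)) {g h k : Ed 2 → ℝ}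
    (hg : Integrable g) (hg0 : ∀ x, 0 ≤ g x) (hk : Integrable (fun x => k x ^ 2))
    (hh : Tendsto h (cocompact (Ed 2)) (𝓝 0)) (hb : ∀ i x, |X i x| ≤ g x + |h x| * |k x|)
    (hdiv : ∀ x, dd 0 (X 0) x + dd 1 (X 1) x = 0) (j : Fin 2) (hj : Integrable (X j)) :
    ∫ x, X j x = 0 := by
  refine flux_limit hj j fun L hL => ?_
  obtain ⟨h1, h2, h3⟩ := sin_test L hL
  have := flux hX hg hg0 hk hh hb hdiv j hj h1 h2 (M' := 1)
    (by rw [h3]; exact fun t => Real.abs_cos_le_one _)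
  rwa [h3] at this

/-! ### Integral identities for finite energy solutions -/

/-- `|∂ᵢψ|²`. -/
def SS (ψ : Ed 2 → ℂ) (i : Fin 2) (x : Ed 2) : ℝ := ‖dd i ψ x‖ ^ 2

/-- `⟨∂₀ψ, ∂₁ψ⟩`. -/
def GG (ψ : Ed 2 → ℂ) (x : Ed 2) : ℝ :=
  (dd 0 ψ x).re * (dd 1 ψ x).re + (dd 0 ψ x).im * (dd 1 ψ x).im

/-- `η = 1 - |ψ|²`. -/
def etaF (ψ : Ed 2 → ℂ) (x : Ed 2) : ℝ := 1 - ‖ψ x‖ ^ 2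

/-- The current `j = ⟨iψ, ∇ψ⟩`. -/
def jj (ψ : Ed 2 → ℂ) (i : Fin 2) (x : Ed 2) : ℝ :=
  (ψ x).re * (dd i ψ x).im - (ψ x).im * (dd i ψ x).re

/-- The phase gradient `j / |ψ|²`, with value `0` at zeros of `ψ`. -/
def pp (ψ : Ed 2 → ℂ) (i : Fin 2) (x : Ed 2) : ℝ := jj ψ i x / ‖ψ x‖ ^ 2

section ident
variable {ψ : Ed 2 → ℂ}

lemma smooth_SS (hs : Smooth ψ) (i : Fin 2) : Smooth (SS ψ i) := smooth_normSq (hs.dd i)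

lemma smooth_eta (hs : Smooth ψ) : Smooth (etaF ψ) := contDiff_const.sub (smooth_normSq hs)

lemma smooth_GG (hs : Smooth ψ) : Smooth (GG ψ) :=
  ((hs.dd 0).re.mul (hs.dd 1).re).add ((hs.dd 0).im.mul (hs.dd 1).im)

lemma smooth_jj (hs : Smooth ψ) (i : Fin 2) : Smooth (jj ψ i) :=
  (hs.re.mul (hs.dd i).im).sub (hs.im.mul (hs.dd i).re)

lemma dd_SS (hs : Smooth ψ) (i j : Fin 2) : dd i (SS ψ j) = fun x =>
    2 * ((dd j ψ x).re * (dd i (dd j ψ) x).re + (dd j ψ x).im * (dd i (dd j ψ) x).im) :=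
  dd_normSq (hs.dd j) i

lemma dd_eta (hs : Smooth ψ) (i : Fin 2) : dd i (etaF ψ) = fun x =>
    - (2 * ((ψ x).re * (dd i ψ x).re + (ψ x).im * (dd i ψ x).im)) := by
  unfold etaF
  rw [dd_sub (by fun_prop) (smooth_normSq hs).diff, dd_const, dd_normSq hs]
  simp

lemma dd_GG (hs : Smooth ψ) (i : Fin 2) : dd i (GG ψ) = fun x =>
    (dd i (dd 0 ψ) x).re * (dd 1 ψ x).re + (dd 0 ψ x).re * (dd i (dd 1 ψ) x).re +
    ((dd i (dd 0 ψ) x).im * (dd 1 ψ x).im + (dd 0 ψ x).im * (dd i (dd 1 ψ) x).im) := by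
  unfold GG
  have h0 := (hs.dd 0).re; have h1 := (hs.dd 1).re
  have h2 := (hs.dd 0).im; have h3 := (hs.dd 1).im
  rw [dd_add (h0.mul h1).diff (h2.mul h3).diff, dd_mul h0.diff h1.diff, dd_mul h2.diff h3.diff,
    dd_re (hs.dd 0).diff, dd_re (hs.dd 1).diff, dd_im (hs.dd 0).diff, dd_im (hs.dd 1).diff]

lemma dd_jj (hs : Smooth ψ) (i j : Fin 2) : dd i (jj ψ j) = fun x =>
    (dd i ψ x).re * (dd j ψ x).im + (ψ x).re * (dd i (dd j ψ) x).im -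
    ((dd i ψ x).im * (dd j ψ x).re + (ψ x).im * (dd i (dd j ψ) x).re) := by
  unfold jj
  have h0 := hs.re; have h1 := hs.im
  have h2 := (hs.dd j).re; have h3 := (hs.dd j).im
  rw [dd_sub (h0.mul h3).diff (h1.mul h2).diff, dd_mul h0.diff h3.diff, dd_mul h1.diff h2.diff,
    dd_re hs.diff, dd_im hs.diff, dd_re (hs.dd j).diff, dd_im (hs.dd j).diff]

lemma eDen_eq (x : Ed 2) :
    eDen ψ x = 1 / 2 * SS ψ 0 x + 1 / 2 * SS ψ 1 x + 1 / 4 * etaF ψ x ^ 2 := by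
  unfold eDen gradSq
  rw [Fin.sum_univ_two]
  show 1 / 2 * (SS ψ 0 x + SS ψ 1 x) + 1 / 4 * etaF ψ x ^ 2 = _
  ring

lemma SS_nonneg (i : Fin 2) (x : Ed 2) : 0 ≤ SS ψ i x := sq_nonneg _

lemma eDen_nonneg (x : Ed 2) : 0 ≤ eDen ψ x := by
  rw [eDen_eq]; linarith [SS_nonneg (ψ := ψ) 0 x, SS_nonneg (ψ := ψ) 1 x, sq_nonneg (etaF ψ x)]

lemma SS_le (i : Fin 2) (x : Ed 2) : SS ψ i x ≤ 2 * eDen ψ x := by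
  rw [eDen_eq]
  have h0 := SS_nonneg (ψ := ψ) 0 x
  have h1 := SS_nonneg (ψ := ψ) 1 x
  have h2 := sq_nonneg (etaF ψ x)
  fin_cases i
  · show SS ψ 0 x ≤ _; linarith
  · show SS ψ 1 x ≤ _; linarith

lemma int_SS (hs : Smooth ψ) (hE : FiniteEnergy ψ) (i : Fin 2) : Integrable (SS ψ i) :=
  (Integrable.const_mul hE 2).mono' (smooth_SS hs i).continuous.aestronglyMeasurable
    (ae_of_all _ fun x => by rw [Real.norm_of_nonneg (SS_nonneg i x)]; exact SS_le i x)

lemma int_eta_sq (hs : Smooth ψ) (hE : FiniteEnergy ψ) : Integrable (fun x => etaF ψ x ^ 2) :=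
  (Integrable.const_mul hE 4).mono' ((smooth_eta hs).continuous.pow 2).aestronglyMeasurable
    (ae_of_all _ fun x => by
      rw [Real.norm_of_nonneg (sq_nonneg _), eDen_eq]
      linarith [SS_nonneg (ψ := ψ) 0 x, SS_nonneg (ψ := ψ) 1 x])

lemma abs_GG_le (x : Ed 2) : |GG ψ x| ≤ 2 * eDen ψ x := by
  rw [eDen_eq]
  have h2 := sq_nonneg (etaF ψ x)
  have h0 : SS ψ 0 x = (dd 0 ψ x).re ^ 2 + (dd 0 ψ x).im ^ 2 := normSq_eq _
  have h1 : SS ψ 1 x = (dd 1 ψ x).re ^ 2 + (dd 1 ψ x).im ^ 2 := normSq_eq _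
  rw [abs_le, GG]
  constructor <;> nlinarith [sq_nonneg ((dd 0 ψ x).re - (dd 1 ψ x).re),
    sq_nonneg ((dd 0 ψ x).im - (dd 1 ψ x).im), sq_nonneg ((dd 0 ψ x).re + (dd 1 ψ x).re),
    sq_nonneg ((dd 0 ψ x).im + (dd 1 ψ x).im)]

lemma abs_SSe_le (i : Fin 2) (x : Ed 2) : |SS ψ i x - eDen ψ x| ≤ 2 * eDen ψ x := by
  rw [abs_le]
  constructor <;> linarith [SS_nonneg (ψ := ψ) i x, SS_le (ψ := ψ) i x, eDen_nonneg (ψ := ψ) x]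

lemma smooth_eDen (hs : Smooth ψ) : Smooth (eDen ψ) := by
  have : eDen ψ = fun x => 1 / 2 * SS ψ 0 x + 1 / 2 * SS ψ 1 x + 1 / 4 * etaF ψ x ^ 2 :=
    funext fun x => eDen_eq x
  rw [this]
  have h0 := smooth_SS hs 0; have h1 := smooth_SS hs 1; have h2 := smooth_eta hs
  exact ((contDiff_const.mul h0).add (contDiff_const.mul h1)).add (contDiff_const.mul (h2.pow 2))

lemma dd_eDen (hs : Smooth ψ) (i : Fin 2) (x : Ed 2) : dd i (eDen ψ) x =
    1 / 2 * dd i (SS ψ 0) x + 1 / 2 * dd i (SS ψ 1) x + 1 / 2 * etaF ψ x * dd i (etaF ψ) x := by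
  have : eDen ψ = fun x => 1 / 2 * SS ψ 0 x + 1 / 2 * SS ψ 1 x + 1 / 4 * etaF ψ x ^ 2 :=
    funext fun x => eDen_eq x
  rw [this]
  have h0 := smooth_SS hs 0; have h1 := smooth_SS hs 1; have h2 := smooth_eta hs
  refine dd_of_line (((contDiff_const.mul h0).add (contDiff_const.mul h1)).add
    (contDiff_const.mul (h2.pow 2)) : Smooth _).diff ?_
  refine ((((dd_line h0.diff i x).const_mul (1/2)).add
    ((dd_line h1.diff i x).const_mul (1/2))).add
    (((dd_line h2.diff i x).pow 2).const_mul (1/4))).congr_deriv ?_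
  simp; ring

/-- The transverse stress–energy identity: the flux fails to be divergence free by the Jacobian of
`ψ`, with coefficient `c` up to sign. -/
lemma jac_aux {c : ℝ} (hs : Smooth ψ) (h : GPeq c ψ) (x : Ed 2) :
    dd 0 (GG ψ) x + dd 1 (SS ψ 1) x - dd 1 (eDen ψ) x =
      c * ((dd 0 ψ x).im * (dd 1 ψ x).re - (dd 0 ψ x).re * (dd 1 ψ x).im) := by
  rw [dd_eDen hs, dd_GG hs, dd_SS hs, dd_SS hs, dd_eta hs, dd_comm hs 0 1]
  have e1 := GPeq_re h x
  have e2 := GPeq_im h x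
  simp only [etaF]
  linear_combination (dd 1 ψ x).re * e1 + (dd 1 ψ x).im * e2

/-- The stress–energy identity in the direction of propagation: the flux is divergence free. -/
lemma jac_aux' {c : ℝ} (hs : Smooth ψ) (h : GPeq c ψ) (x : Ed 2) :
    dd 0 (SS ψ 0) x - dd 0 (eDen ψ) x + dd 1 (GG ψ) x = 0 := by
  rw [dd_eDen hs, dd_GG hs, dd_SS hs, dd_SS hs, dd_eta hs, dd_comm hs 0 1]
  have e1 := GPeq_re h x
  have e2 := GPeq_im h x
  simp only [etaF]
  linear_combination (dd 0 ψ x).re * e1 + (dd 0 ψ x).im * e2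

/-- The virial identity in the direction of propagation: `∫ |∂₀ψ|² = E`. -/
lemma virial0 {c : ℝ} (hs : Smooth ψ) (h : GPeq c ψ) (hE : FiniteEnergy ψ) :
    ∫ x, SS ψ 0 x = energy ψ := by
  have hS := int_SS hs hE 0
  have hX : ∀ i, Smooth ((![fun x => SS ψ 0 x - eDen ψ x, GG ψ] : Fin 2 → Ed 2 → ℝ) i) := by
    intro i
    fin_cases i
    · exact (smooth_SS hs 0).sub (smooth_eDen hs)
    · exact smooth_GG hs
  have := total_flux hX (g := fun x => 2 * eDen ψ x) (h := fun _ => 0) (k := fun _ => 0)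
    (hE.const_mul 2) (fun x => by linarith [eDen_nonneg (ψ := ψ) x]) (by simp)
    tendsto_const_nhds (fun i x => by
      fin_cases i
      · simpa using abs_SSe_le 0 x
      · simpa using abs_GG_le x) (fun x => by
      simp only [Matrix.cons_val_zero, Matrix.cons_val_one]
      rw [dd_sub (smooth_SS hs 0).diff (smooth_eDen hs).diff]
      exact jac_aux' hs h x) 0 (hS.sub hE)
  simp only [Matrix.cons_val_zero] at this
  rw [integral_sub hS hE] at this
  unfold energy
  linarith

/-- The virial identity in the transverse direction: `∫ |∂₁ψ|² = I^c(ψ)` as soon as the momentum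
density is integrable. -/
lemma virial1 {c : ℝ} (hs : Smooth ψ) (h : GPeq c ψ) (hE : FiniteEnergy ψ)
    (hlim : Tendsto ψ (cocompact (Ed 2)) (𝓝 1))
    (hP : Integrable (fun x => (dd 0 ψ x).im * ((ψ x).re - 1))) :
    ∫ x, SS ψ 1 x = lagr c ψ := by
  have hS := int_SS hs hE 1
  have hu : Smooth (fun x => (ψ x).re - 1) := hs.re.sub contDiff_const
  have hv0 := (hs.dd 0).im
  have hv1 := (hs.dd 1).im
  have hA : Smooth (fun x => GG ψ x + c * (((ψ x).re - 1) * (dd 1 ψ x).im)) :=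
    (smooth_GG hs).add (contDiff_const.mul (hu.mul hv1))
  have hB : Smooth (fun x => SS ψ 1 x - eDen ψ x - c * (((ψ x).re - 1) * (dd 0 ψ x).im)) :=
    ((smooth_SS hs 1).sub (smooth_eDen hs)).sub (contDiff_const.mul (hu.mul hv0))
  have hX : ∀ i, Smooth ((![fun x => GG ψ x + c * (((ψ x).re - 1) * (dd 1 ψ x).im),
      fun x => SS ψ 1 x - eDen ψ x - c * (((ψ x).re - 1) * (dd 0 ψ x).im)] :
      Fin 2 → Ed 2 → ℝ) i) := by
    intro i
    fin_cases i
    · exact hA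
    · exact hB
  have hP' : Integrable (fun x => c * (((ψ x).re - 1) * (dd 0 ψ x).im)) := by
    simpa only [mul_comm] using hP.const_mul c
  have hk : Integrable (fun x => Real.sqrt (2 * eDen ψ x) ^ 2) := by
    have : (fun x => Real.sqrt (2 * eDen ψ x) ^ 2) = fun x => 2 * eDen ψ x :=
      funext fun x => Real.sq_sqrt (by linarith [eDen_nonneg (ψ := ψ) x])
    rw [this]; exact hE.const_mul 2
  have him : ∀ i x, |(dd i ψ x).im| ≤ |Real.sqrt (2 * eDen ψ x)| := fun i x => by
    rw [abs_of_nonneg (Real.sqrt_nonneg _)]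
    refine (abs_im_le_norm _).trans (Real.le_sqrt_of_sq_le (SS_le i x))
  have hl : Tendsto (fun x => c * ((ψ x).re - 1)) (cocompact (Ed 2)) (𝓝 0) := by
    have h1 : Tendsto (fun x => (ψ x).re) (cocompact (Ed 2)) (𝓝 1) :=
      (continuous_re.tendsto 1).comp hlim
    simpa using (h1.sub_const 1).const_mul c
  have hbd : ∀ i x, |c * (((ψ x).re - 1) * (dd i ψ x).im)| ≤
      |c * ((ψ x).re - 1)| * |Real.sqrt (2 * eDen ψ x)| := fun i x => by
    rw [← mul_assoc, abs_mul]
    exact mul_le_mul_of_nonneg_left (him i x) (abs_nonneg _)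
  have := total_flux hX (g := fun x => 2 * eDen ψ x)
    (hE.const_mul 2) (fun x => by linarith [eDen_nonneg (ψ := ψ) x]) hk
    hl (fun i x => by
      fin_cases i
      · simp only [Fin.zero_eta, Matrix.cons_val_zero]
        exact (abs_add_le _ _).trans (add_le_add (abs_GG_le x) (hbd 1 x))
      · simp only [Fin.mk_one, Matrix.cons_val_one]
        exact (abs_sub _ _).trans (add_le_add (abs_SSe_le 1 x) (hbd 0 x))) (fun x => by
      simp only [Matrix.cons_val_zero, Matrix.cons_val_one]
      rw [dd_add (smooth_GG hs).diff (contDiff_const.mul (hu.mul hv1)).diff,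
        dd_sub ((smooth_SS hs 1).sub (smooth_eDen hs)).diff (contDiff_const.mul (hu.mul hv0)).diff,
        dd_sub (smooth_SS hs 1).diff (smooth_eDen hs).diff,
        dd_const_mul _ (hu.mul hv1).diff, dd_const_mul _ (hu.mul hv0).diff,
        dd_mul hu.diff hv1.diff, dd_mul hu.diff hv0.diff, dd_sub hs.re.diff (by fun_prop),
        dd_sub hs.re.diff (by fun_prop), dd_const, dd_const, dd_re hs.diff, dd_re hs.diff,
        dd_im (hs.dd 1).diff, dd_im (hs.dd 0).diff, dd_comm hs 0 1]
      have := jac_aux hs h x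
      linear_combination this) 1 ((hS.sub hE).sub hP')
  change ∫ x, (SS ψ 1 x - eDen ψ x - c * (((ψ x).re - 1) * (dd 0 ψ x).im)) = 0 at this
  have hSE : Integrable (fun x => SS ψ 1 x - eDen ψ x) := hS.sub hE
  rw [integral_sub hSE hP', integral_sub hS hE, integral_const_mul] at this
  unfold lagr energy mom
  have e : ∫ x, ((ψ x).re - 1) * (dd 0 ψ x).im = ∫ x, (pd ψ 0 x).im * ((ψ x).re - 1) :=
    integral_congr_ae (ae_of_all _ fun x => mul_comm _ _)
  rw [e] at this
  linarith

/-- A bound on the Lagrangian controls `∫ |∂₁ψ|²`. If the momentum density fails to be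
integrable, its integral is `0` by convention and the bound holds for the energy. -/
lemma transverse_bound {c C : ℝ} (hs : Smooth ψ) (h : GPeq c ψ) (hE : FiniteEnergy ψ)
    (hlim : Tendsto ψ (cocompact (Ed 2)) (𝓝 1)) (hC : 0 ≤ C) (hI : lagr c ψ ≤ C) :
    ∫ x, SS ψ 1 x ≤ 2 * C := by
  by_cases hP : Integrable (fun x => (dd 0 ψ x).im * ((ψ x).re - 1))
  · rw [virial1 hs h hE hlim hP]; linarith
  · have h0 : mom ψ = 0 := by
      unfold mom
      have : ∫ x, (pd ψ 0 x).im * ((ψ x).re - 1) = 0 := integral_undef hP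
      rw [this, neg_zero]
    have h1 : energy ψ ≤ C := by
      unfold lagr at hI; rw [h0] at hI; linarith
    have h2 : ∫ x, SS ψ 1 x ≤ ∫ x, 2 * eDen ψ x :=
      integral_mono (int_SS hs hE 1) (hE.const_mul 2) fun x => SS_le 1 x
    rw [integral_const_mul] at h2
    unfold energy at h1
    linarith

end ident

/-! ### The transverse flux away from the zeros -/

section strip
variable {ψ : Ed 2 → ℂ}

lemma abs_jj_le (i : Fin 2) (x : Ed 2) : |jj ψ i x| ≤ ‖ψ x‖ * ‖dd i ψ x‖ := by
  have : jj ψ i x = ((starRingEnd ℂ) (ψ x) * dd i ψ x).im := by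
    simp [jj, Complex.mul_im]; ring
  rw [this]
  refine (abs_im_le_norm _).trans ?_
  rw [norm_mul, RCLike.norm_conj]

lemma pp_sq_le (i : Fin 2) (x : Ed 2) : ‖ψ x‖ ^ 2 * pp ψ i x ^ 2 ≤ SS ψ i x := by
  by_cases h : ψ x = 0
  · simp [h, SS_nonneg]
  have h0 : 0 < ‖ψ x‖ := norm_pos_iff.mpr h
  have h1 := abs_jj_le (ψ := ψ) i x
  have h2 : jj ψ i x ^ 2 ≤ (‖ψ x‖ * ‖dd i ψ x‖) ^ 2 := by
    rw [← sq_abs]; exact pow_le_pow_left₀ (abs_nonneg _) h1 2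
  unfold pp SS
  have : ‖ψ x‖ ^ 2 * (jj ψ i x / ‖ψ x‖ ^ 2) ^ 2 = jj ψ i x ^ 2 / ‖ψ x‖ ^ 2 := by
    field_simp
  rw [this, div_le_iff₀ (by positivity)]
  linarith [mul_pow ‖ψ x‖ ‖dd i ψ x‖ 2, mul_comm (‖ψ x‖ ^ 2) (‖dd i ψ x‖ ^ 2)]

lemma abs_eta_pp_le {m : ℝ} (hm : 0 < m) (i : Fin 2) (x : Ed 2) (hx : m ≤ ‖ψ x‖) :
    |etaF ψ x * pp ψ i x| ≤ (2 + 1 / m ^ 2) * eDen ψ x := by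
  have h1 := pp_sq_le (ψ := ψ) i x
  have h2 : m ^ 2 ≤ ‖ψ x‖ ^ 2 := pow_le_pow_left₀ hm.le hx 2
  have h3 : m ^ 2 * pp ψ i x ^ 2 ≤ 2 * eDen ψ x :=
    (mul_le_mul_of_nonneg_right h2 (sq_nonneg _)).trans (h1.trans (SS_le i x))
  have h4 : pp ψ i x ^ 2 ≤ 1 / m ^ 2 * (2 * eDen ψ x) := by
    rw [one_div, ← div_eq_inv_mul, le_div_iff₀ (by positivity)]; linarith
  have h5 : etaF ψ x ^ 2 ≤ 4 * eDen ψ x := by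
    rw [eDen_eq]; linarith [SS_nonneg (ψ := ψ) 0 x, SS_nonneg (ψ := ψ) 1 x]
  rw [abs_le]
  constructor <;> nlinarith [sq_nonneg (etaF ψ x - pp ψ i x), sq_nonneg (etaF ψ x + pp ψ i x)]

lemma pp_line (hs : Smooth ψ) (k i : Fin 2) (x : Ed 2) (hx : ψ x ≠ 0) :
    HasDerivAt (fun t : ℝ => pp ψ i (x + t • EuclideanSpace.single k 1))
      ((dd k (jj ψ i) x * ‖ψ x‖ ^ 2 + jj ψ i x * dd k (etaF ψ) x) / (‖ψ x‖ ^ 2) ^ 2) 0 := by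
  have h1 := dd_line (smooth_jj hs i).diff k x
  have h2 := (dd_line (smooth_eta hs).diff k x).const_sub 1
  have h3 := h1.div h2 (by simp [etaF, hx])
  refine (h3.congr_deriv ?_).congr_of_eventuallyEq (Eventually.of_forall fun t => ?_)
  · simp [etaF]
  · simp [pp, etaF]

lemma pp_contDiffAt (hs : Smooth ψ) (i : Fin 2) (x : Ed 2) (hx : ψ x ≠ 0) :
    ContDiffAt ℝ (⊤ : ℕ∞) (pp ψ i) x :=
  (smooth_jj hs i).contDiffAt.div (smooth_normSq hs).contDiffAt (by simp [hx])

/-- The components of the transverse momentum flux, corrected by `(c/2) η ∇^⊥θ` with `∇θ = j / |ψ|²`.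
It is divergence free where `ψ ≠ 0`; its values at zeros of `ψ` are irrelevant. -/
def XX (c : ℝ) (ψ : Ed 2 → ℂ) (i : Fin 2) (x : Ed 2) : ℝ :=
  if i = 0 then GG ψ x - c / 2 * (etaF ψ x * pp ψ 1 x)
  else SS ψ 1 x - eDen ψ x + c / 2 * (etaF ψ x * pp ψ 0 x)

lemma XX_contDiffAt {c : ℝ} (hs : Smooth ψ) (i : Fin 2) (x : Ed 2) (hx : ψ x ≠ 0) :
    ContDiffAt ℝ (⊤ : ℕ∞) (XX c ψ i) x := by
  fin_cases i
  · exact (smooth_GG hs).contDiffAt.sub (contDiffAt_const.mul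
      ((smooth_eta hs).contDiffAt.mul (pp_contDiffAt hs 1 x hx)))
  · exact ((smooth_SS hs 1).contDiffAt.sub (smooth_eDen hs).contDiffAt).add
      (contDiffAt_const.mul ((smooth_eta hs).contDiffAt.mul (pp_contDiffAt hs 0 x hx)))

lemma abs_XX_le {c m : ℝ} (hm : 0 < m) (i : Fin 2) (x : Ed 2) (hx : m ≤ ‖ψ x‖) :
    |XX c ψ i x| ≤ (2 + |c / 2| * (2 + 1 / m ^ 2)) * eDen ψ x := by
  have key : ∀ i, |c / 2 * (etaF ψ x * pp ψ i x)| ≤ |c / 2| * (2 + 1 / m ^ 2) * eDen ψ x := by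
    intro i
    rw [abs_mul, mul_assoc]
    exact mul_le_mul_of_nonneg_left (abs_eta_pp_le hm i x hx) (abs_nonneg _)
  rw [add_mul]
  fin_cases i
  · exact (abs_sub _ _).trans (add_le_add (abs_GG_le x) (key 1))
  · exact (abs_add_le _ _).trans (add_le_add (abs_SSe_le 1 x) (key 0))

lemma XX_div {c : ℝ} (hs : Smooth ψ) (h : GPeq c ψ) (x : Ed 2) (hx : ψ x ≠ 0) :
    ∃ a b, HasDerivAt (fun t : ℝ => XX c ψ 0 (x + t • EuclideanSpace.single 0 1)) a 0 ∧
      HasDerivAt (fun t : ℝ => XX c ψ 1 (x + t • EuclideanSpace.single 1 1)) b 0 ∧ a + b = 0 := by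
  have hη := (smooth_eta hs).diff
  refine ⟨_, _, (dd_line (smooth_GG hs).diff 0 x).sub
    (((dd_line hη 0 x).mul (pp_line hs 0 1 x hx)).const_mul (c / 2)),
    ((dd_line (smooth_SS hs 1).diff 1 x).sub (dd_line (smooth_eDen hs).diff 1 x)).add
    (((dd_line hη 1 x).mul (pp_line hs 1 0 x hx)).const_mul (c / 2)), ?_⟩
  have hj := jac_aux hs h x
  have hr : (‖ψ x‖ ^ 2 : ℝ) ≠ 0 := by simp [hx]
  simp only [zero_smul, add_zero]
  have e1 : dd 0 (jj ψ 1) x * ‖ψ x‖ ^ 2 + jj ψ 1 x * dd 0 (etaF ψ) x =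
      dd 1 (jj ψ 0) x * ‖ψ x‖ ^ 2 + jj ψ 0 x * dd 1 (etaF ψ) x := by
    rw [dd_jj hs, dd_jj hs, dd_eta hs, dd_eta hs, dd_comm hs 0 1, normSq_eq]
    unfold jj
    ring
  have e2 : dd 1 (etaF ψ) x * pp ψ 0 x - dd 0 (etaF ψ) x * pp ψ 1 x =
      2 * ((dd 0 ψ x).re * (dd 1 ψ x).im - (dd 0 ψ x).im * (dd 1 ψ x).re) := by
    have : dd 1 (etaF ψ) x * jj ψ 0 x - dd 0 (etaF ψ) x * jj ψ 1 x =
      2 * ((dd 0 ψ x).re * (dd 1 ψ x).im - (dd 0 ψ x).im * (dd 1 ψ x).re) * ‖ψ x‖ ^ 2 := by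
      rw [dd_eta hs, dd_eta hs, normSq_eq]
      unfold jj
      ring
    unfold pp
    rw [mul_div_assoc', mul_div_assoc', ← sub_div, this, mul_div_cancel_right₀ _ hr]
  rw [e1]
  linear_combination hj + c / 2 * e2

/-- Testing the momentum flux with a function of `x₁` supported where `ψ` stays away from `0`. -/
lemma strip_id {c : ℝ} (hs : Smooth ψ) (h : GPeq c ψ) (hE : FiniteEnergy ψ)
    {B : ℝ → ℝ} (hB : ContDiff ℝ (⊤ : ℕ∞) B) {M M' m : ℝ} (hM : ∀ t, |B t| ≤ M)
    (hM' : ∀ t, |deriv B t| ≤ M') (hm : 0 < m) (hBm : ∀ x : Ed 2, B (x 1) ≠ 0 → m ≤ ‖ψ x‖) :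
    Integrable (fun x => deriv B (x 1) * XX c ψ 1 x) ∧ ∫ x, deriv B (x 1) * XX c ψ 1 x = 0 := by
  have hBs := smooth_coord hB 1
  have hloc : ∀ x : Ed 2, ‖ψ x‖ < m → (fun y : Ed 2 => B (y 1)) =ᶠ[𝓝 x] fun _ => 0 := by
    intro x hx
    filter_upwards [hs.continuous.norm.continuousAt.eventually (gt_mem_nhds hx)] with y hy
    by_contra hne
    exact absurd (hBm y hne) (not_le.mpr hy)
  have hne : ∀ x, m ≤ ‖ψ x‖ → ψ x ≠ 0 := fun x hx => norm_pos_iff.mp (hm.trans_le hx)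
  have hZ : ∀ i, Smooth (fun x => B (x 1) * XX c ψ i x) := by
    intro i
    refine contDiff_iff_contDiffAt.mpr fun x => ?_
    by_cases hx : ‖ψ x‖ < m
    · refine (contDiffAt_const (c := (0:ℝ))).congr_of_eventuallyEq ?_
      filter_upwards [hloc x hx] with y hy
      simp [hy]
    · exact hBs.contDiffAt.mul (XX_contDiffAt hs i x (hne x (not_lt.mp hx)))
  have hB' : ∀ x : Ed 2, ‖ψ x‖ < m → deriv B (x 1) = 0 := by
    intro x hx
    have h1 : dd 1 (fun y : Ed 2 => B (y 1)) x = deriv B (x 1) := by rw [dd_coord hB]; simp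
    rw [← h1]
    unfold dd
    rw [(hloc x hx).fderiv_eq]
    simp
  have hd : ∀ x, dd 0 (fun x => B (x 1) * XX c ψ 0 x) x + dd 1 (fun x => B (x 1) * XX c ψ 1 x) x =
      deriv B (x 1) * XX c ψ 1 x := by
    intro x
    by_cases hx : ‖ψ x‖ < m
    · rw [hB' x hx]
      have : ∀ i j, dd j (fun x => B (x 1) * XX c ψ i x) x = 0 := by
        intro i j
        have : (fun x => B (x 1) * XX c ψ i x) =ᶠ[𝓝 x] fun _ => 0 := by
          filter_upwards [hloc x hx] with y hy
          simp [hy]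
        unfold dd
        rw [this.fderiv_eq]
        simp
      rw [this, this]; simp
    · obtain ⟨a, b, h1, h2, h3⟩ := XX_div hs h x (hne x (not_lt.mp hx))
      have l0 := dd_line hBs.diff 0 x
      have l1 := dd_line hBs.diff 1 x
      rw [dd_of_line (hZ 0).diff (l0.mul h1), dd_of_line (hZ 1).diff (l1.mul h2), dd_coord hB,
        dd_coord hB]
      simp
      linear_combination B (x 1) * h3
  have hM0 : 0 ≤ M := (abs_nonneg _).trans (hM 0)
  have hM0' : 0 ≤ M' := (abs_nonneg _).trans (hM' 0)
  set K := 2 + |c / 2| * (2 + 1 / m ^ 2) with hK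
  have hK0 : 0 ≤ K := by positivity
  have h_intble : Integrable (fun x => deriv B (x 1) * XX c ψ 1 x) := by
    refine (hE.const_mul (M' * K)).mono' ?_ (ae_of_all _ fun x => ?_)
    · have : (fun x => deriv B (x 1) * XX c ψ 1 x) = fun x =>
        dd 0 (fun x => B (x 1) * XX c ψ 0 x) x + dd 1 (fun x => B (x 1) * XX c ψ 1 x) x :=
        funext fun x => (hd x).symm
      rw [this]
      exact ((hZ 0).dd 0).continuous.aestronglyMeasurable.add
        ((hZ 1).dd 1).continuous.aestronglyMeasurable
    · rw [Real.norm_eq_abs, abs_mul]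
      by_cases hx : ‖ψ x‖ < m
      · rw [hB' x hx]; simp; have := eDen_nonneg (ψ := ψ) x; positivity
      · rw [mul_assoc]
        exact mul_le_mul (hM' _) (abs_XX_le hm 1 x (not_lt.mp hx)) (abs_nonneg _) hM0'
  refine ⟨h_intble, ?_⟩
  have := div_thm (X := fun i x => B (x 1) * XX c ψ i x) hZ (g := fun x => M * K * eDen ψ x)
    (h := fun _ => 0) (k := fun _ => 0) (hE.const_mul _)
    (fun x => by have := eDen_nonneg (ψ := ψ) x; positivity) (by simp) tendsto_const_nhds
    (fun i x => by
      rw [abs_mul]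
      simp only [abs_zero, mul_zero, add_zero]
      by_cases hx : ‖ψ x‖ < m
      · rw [show B (x 1) = 0 from (hloc x hx).self_of_nhds]; simp; have := eDen_nonneg (ψ := ψ) x; positivity
      · rw [mul_assoc]
        exact mul_le_mul (hM _) (abs_XX_le hm i x (not_lt.mp hx)) (abs_nonneg _) hM0)
    (by simpa only [hd] using h_intble)
  simpa only [hd] using this

lemma XX1_eq (c : ℝ) (x : Ed 2) : XX c ψ 1 x = 1 / 2 * SS ψ 1 x -
    (1 / 2 * SS ψ 0 x + 1 / 4 * etaF ψ x ^ 2 - c / 2 * (etaF ψ x * pp ψ 0 x)) := by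
  unfold XX; rw [eDen_eq]; simp; ring

/-- The momentum flux identity in the absence of zeros. -/
lemma total_id {c m : ℝ} (hs : Smooth ψ) (h : GPeq c ψ) (hE : FiniteEnergy ψ) (hm : 0 < m)
    (hψ : ∀ x, m ≤ ‖ψ x‖) : Integrable (XX c ψ 1) ∧ ∫ x, XX c ψ 1 x = 0 := by
  have hX : Integrable (XX c ψ 1) := by
    refine (hE.const_mul (2 + |c / 2| * (2 + 1 / m ^ 2))).mono' ?_ (ae_of_all _ fun x => ?_)
    · have : Smooth (XX c ψ 1) := contDiff_iff_contDiffAt.mpr fun x =>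
        XX_contDiffAt hs 1 x (norm_pos_iff.mp (hm.trans_le (hψ x)))
      exact this.continuous.aestronglyMeasurable
    · exact abs_XX_le hm 1 x (hψ x)
  refine ⟨hX, flux_limit hX 1 fun L hL => ?_⟩
  obtain ⟨h1, h2, h3⟩ := sin_test L hL
  have := (strip_id hs h hE h1 h2 (M' := 1)
    (by rw [h3]; exact fun t => Real.abs_cos_le_one _) hm (fun x _ => hψ x)).2
  rwa [h3] at this

lemma primitive {b : ℝ → ℝ} (hb : ContDiff ℝ (⊤ : ℕ∞) b) (a : ℝ) :
    ContDiff ℝ (⊤ : ℕ∞) (fun s => ∫ t in a..s, b t) ∧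
      deriv (fun s => ∫ t in a..s, b t) = b := by
  have hd : ∀ s, HasDerivAt (fun s => ∫ t in a..s, b t) (b s) s := fun s =>
    intervalIntegral.integral_hasDerivAt_right (hb.continuous.intervalIntegrable _ _)
      (hb.continuous.stronglyMeasurableAtFilter _ _) hb.continuous.continuousAt
  have hd' : deriv (fun s => ∫ t in a..s, b t) = b := funext fun s => (hd s).deriv
  refine ⟨?_, hd'⟩
  rw [contDiff_infty_iff_deriv]
  exact ⟨fun s => (hd s).differentiableAt, by rw [hd']; exact hb⟩

lemma primitive_bdd {b : ℝ → ℝ} (hb : Continuous b) (hc : HasCompactSupport b) (a s : ℝ) :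
    |∫ t in a..s, b t| ≤ ∫ t, |b t| := by
  have hi : Integrable (fun t => |b t|) := (hb.integrable_of_hasCompactSupport hc).norm
  have h := intervalIntegral.norm_integral_le_integral_norm_uIoc (f := b) (μ := volume) (a := a) (b := s)
  refine h.trans ?_
  exact setIntegral_le_integral hi (ae_of_all _ fun t => abs_nonneg _)

lemma strip_one {c m : ℝ} (hs : Smooth ψ) (h : GPeq c ψ) (hE : FiniteEnergy ψ) (hm : 0 < m)
    {b : ℝ → ℝ} (hb : ContDiff ℝ (⊤ : ℕ∞) b) (hc : HasCompactSupport b) (a : ℝ)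
    (hab : (∀ t ≤ a, b t = 0) ∧ (∀ x : Ed 2, a ≤ x 1 → m ≤ ‖ψ x‖) ∨
      (∀ t, a ≤ t → b t = 0) ∧ (∀ x : Ed 2, x 1 ≤ a → m ≤ ‖ψ x‖)) :
    Integrable (fun x => b (x 1) * XX c ψ 1 x) ∧ ∫ x, b (x 1) * XX c ψ 1 x = 0 := by
  obtain ⟨h1, h2⟩ := primitive hb a
  obtain ⟨M', hM'⟩ := hc.exists_bound_of_continuous hb.continuous
  have := strip_id (c := c) hs h hE h1 (primitive_bdd hb.continuous hc a) (M' := M')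
    (by rw [h2]; exact hM') hm (by
      intro x hx
      rcases hab with ⟨h3, h4⟩ | ⟨h3, h4⟩
      · refine h4 x (le_of_not_ge fun hlt => hx ?_)
        refine intervalIntegral.integral_zero_ae (ae_of_all _ fun t ht => h3 t ?_)
        rw [Set.uIoc_of_ge hlt] at ht
        exact ht.2
      · refine h4 x (le_of_not_ge fun hlt => hx ?_)
        refine intervalIntegral.integral_zero_ae (ae_of_all _ fun t ht => h3 t ?_)
        rw [Set.uIoc_of_le hlt] at ht
        exact ht.1.le)
  rwa [h2] at this

/-- The transverse flux controls the modulus. On a strip lying in a half plane free of zeros, and where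
`|ψ|² ≥ r`, the weighted integral of `η²` is bounded by that of `|∂₁ψ|²`; the constant on the left is
positive when `r > c²/2`. -/
lemma strip_coercive {c m r : ℝ} (hs : Smooth ψ) (h : GPeq c ψ) (hE : FiniteEnergy ψ)
    (hm : 0 < m) {b : ℝ → ℝ} (hb : ContDiff ℝ (⊤ : ℕ∞) b) (hc : HasCompactSupport b)
    (hb0 : ∀ t, 0 ≤ b t) (a : ℝ)
    (hab : (∀ t ≤ a, b t = 0) ∧ (∀ x : Ed 2, a ≤ x 1 → m ≤ ‖ψ x‖) ∨
      (∀ t, a ≤ t → b t = 0) ∧ (∀ x : Ed 2, x 1 ≤ a → m ≤ ‖ψ x‖))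
    (hr : 0 < r) (hbr : ∀ x : Ed 2, b (x 1) ≠ 0 → r ≤ ‖ψ x‖ ^ 2) :
    (1 / 4 - c ^ 2 / (8 * r)) * ∫ x, b (x 1) * etaF ψ x ^ 2 ≤
      1 / 2 * ∫ x, b (x 1) * SS ψ 1 x := by
  obtain ⟨h1, h2⟩ := strip_one (c := c) hs h hE hm hb hc a hab
  obtain ⟨M', hM'⟩ := hc.exists_bound_of_continuous hb.continuous
  have hbc : AEStronglyMeasurable (fun x : Ed 2 => b (x 1)) := by
    have := hb.continuous
    exact (show Continuous fun x : Ed 2 => b (x 1) by fun_prop).aestronglyMeasurable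
  have i1 : Integrable (fun x => b (x 1) * etaF ψ x ^ 2) :=
    (int_eta_sq hs hE).bdd_mul (c := M') hbc (ae_of_all _ fun x => hM' _)
  have i2 : Integrable (fun x => b (x 1) * SS ψ 1 x) :=
    (int_SS hs hE 1).bdd_mul (c := M') hbc (ae_of_all _ fun x => hM' _)
  rw [← integral_const_mul, ← integral_const_mul, ← sub_nonpos, ← integral_sub (i1.const_mul _)
    (i2.const_mul _)]
  have : ∫ x, ((1 / 4 - c ^ 2 / (8 * r)) * (b (x 1) * etaF ψ x ^ 2) -
      1 / 2 * (b (x 1) * SS ψ 1 x)) ≤ ∫ x, - (b (x 1) * XX c ψ 1 x) := by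
    refine integral_mono ((i1.const_mul _).sub (i2.const_mul _)) h1.neg fun x => ?_
    show _ ≤ - (b (x 1) * XX c ψ 1 x)
    by_cases hx : b (x 1) = 0
    · simp [hx]
    have h3 := hbr x hx
    rw [XX1_eq]
    have h4 := pp_sq_le (ψ := ψ) 0 x
    have h5 : r * pp ψ 0 x ^ 2 ≤ SS ψ 0 x :=
      (mul_le_mul_of_nonneg_right h3 (sq_nonneg _)).trans h4
    have h6 : 0 ≤ r / 2 * (pp ψ 0 x - c * etaF ψ x / (2 * r)) ^ 2 := by positivity
    have h7 : r / 2 * (pp ψ 0 x - c * etaF ψ x / (2 * r)) ^ 2 = r * pp ψ 0 x ^ 2 / 2 -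
        c / 2 * (etaF ψ x * pp ψ 0 x) + c ^ 2 / (8 * r) * etaF ψ x ^ 2 := by
      field_simp; ring
    have h8 := mul_nonneg (hb0 (x 1)) (show 0 ≤ 1 / 2 * SS ψ 0 x + 1 / 4 * etaF ψ x ^ 2 -
      c / 2 * (etaF ψ x * pp ψ 0 x) - (1 / 4 - c ^ 2 / (8 * r)) * etaF ψ x ^ 2 by linarith)
    linarith
  rw [integral_neg, h2, neg_zero] at this
  exact this

end strip

/-! ### Instability of bounded one-dimensional profiles -/

/-- The real inner product on `ℂ`. -/
def ip (a b : ℂ) : ℝ := a.re * b.re + a.im * b.im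

lemma hasDerivAt_ip {f g : ℝ → ℂ} {f' g' : ℂ} {x : ℝ} (hf : HasDerivAt f f' x)
    (hg : HasDerivAt g g' x) : HasDerivAt (fun t => ip (f t) (g t)) (ip f' (g x) + ip (f x) g') x := by
  have h1 : ∀ {f : ℝ → ℂ} {f' : ℂ}, HasDerivAt f f' x → HasDerivAt (fun t => (f t).re) f'.re x :=
    fun h => reCLM.hasFDerivAt.comp_hasDerivAt x h
  have h2 : ∀ {f : ℝ → ℂ} {f' : ℂ}, HasDerivAt f f' x → HasDerivAt (fun t => (f t).im) f'.im x :=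
    fun h => imCLM.hasFDerivAt.comp_hasDerivAt x h
  refine (((h1 hf).mul (h1 hg)).add ((h2 hf).mul (h2 hg))).congr_deriv ?_
  unfold ip; ring

lemma ip_continuous : Continuous fun p : ℂ × ℂ => ip p.1 p.2 := by
  unfold ip; fun_prop

/-- The density of the one-dimensional second variation at a solution of
`u'' = -(lam - |u|²) u`, for the test function `h` with derivative `h'`. -/
def qd (lam : ℝ) (u h h' : ℂ) : ℝ :=
  ‖h'‖ ^ 2 - (lam - ‖u‖ ^ 2) * ‖h‖ ^ 2 + 2 * ip h u ^ 2

/-- The linearised nonlinearity: the kernel of the second variation solves `w'' = AA w`. -/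
def AA (lam : ℝ) (u h : ℂ) : ℂ := ((-(lam - ‖u‖ ^ 2) : ℝ) : ℂ) * h + ((2 * ip h u : ℝ) : ℂ) * u

lemma qd_continuous {lam : ℝ} {U h h' : ℝ → ℂ} (hU : Continuous U) (h1 : Continuous h)
    (h2 : Continuous h') : Continuous fun x => qd lam (U x) (h x) (h' x) := by
  unfold qd
  have := ip_continuous.comp (h1.prodMk hU)
  simp only [Function.comp_def] at this
  fun_prop

lemma qd_integrable {lam : ℝ} {U h : ℝ → ℂ} (hU : Continuous U) (h1 : ContDiff ℝ (⊤ : ℕ∞) h)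
    (hc : HasCompactSupport h) : Integrable fun x => qd lam (U x) (h x) (deriv h x) := by
  refine (qd_continuous hU h1.continuous (h1.continuous_deriv (by simp))).integrable_of_hasCompactSupport
    ?_
  refine hc.mono' ?_ |>.mono (fun _ h => h)
  intro x hx
  by_contra hn
  have h2 : h x = 0 := image_eq_zero_of_notMem_tsupport hn
  have h3 : deriv h x = 0 := image_eq_zero_of_notMem_tsupport
    (fun hh => hn (closure_minimal (support_deriv_subset) (isClosed_tsupport h) hh))
  exact hx (by simp [qd, h2, h3, ip])

lemma deriv_flat {f : ℝ → ℝ} (h0 : ∀ x, 0 ≤ f x) (h1 : ∀ x, f x ≤ 1) {x : ℝ}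
    (hx : f x = 0 ∨ f x = 1) : deriv f x = 0 := by
  rcases hx with hx | hx
  · exact IsLocalMin.deriv_eq_zero (Eventually.of_forall fun y => by rw [hx]; exact h0 y)
  · exact IsLocalMax.deriv_eq_zero (Eventually.of_forall fun y => by rw [hx]; exact h1 y)

/-- A smooth transition from `0` to `1` on `[0, 1]`. -/
abbrev TT : ℝ → ℝ := Real.smoothTransition

lemma TT_smooth : ContDiff ℝ (⊤ : ℕ∞) TT := Real.smoothTransition.contDiff

lemma TT_deriv0 {x : ℝ} (hx : x ≤ 0 ∨ 1 ≤ x) : deriv TT x = 0 :=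
  deriv_flat Real.smoothTransition.nonneg Real.smoothTransition.le_one
    (hx.imp Real.smoothTransition.zero_of_nonpos Real.smoothTransition.one_of_one_le)

lemma TT_hasDerivAt (x : ℝ) : HasDerivAt TT (deriv TT x) x :=
  (TT_smooth.differentiable (by simp) x).hasDerivAt

lemma TT_deriv_bdd : ∃ K, 0 ≤ K ∧ ∀ x, |deriv TT x| ≤ K := by
  have h : HasCompactSupport (deriv TT) := HasCompactSupport.of_support_subset_isCompact
    (isCompact_Icc (a := (0:ℝ)) (b := 1)) (by
      intro x hx
      by_contra hn
      rw [Set.mem_Icc, not_and_or, not_le, not_le] at hn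
      exact hx (TT_deriv0 (hn.imp le_of_lt le_of_lt)))
  obtain ⟨K, hK⟩ := h.exists_bound_of_continuous (TT_smooth.continuous_deriv (by simp))
  exact ⟨K, (norm_nonneg _).trans (hK 0), hK⟩

lemma int_deriv_zero {f f' : ℝ → ℝ} (h : ∀ x, HasDerivAt f (f' x) x) (hf' : Continuous f')
    (hc : HasCompactSupport f) (hc' : HasCompactSupport f') : ∫ x, f' x = 0 :=
  integral_eq_zero_of_hasDerivAt_of_integrable h (hf'.integrable_of_hasCompactSupport hc')
    ((continuous_iff_continuousAt.mpr fun x => (h x).continuousAt).integrable_of_hasCompactSupport hc)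

lemma int_five {α : Type*} [MeasurableSpace α] {μ : Measure α} {f₁ f₂ f₃ f₄ f₅ : α → ℝ} (a b : ℝ) (h₁ : Integrable f₁ μ)
    (h₂ : Integrable f₂ μ) (h₃ : Integrable f₃ μ) (h₄ : Integrable f₄ μ) (h₅ : Integrable f₅ μ) :
    ∫ x, (f₁ x + a * f₂ x + b * f₃ x + f₄ x + a * f₅ x) ∂μ = (∫ x, f₁ x ∂μ) + a * (∫ x, f₂ x ∂μ) +
      b * (∫ x, f₃ x ∂μ) + (∫ x, f₄ x ∂μ) + a * ∫ x, f₅ x ∂μ := by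
  have e2 := h₂.const_mul a
  have e3 := h₃.const_mul b
  have e5 := h₅.const_mul a
  have s2 : Integrable (fun x => f₁ x + a * f₂ x) μ := h₁.add e2
  have s3 : Integrable (fun x => f₁ x + a * f₂ x + b * f₃ x) μ := s2.add e3
  have s4 : Integrable (fun x => f₁ x + a * f₂ x + b * f₃ x + f₄ x) μ := s3.add h₄
  rw [integral_add s4 e5, integral_add s3 h₄, integral_add s2 e3, integral_add h₁ e2,
    integral_const_mul, integral_const_mul, integral_const_mul]

/-- The second variation at `τ w + δ ζ e` with `w` in its kernel. -/
lemma qd_expand {lam : ℝ} {U w w' : ℝ → ℂ} (hU : Continuous U)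
    (hw : ∀ x, HasDerivAt w (w' x) x) (hw' : ∀ x, HasDerivAt w' (AA lam (U x) (w x)) x)
    {τ ζ : ℝ → ℝ} (hτ : ContDiff ℝ (⊤ : ℕ∞) τ) (hζ : ContDiff ℝ (⊤ : ℕ∞) ζ)
    (hτc : HasCompactSupport τ) (hζc : HasCompactSupport ζ) (e : ℂ) (δ : ℝ) :
    ∫ x, qd lam (U x) (τ x * w x + (δ * ζ x : ℝ) * e)
      (deriv τ x * w x + τ x * w' x + (δ * deriv ζ x : ℝ) * e) =
    (∫ x, deriv τ x ^ 2 * ‖w x‖ ^ 2) +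
      2 * δ * (∫ x, deriv τ x * (ip (w x) e * deriv ζ x - ip (w' x) e * ζ x)) +
      δ ^ 2 * ∫ x, qd lam (U x) (ζ x * e) (deriv ζ x * e) := by
  have cw : Continuous w := continuous_iff_continuousAt.mpr fun x => (hw x).continuousAt
  have cw' : Continuous w' := continuous_iff_continuousAt.mpr fun x => (hw' x).continuousAt
  have cτ := hτ.continuous
  have cζ := hζ.continuous
  have cτ' : Continuous (deriv τ) := hτ.continuous_deriv (by simp)
  have cζ' : Continuous (deriv ζ) := hζ.continuous_deriv (by simp)
  have hτ'c := hτc.deriv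
  have hζ'c := hζc.deriv
  have cip : ∀ {f g : ℝ → ℂ}, Continuous f → Continuous g → Continuous fun x => ip (f x) (g x) :=
    fun hf hg => ip_continuous.comp (hf.prodMk hg)
  have dτ : ∀ x, HasDerivAt τ (deriv τ x) x := fun x => (hτ.differentiable (by simp) x).hasDerivAt
  have dζ : ∀ x, HasDerivAt ζ (deriv ζ x) x := fun x => (hζ.differentiable (by simp) x).hasDerivAt
  have cA : Continuous fun x => AA lam (U x) (w x) := by
    unfold AA
    have := cip cw hU
    fun_prop
  have c1 := cip cw' cw
  have c2 := cip cA cw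
  have c3 := cip cw' cw'
  have c4 := cip cw' (continuous_const (y := e))
  have c5 := cip cA (continuous_const (y := e))
  have c6 := cip cw (continuous_const (y := e))
  have z1 := int_deriv_zero
    (f := fun x => τ x * τ x * ip (w' x) (w x))
    (f' := fun x => (deriv τ x * τ x + τ x * deriv τ x) * ip (w' x) (w x) +
      τ x * τ x * (ip (AA lam (U x) (w x)) (w x) + ip (w' x) (w' x)))
    (fun x => ((dτ x).mul (dτ x)).mul (hasDerivAt_ip (hw' x) (hw x))) (by fun_prop)
    ((hτc.mul_right).mul_right) (((hτ'c.mul_right.add hτc.mul_right).mul_right).add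
      hτc.mul_right.mul_right)
  have i1 : Integrable (fun x => (deriv τ x * τ x + τ x * deriv τ x) * ip (w' x) (w x) +
      τ x * τ x * (ip (AA lam (U x) (w x)) (w x) + ip (w' x) (w' x))) :=
    Continuous.integrable_of_hasCompactSupport (by fun_prop)
     (((hτ'c.mul_right.add hτc.mul_right).mul_right).add hτc.mul_right.mul_right)
  have z2 := int_deriv_zero
    (f := fun x => τ x * ζ x * ip (w' x) e)
    (f' := fun x => (deriv τ x * ζ x + τ x * deriv ζ x) * ip (w' x) e +
      τ x * ζ x * (ip (AA lam (U x) (w x)) e + ip (w' x) 0))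
    (fun x => ((dτ x).mul (dζ x)).mul (hasDerivAt_ip (hw' x) (hasDerivAt_const x e)))
    (by simp only [ip, zero_re, zero_im, mul_zero, add_zero]; simp only [ip] at c4 c5; fun_prop)
    ((hτc.mul_right).mul_right) (((hτ'c.mul_right.add hτc.mul_right).mul_right).add
      hτc.mul_right.mul_right)
  have i2 : Integrable (fun x => (deriv τ x * ζ x + τ x * deriv ζ x) * ip (w' x) e +
      τ x * ζ x * (ip (AA lam (U x) (w x)) e + ip (w' x) 0)) :=
    Continuous.integrable_of_hasCompactSupport
     (by simp only [ip, zero_re, zero_im, mul_zero, add_zero]; simp only [ip] at c4 c5; fun_prop)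
     (((hτ'c.mul_right.add hτc.mul_right).mul_right).add hτc.mul_right.mul_right)
  have i3 : Integrable (fun x => deriv τ x ^ 2 * ‖w x‖ ^ 2) :=
    Continuous.integrable_of_hasCompactSupport (by fun_prop)
      (by
        have : HasCompactSupport (fun x => deriv τ x * (deriv τ x * ‖w x‖ ^ 2)) := hτ'c.mul_right
        simpa only [sq, mul_assoc] using this)
  have i4 : Integrable (fun x => deriv τ x * (ip (w x) e * deriv ζ x - ip (w' x) e * ζ x)) :=
    Continuous.integrable_of_hasCompactSupport (by fun_prop) hτ'c.mul_right
  have i5 : Integrable (fun x => qd lam (U x) (ζ x * e) (deriv ζ x * e)) := by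
    refine Continuous.integrable_of_hasCompactSupport
      (qd_continuous hU (by fun_prop) (by fun_prop)) ?_
    refine hζc.mono' ?_
    intro x hx
    by_contra hn
    have h2 : ζ x = 0 := image_eq_zero_of_notMem_tsupport hn
    have h3 : deriv ζ x = 0 := image_eq_zero_of_notMem_tsupport
      (fun hh => hn (closure_minimal (support_deriv_subset) (isClosed_tsupport ζ) hh))
    exact hx (by simp [qd, h2, h3, ip])
  have key : ∀ x, qd lam (U x) (τ x * w x + (δ * ζ x : ℝ) * e)
      (deriv τ x * w x + τ x * w' x + (δ * deriv ζ x : ℝ) * e) =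
      deriv τ x ^ 2 * ‖w x‖ ^ 2 +
      (2 * δ) * (deriv τ x * (ip (w x) e * deriv ζ x - ip (w' x) e * ζ x)) +
      δ ^ 2 * qd lam (U x) (ζ x * e) (deriv ζ x * e) +
      ((deriv τ x * τ x + τ x * deriv τ x) * ip (w' x) (w x) +
      τ x * τ x * (ip (AA lam (U x) (w x)) (w x) + ip (w' x) (w' x))) +
      (2 * δ) * ((deriv τ x * ζ x + τ x * deriv ζ x) * ip (w' x) e +
      τ x * ζ x * (ip (AA lam (U x) (w x)) e + ip (w' x) 0)) := by
    intro x
    simp only [qd, AA, ip, normSq_eq, add_re, add_im, mul_re, mul_im, ofReal_re, ofReal_im,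
      zero_re, zero_im, ofReal_mul]
    ring
  simp only [key]
  rw [int_five (2 * δ) (δ ^ 2) i3 i4 i5 i1 i2, z1, z2]
  ring

/-- The truncated step: it climbs from `0` to `1` on `[0, ε]`, and goes back to `0` on
`[1/ε, 2/ε]`. -/
def tau (ε : ℝ) (x : ℝ) : ℝ := TT (x / ε) * TT (2 - ε * x)

/-- A cut-off equal to `1` on `[0, 1]` and supported in `[-1, 2]`. -/
def zet (x : ℝ) : ℝ := TT (x + 1) * TT (2 - x)

lemma tau_smooth (ε : ℝ) : ContDiff ℝ (⊤ : ℕ∞) (tau ε) :=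
  (TT_smooth.comp (by fun_prop)).mul (TT_smooth.comp (by fun_prop))

lemma zet_smooth : ContDiff ℝ (⊤ : ℕ∞) zet :=
  (TT_smooth.comp (by fun_prop)).mul (TT_smooth.comp (by fun_prop))

lemma deriv_tau (ε x : ℝ) : deriv (tau ε) x =
    deriv TT (x / ε) / ε * TT (2 - ε * x) - ε * (TT (x / ε) * deriv TT (2 - ε * x)) := by
  have h1 : HasDerivAt (fun x => TT (x / ε)) (deriv TT (x / ε) * (1 / ε)) x :=
    (TT_hasDerivAt _).comp x ((hasDerivAt_id x).div_const ε)
  have h2 : HasDerivAt (fun x => TT (2 - ε * x)) (deriv TT (2 - ε * x) * (-(ε * 1))) x :=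
    (TT_hasDerivAt _).comp x (((hasDerivAt_id x).const_mul ε).const_sub 2)
  have h3 : HasDerivAt (tau ε) _ x := h1.mul h2
  rw [h3.deriv]
  ring

lemma tau_supp {ε : ℝ} (hε : 0 < ε) : HasCompactSupport (tau ε) :=
  HasCompactSupport.of_support_subset_isCompact (isCompact_Icc (a := 0) (b := 2 / ε)) (by
    intro x hx
    by_contra hn
    rw [Set.mem_Icc, not_and_or, not_le, not_le] at hn
    refine hx ?_
    unfold tau
    rcases hn with hn | hn
    · rw [TT, Real.smoothTransition.zero_of_nonpos (div_nonpos_of_nonpos_of_nonneg hn.le hε.le),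
        zero_mul]
    · rw [div_lt_iff₀ hε] at hn
      rw [TT, Real.smoothTransition.zero_of_nonpos (x := 2 - ε * x) (by linarith), mul_zero])

lemma zet_supp : HasCompactSupport zet :=
  HasCompactSupport.of_support_subset_isCompact (isCompact_Icc (a := -1) (b := (2:ℝ))) (by
    intro x hx
    by_contra hn
    rw [Set.mem_Icc, not_and_or, not_le, not_le] at hn
    refine hx ?_
    unfold zet
    rcases hn with hn | hn
    · rw [TT, Real.smoothTransition.zero_of_nonpos (by linarith), zero_mul]
    · rw [TT, Real.smoothTransition.zero_of_nonpos (x := 2 - x) (by linarith), mul_zero])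

lemma zet_nonneg (x : ℝ) : 0 ≤ zet x :=
  mul_nonneg (Real.smoothTransition.nonneg _) (Real.smoothTransition.nonneg _)

lemma zet_le_one (x : ℝ) : zet x ≤ 1 :=
  mul_le_one₀ (Real.smoothTransition.le_one _) (Real.smoothTransition.nonneg _)
    (Real.smoothTransition.le_one _)

lemma zet_one {x : ℝ} (h0 : 0 ≤ x) (h1 : x ≤ 1) : zet x = 1 := by
  unfold zet
  rw [TT, Real.smoothTransition.one_of_one_le (by linarith),
    Real.smoothTransition.one_of_one_le (by linarith), mul_one]

lemma zet_zero {x : ℝ} (h : x ≤ -1 ∨ 2 ≤ x) : zet x = 0 := by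
  unfold zet
  rcases h with h | h
  · rw [TT, Real.smoothTransition.zero_of_nonpos (by linarith), zero_mul]
  · rw [TT, Real.smoothTransition.zero_of_nonpos (x := 2 - x) (by linarith), mul_zero]

lemma deriv_tau_left {ε x : ℝ} (hε : 0 < ε) (hx : x ≤ 0) : deriv (tau ε) x = 0 := by
  have h : x / ε ≤ 0 := div_nonpos_of_nonpos_of_nonneg hx hε.le
  rw [deriv_tau, TT_deriv0 (Or.inl h), TT, Real.smoothTransition.zero_of_nonpos h]
  simp

lemma deriv_tau_step {ε x : ℝ} (hε : 0 < ε) (hx : x ≤ 1 / ε) :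
    deriv (tau ε) x = deriv TT (x / ε) / ε := by
  have h : 1 ≤ 2 - ε * x := by
    rw [le_div_iff₀ hε] at hx; linarith
  rw [deriv_tau, TT_deriv0 (x := 2 - ε * x) (Or.inr h), TT, Real.smoothTransition.one_of_one_le h]
  simp

lemma deriv_tau_right {ε x : ℝ} (hε : 0 < ε) (hx : ε ≤ x) :
    deriv (tau ε) x = - ε * deriv TT (2 - ε * x) := by
  have h : 1 ≤ x / ε := by rw [le_div_iff₀ hε]; linarith
  rw [deriv_tau, TT_deriv0 (Or.inr h), TT, Real.smoothTransition.one_of_one_le h]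
  simp

lemma int_step {ε : ℝ} (hε : 0 < ε) : Integrable (fun x => deriv TT (x / ε) / ε) ∧
    ∫ x, deriv TT (x / ε) / ε = 1 := by
  have hd : ∀ x, HasDerivAt (fun x => TT (x / ε)) (deriv TT (x / ε) / ε) x := fun x =>
    ((TT_hasDerivAt _).comp x ((hasDerivAt_id x).div_const ε)).congr_deriv
      (by simp only [id]; ring)
  have hc : Continuous (deriv TT) := TT_smooth.continuous_deriv (by simp)
  have hi : Integrable (fun x => deriv TT (x / ε) / ε) := by
    refine Continuous.integrable_of_hasCompactSupport (by fun_prop) ?_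
    refine HasCompactSupport.of_support_subset_isCompact (isCompact_Icc (a := 0) (b := ε)) ?_
    intro x hx
    by_contra hn
    rw [Set.mem_Icc, not_and_or, not_le, not_le] at hn
    refine hx ?_
    show deriv TT (x / ε) / ε = 0
    rw [TT_deriv0, zero_div]
    rcases hn with hn | hn
    · exact Or.inl (div_nonpos_of_nonpos_of_nonneg hn.le hε.le)
    · right; rw [le_div_iff₀ hε]; linarith
  refine ⟨hi, ?_⟩
  have := integral_of_hasDerivAt_of_tendsto (m := (0:ℝ)) (n := 1) hd hi
    (tendsto_const_nhds.congr' (by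
      filter_upwards [eventually_le_atBot (0:ℝ)] with x hx
      exact (Real.smoothTransition.zero_of_nonpos
        (div_nonpos_of_nonpos_of_nonneg hx hε.le)).symm))
    (tendsto_const_nhds.congr' (by
      filter_upwards [eventually_ge_atTop ε] with x hx
      exact (Real.smoothTransition.one_of_one_le (by rw [le_div_iff₀ hε]; linarith)).symm))
  rw [this]; norm_num

set_option maxHeartbeats 1000000 in
/-- A bounded element of the kernel with a simple zero yields a negative direction: glue it to
`0` on a half line and round off the corner. -/
lemma oned_neg {lam : ℝ} {U w w' : ℝ → ℂ} (hU : Continuous U) (hws : ContDiff ℝ (⊤ : ℕ∞) w)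
    (hw : ∀ x, HasDerivAt w (w' x) x) (hw' : ∀ x, HasDerivAt w' (AA lam (U x) (w x)) x)
    {W W' : ℝ} (hW : ∀ x, ‖w x‖ ≤ W) (hW' : ∀ x, ‖w' x‖ ≤ W') (h0 : w 0 = 0) (h1 : w' 0 ≠ 0) :
    ∃ h : ℝ → ℂ, ContDiff ℝ (⊤ : ℕ∞) h ∧ HasCompactSupport h ∧
      ∫ x, qd lam (U x) (h x) (deriv h x) < 0 := by
  obtain ⟨K, hK0, hK⟩ := TT_deriv_bdd
  have cw' : Continuous w' := continuous_iff_continuousAt.mpr fun x => (hw' x).continuousAt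
  set e := w' 0 with he
  have he0 : 0 < ‖e‖ ^ 2 := by positivity
  set Q := ∫ x, qd lam (U x) (zet x * e) (deriv zet x * e) with hQ
  obtain ⟨δ, hδ, hδQ⟩ : ∃ δ : ℝ, 0 < δ ∧ δ * Q < ‖e‖ ^ 2 / 2 := by
    refine ⟨‖e‖ ^ 2 / (4 * (|Q| + 1)), by positivity, ?_⟩
    rw [div_mul_eq_mul_div, div_lt_iff₀ (by positivity)]
    nlinarith [le_abs_self Q, abs_nonneg Q]
  set Cc := K ^ 2 * W' ^ 2 + 2 * (K ^ 2 * W ^ 2) with hCc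
  have hCc0 : 0 ≤ Cc := by positivity
  have ev1 : ∀ᶠ x in 𝓝 (0:ℝ), ‖e‖ ^ 2 / 2 < ip (w' x) e := by
    have : Continuous fun x => ip (w' x) e := ip_continuous.comp (cw'.prodMk continuous_const)
    refine this.continuousAt.eventually (lt_mem_nhds ?_)
    have : ip (w' 0) e = ‖e‖ ^ 2 := by rw [normSq_eq, ← he]; unfold ip; ring
    show ‖e‖ ^ 2 / 2 < ip (w' 0) e
    rw [this]; linarith
  obtain ⟨r, hr, hr'⟩ := Metric.eventually_nhds_iff.mp ev1
  obtain ⟨ε, hε, hεr, hε2, hεC⟩ : ∃ ε : ℝ, 0 < ε ∧ ε < r ∧ ε ≤ 1 / 2 ∧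
      ε * Cc < δ * (‖e‖ ^ 2 / 2) := by
    refine ⟨min (min (r / 2) (1 / 2)) (δ * (‖e‖ ^ 2 / 2) / (Cc + 1)), by positivity, ?_, ?_, ?_⟩
    · exact ((min_le_left _ _).trans (min_le_left _ _)).trans_lt (by linarith)
    · exact (min_le_left _ _).trans (min_le_right _ _)
    · have h3 : 0 < δ * (‖e‖ ^ 2 / 2) := by positivity
      refine (mul_le_mul_of_nonneg_right (min_le_right _ _) hCc0).trans_lt ?_
      rw [div_mul_eq_mul_div, div_lt_iff₀ (by positivity)]
      nlinarith
  have hε1 : 2 ≤ 1 / ε := by rw [le_div_iff₀ hε]; linarith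
  have hτ := tau_smooth ε
  have hτc := tau_supp hε
  have cτ' : Continuous (deriv (tau ε)) := hτ.continuous_deriv (by simp)
  have cζ' : Continuous (deriv zet) := zet_smooth.continuous_deriv (by simp)
  have cζ := zet_smooth.continuous
  have cw := hws.continuous
  -- the square of the commutator term
  have b1 : ∫ x, deriv (tau ε) x ^ 2 * ‖w x‖ ^ 2 ≤ ε * Cc := by
    have hle : ∀ x, deriv (tau ε) x ^ 2 * ‖w x‖ ^ 2 ≤
        (Set.Icc 0 ε).indicator (fun _ => K ^ 2 * W' ^ 2) x +
        (Set.Icc 0 (2 / ε)).indicator (fun _ => ε ^ 2 * (K ^ 2 * W ^ 2)) x := by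
      intro x
      have p1 : 0 ≤ (Set.Icc 0 ε).indicator (fun _ => K ^ 2 * W' ^ 2) x :=
        Set.indicator_nonneg (fun _ _ => by positivity) _
      have p2 : 0 ≤ (Set.Icc 0 (2 / ε)).indicator (fun _ => ε ^ 2 * (K ^ 2 * W ^ 2)) x :=
        Set.indicator_nonneg (fun _ _ => by positivity) _
      rcases le_total x 0 with hx | hx
      · rw [deriv_tau_left hε hx]; simpa using add_nonneg p1 p2
      rcases le_total x ε with hx' | hx'
      · have h2 : ‖w x‖ ≤ W' * x := by
          have := convex_univ.norm_image_sub_le_of_norm_hasDerivWithin_le (f := w) (f' := w')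
            (C := W') (fun y _ => (hw y).hasDerivWithinAt) (fun y _ => hW' y)
            (Set.mem_univ 0) (Set.mem_univ x)
          simpa [h0, abs_of_nonneg hx] using this
        rw [deriv_tau_step hε (by linarith), Set.indicator_of_mem (Set.mem_Icc.mpr ⟨hx, hx'⟩)]
        have h3 : (deriv TT (x / ε) / ε) ^ 2 ≤ (K / ε) ^ 2 := by
          rw [← sq_abs, abs_div, abs_of_pos hε]
          exact pow_le_pow_left₀ (by positivity) (div_le_div_of_nonneg_right (hK _) hε.le) 2
        have hW'0 : 0 ≤ W' := (norm_nonneg _).trans (hW' 0)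
        have h4 : ‖w x‖ ^ 2 ≤ (W' * ε) ^ 2 := pow_le_pow_left₀ (norm_nonneg _)
          (h2.trans (mul_le_mul_of_nonneg_left hx' hW'0)) 2
        have h5 := mul_le_mul h3 h4 (sq_nonneg _) (sq_nonneg _)
        have h6 : (K / ε) ^ 2 * (W' * ε) ^ 2 = K ^ 2 * W' ^ 2 := by field_simp
        linarith
      · rw [deriv_tau_right hε hx']
        rcases le_total (2 / ε) x with hx2 | hx2
        · rw [TT_deriv0 (x := 2 - ε * x) (Or.inl (by
            rw [div_le_iff₀ hε] at hx2; linarith))]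
          simpa using add_nonneg p1 p2
        rw [Set.indicator_of_mem (s := Set.Icc 0 (2 / ε)) (Set.mem_Icc.mpr ⟨hx, hx2⟩)]
        have h3 : deriv TT (2 - ε * x) ^ 2 ≤ K ^ 2 := by
          rw [← sq_abs]; exact pow_le_pow_left₀ (abs_nonneg _) (hK _) 2
        have h4 : ‖w x‖ ^ 2 ≤ W ^ 2 := pow_le_pow_left₀ (norm_nonneg _) (hW x) 2
        have h5 := mul_le_mul h3 h4 (sq_nonneg _) (sq_nonneg _)
        have h6 := mul_le_mul_of_nonneg_left h5 (sq_nonneg ε)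
        nlinarith
    have f1 : Integrable ((Set.Icc 0 ε).indicator (fun _ => K ^ 2 * W' ^ 2)) :=
      (integrable_indicator_iff measurableSet_Icc).mpr continuous_const.integrableOn_Icc
    have f2 : Integrable ((Set.Icc 0 (2 / ε)).indicator (fun _ => ε ^ 2 * (K ^ 2 * W ^ 2))) :=
      (integrable_indicator_iff measurableSet_Icc).mpr continuous_const.integrableOn_Icc
    have f0 : Integrable (fun x => deriv (tau ε) x ^ 2 * ‖w x‖ ^ 2) := by
      refine Continuous.integrable_of_hasCompactSupport (by fun_prop) ?_
      have : HasCompactSupport (fun x => deriv (tau ε) x * (deriv (tau ε) x * ‖w x‖ ^ 2)) :=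
        hτc.deriv.mul_right
      simpa only [sq, mul_assoc] using this
    refine (integral_mono f0 (f1.add f2) hle).trans ?_
    rw [Pi.add_def, integral_add f1 f2, integral_indicator_const _ measurableSet_Icc,
      integral_indicator_const _ measurableSet_Icc]
    simp only [Measure.real, Real.volume_Icc, sub_zero, smul_eq_mul]
    rw [ENNReal.toReal_ofReal hε.le, ENNReal.toReal_ofReal (by positivity), hCc]
    refine le_of_eq ?_
    field_simp
  -- the corner contributes a definite negative amount
  obtain ⟨g1, g2⟩ := int_step hε
  have b2 : ∫ x, deriv (tau ε) x * (ip (w x) e * deriv zet x - ip (w' x) e * zet x) ≤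
      -(‖e‖ ^ 2 / 2) := by
    have c4 : Continuous fun x => ip (w' x) e := ip_continuous.comp (cw'.prodMk continuous_const)
    have c6 : Continuous fun x => ip (w x) e := ip_continuous.comp (cw.prodMk continuous_const)
    have i4 : Integrable (fun x => deriv (tau ε) x *
        (ip (w x) e * deriv zet x - ip (w' x) e * zet x)) :=
      Continuous.integrable_of_hasCompactSupport (by fun_prop) hτc.deriv.mul_right
    have : -(‖e‖ ^ 2 / 2) = ∫ x, -(‖e‖ ^ 2 / 2) * (deriv TT (x / ε) / ε) := by
      rw [integral_const_mul, g2, mul_one]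
    rw [this]
    refine integral_mono i4 (g1.const_mul _) fun x => ?_
    show deriv (tau ε) x * (ip (w x) e * deriv zet x - ip (w' x) e * zet x) ≤
      -(‖e‖ ^ 2 / 2) * (deriv TT (x / ε) / ε)
    rcases le_total x 0 with hx | hx
    · rw [deriv_tau_left hε hx, TT_deriv0 (Or.inl (div_nonpos_of_nonpos_of_nonneg hx hε.le))]
      simp
    rcases le_total x ε with hx' | hx'
    · have z1 := zet_one hx (by linarith)
      rw [deriv_flat zet_nonneg zet_le_one (Or.inr z1), z1, deriv_tau_step hε (by linarith)]
      have h3 : 0 ≤ deriv TT (x / ε) / ε :=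
        div_nonneg Real.smoothTransition.monotone.deriv_nonneg hε.le
      have h4 : ‖e‖ ^ 2 / 2 < ip (w' x) e := hr' (by
        rw [Real.dist_eq, sub_zero, abs_of_nonneg hx]; linarith)
      nlinarith
    · have h2 : 1 ≤ x / ε := by rw [le_div_iff₀ hε]; linarith
      rw [TT_deriv0 (Or.inr h2)]
      rcases le_total x (1 / ε) with hx2 | hx2
      · rw [deriv_tau_step hε hx2, TT_deriv0 (Or.inr h2)]; simp
      · have z0 := zet_zero (x := x) (Or.inr (by linarith))
        rw [deriv_flat zet_nonneg zet_le_one (Or.inl z0), z0]; simp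
  refine ⟨fun x => tau ε x * w x + (δ * zet x : ℝ) * e, ?_, ?_, ?_⟩
  · have k1 : ContDiff ℝ (⊤ : ℕ∞) (fun x => (tau ε x : ℂ)) := ofRealCLM.contDiff.comp hτ
    have k2 : ContDiff ℝ (⊤ : ℕ∞) (fun x => ((δ * zet x : ℝ) : ℂ)) :=
      ofRealCLM.contDiff.comp (contDiff_const.mul zet_smooth)
    exact (k1.mul hws).add (k2.mul contDiff_const)
  · have k1 : HasCompactSupport (fun x => (tau ε x : ℂ)) := hτc.comp_left ofReal_zero
    have k2 : HasCompactSupport (fun x => ((δ * zet x : ℝ) : ℂ)) :=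
      (zet_supp.mul_left (f := fun _ => δ)).comp_left ofReal_zero
    exact k1.mul_right.add k2.mul_right
  · have hd : ∀ x, deriv (fun x => tau ε x * w x + (δ * zet x : ℝ) * e) x =
        deriv (tau ε) x * w x + tau ε x * w' x + (δ * deriv zet x : ℝ) * e := by
      intro x
      have h2 := (hτ.differentiable (by simp) x).hasDerivAt.ofReal_comp
      have h3 := ((zet_smooth.differentiable (by simp) x).hasDerivAt.const_mul δ).ofReal_comp
      exact ((h2.mul (hw x)).add (h3.mul_const e)).deriv
    simp only [hd]
    rw [qd_expand hU hw hw' hτ zet_smooth hτc zet_supp e δ]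
    have : δ ^ 2 * Q < δ * (‖e‖ ^ 2 / 2) := by
      rw [sq, mul_assoc]; exact mul_lt_mul_of_pos_left hδQ hδ
    have h8 := mul_le_mul_of_nonneg_left b2 (show 0 ≤ 2 * δ by linarith)
    rw [← hQ]
    nlinarith

/-- Uniqueness for the linearised equation. -/
lemma lin_unique {lam : ℝ} {U w w' : ℝ → ℂ} {M : ℝ} (hM : ∀ x, ‖U x‖ ≤ M)
    (hw : ∀ x, HasDerivAt w (w' x) x) (hw' : ∀ x, HasDerivAt w' (AA lam (U x) (w x)) x)
    (h0 : w 0 = 0) (h1 : w' 0 = 0) : ∀ x, w x = 0 := by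
  set L := 1 + |lam| + 3 * M ^ 2 with hL
  set g := fun x => ip (w x) (w x) + ip (w' x) (w' x) with hg
  set g' := fun x => (ip (w' x) (w x) + ip (w x) (w' x)) +
      (ip (AA lam (U x) (w x)) (w' x) + ip (w' x) (AA lam (U x) (w x))) with hg'
  have hd : ∀ x, HasDerivAt g (g' x) x := fun x =>
    (hasDerivAt_ip (hw x) (hw x)).add (hasDerivAt_ip (hw' x) (hw' x))
  have ipn : ∀ a b : ℂ, |ip a b| ≤ ‖a‖ * ‖b‖ := by
    intro a b
    have : ip a b = (a * (starRingEnd ℂ) b).re := by simp [ip, mul_re]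
    rw [this]
    refine (abs_re_le_norm _).trans ?_
    rw [norm_mul, RCLike.norm_conj]
  have ipp : ∀ a : ℂ, ip a a = ‖a‖ ^ 2 := fun a => by rw [normSq_eq]; unfold ip; ring
  have hA : ∀ x, ‖AA lam (U x) (w x)‖ ≤ (|lam| + 3 * M ^ 2) * ‖w x‖ := by
    intro x
    unfold AA
    have hU2 : ‖U x‖ ^ 2 ≤ M ^ 2 := pow_le_pow_left₀ (norm_nonneg _) (hM x) 2
    have t1 : |(-(lam - ‖U x‖ ^ 2))| ≤ |lam| + ‖U x‖ ^ 2 := by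
      rw [abs_neg]; refine (abs_sub _ _).trans ?_; rw [abs_of_nonneg (sq_nonneg ‖U x‖)]
    refine (norm_add_le _ _).trans ?_
    rw [norm_mul, norm_mul, norm_real, norm_real, Real.norm_eq_abs, Real.norm_eq_abs, abs_mul,
      abs_two]
    have t2 := mul_le_mul_of_nonneg_right t1 (norm_nonneg (w x))
    have t3 := mul_le_mul_of_nonneg_right (ipn (w x) (U x)) (norm_nonneg (U x))
    have t4 := mul_le_mul_of_nonneg_right hU2 (norm_nonneg (w x))
    nlinarith
  have hle : ∀ x, |g' x| ≤ L * g x := by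
    intro x
    have a1 := ipn (w x) (w' x)
    have a2 : ip (w' x) (w x) = ip (w x) (w' x) := by unfold ip; ring
    have a3 := (ipn (AA lam (U x) (w x)) (w' x)).trans
      (mul_le_mul_of_nonneg_right (hA x) (norm_nonneg (w' x)))
    have a4 : ip (w' x) (AA lam (U x) (w x)) = ip (AA lam (U x) (w x)) (w' x) := by
      unfold ip; ring
    simp only [hg, hg']
    rw [a2, a4, ipp, ipp]
    have a5 : |(ip (w x) (w' x) + ip (w x) (w' x)) + (ip (AA lam (U x) (w x)) (w' x) +
      ip (AA lam (U x) (w x)) (w' x))| ≤ 2 * |ip (w x) (w' x)| +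
        2 * |ip (AA lam (U x) (w x)) (w' x)| := by
      rw [abs_le]
      constructor <;> linarith [neg_abs_le (ip (w x) (w' x)), le_abs_self (ip (w x) (w' x)),
        neg_abs_le (ip (AA lam (U x) (w x)) (w' x)), le_abs_self (ip (AA lam (U x) (w x)) (w' x))]
    have a6 : 2 * ‖w x‖ * ‖w' x‖ ≤ ‖w x‖ ^ 2 + ‖w' x‖ ^ 2 := two_mul_le_add_sq _ _
    have a7 : 0 ≤ |lam| + 3 * M ^ 2 := by positivity
    have a8 := mul_le_mul_of_nonneg_left a6 a7
    rw [hL]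
    nlinarith
  have hg0 : g 0 = 0 := by simp [hg, h0, h1, ip]
  have hgn : ∀ x, 0 ≤ g x := fun x => by simp only [hg]; rw [ipp, ipp]; positivity
  have dE : ∀ (s x : ℝ), HasDerivAt (fun x => Real.exp (s * x) * g x)
      (Real.exp (s * x) * (s * g x + g' x)) x := fun s x =>
    ((((hasDerivAt_id x).const_mul s).exp).mul (hd x)).congr_deriv (by simp; ring)
  have hz : ∀ x, g x = 0 := by
    intro x
    refine le_antisymm ?_ (hgn x)
    rcases le_total 0 x with hx | hx
    · have : Antitone fun x => Real.exp (-L * x) * g x :=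
        antitone_of_hasDerivAt_nonpos (dE (-L)) fun y => by
          refine mul_nonpos_of_nonneg_of_nonpos (Real.exp_pos _).le ?_
          linarith [le_abs_self (g' y), hle y]
      have := this hx
      simp only [mul_zero, Real.exp_zero, hg0] at this
      exact nonpos_of_mul_nonpos_right this (Real.exp_pos _)
    · have : Monotone fun x => Real.exp (L * x) * g x :=
        monotone_of_hasDerivAt_nonneg (dE L) fun y => by
          refine mul_nonneg (Real.exp_pos _).le ?_
          linarith [neg_abs_le (g' y), hle y]
      have := this hx
      simp only [mul_zero, Real.exp_zero, hg0] at this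
      exact nonpos_of_mul_nonpos_right this (Real.exp_pos _)
  intro x
  have := hz x
  simp only [hg] at this
  rw [ipp, ipp] at this
  have h5 : ‖w x‖ ^ 2 = 0 := by linarith [sq_nonneg ‖w x‖, sq_nonneg ‖w' x‖]
  simpa using h5

/-- Dilation makes the Dirichlet integral negligible. -/
lemma dilate {μ : ℝ} (hμ : 0 < μ) {G : ℝ → ℝ} (hG : ContDiff ℝ (⊤ : ℕ∞) G)
    (hGc : HasCompactSupport G) (hG0 : ∃ x, G x ≠ 0) : ∃ M : ℝ, 0 < M ∧
    ∫ x, (deriv G (x / M) / M) ^ 2 < μ * ∫ x, G (x / M) ^ 2 := by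
  have hp : 0 < ∫ x, G x ^ 2 := by
    obtain ⟨x, hx⟩ := hG0
    refine Continuous.integral_pos_of_hasCompactSupport_nonneg_nonzero (x := x)
      (hG.continuous.pow 2) ?_ (fun x => sq_nonneg _) (by positivity)
    have : HasCompactSupport (fun x => G x * G x) := hGc.mul_right
    simpa only [sq] using this
  set a := ∫ x, deriv G x ^ 2 with ha
  have ha0 : 0 ≤ a := integral_nonneg fun x => sq_nonneg _
  set b := ∫ x, G x ^ 2 with hb
  set M := 1 + a / (μ * b) with hM
  have hMp : 1 ≤ M := by have : 0 ≤ a / (μ * b) := by positivity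
                         linarith
  have hM0 : 0 < M := by linarith
  refine ⟨M, hM0, ?_⟩
  have e1 : ∫ x, (deriv G (x / M) / M) ^ 2 = a / M := by
    have : ∀ x, (deriv G (x / M) / M) ^ 2 = 1 / M ^ 2 * (fun y => deriv G y ^ 2) (x / M) :=
      fun x => by field_simp
    simp only [this]
    rw [integral_const_mul, Measure.integral_comp_div (fun y => deriv G y ^ 2), abs_of_pos hM0,
      smul_eq_mul, ← ha]
    field_simp
  have e2 : ∫ x, G (x / M) ^ 2 = M * b := by
    rw [Measure.integral_comp_div (fun y => G y ^ 2), abs_of_pos hM0, smul_eq_mul]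
  rw [e1, e2, div_lt_iff₀ hM0]
  have h1 : a < μ * b * M := by
    rw [hM]; field_simp; nlinarith [mul_pos hμ hp]
  have h2 : μ * b * M ≤ μ * b * M * M := le_mul_of_one_le_right (by positivity) hMp
  linarith

lemma zet_deriv_ne : ∃ x, deriv zet x ≠ 0 := by
  by_contra! h
  have := is_const_of_deriv_eq_zero (zet_smooth.differentiable (by simp)) h 0 2
  rw [zet_one le_rfl (by norm_num), zet_zero (Or.inr le_rfl)] at this
  norm_num at this

lemma ofReal_smooth {f : ℝ → ℝ} (hf : ContDiff ℝ (⊤ : ℕ∞) f) :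
    ContDiff ℝ (⊤ : ℕ∞) (fun x => (f x : ℂ)) := ofRealCLM.contDiff.comp hf

lemma deriv_smooth {E : Type*} [NormedAddCommGroup E] [NormedSpace ℝ E] {f : ℝ → E}
    (hf : ContDiff ℝ (⊤ : ℕ∞) f) : ContDiff ℝ (⊤ : ℕ∞) (deriv f) :=
  (contDiff_infty_iff_deriv.mp hf).2

lemma comp_div_supp {G : ℝ → ℝ} (hGc : HasCompactSupport G) {M : ℝ} (hM : 0 < M) :
    HasCompactSupport (fun x => G (x / M)) := by
  have := hGc.comp_homeomorph (Homeomorph.mulRight₀ M⁻¹ (by positivity))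
  simp only [div_eq_mul_inv]
  exact this

/-- Instability of the constant `0`. -/
lemma zero_neg {lam : ℝ} (hl : 0 < lam) :
    ∃ h : ℝ → ℂ, ContDiff ℝ (⊤ : ℕ∞) h ∧ HasCompactSupport h ∧
      ∫ x, qd lam 0 (h x) (deriv h x) < 0 := by
  obtain ⟨M, hM, hlt⟩ := dilate hl zet_smooth zet_supp ⟨0, by
    rw [zet_one le_rfl (by norm_num)]; norm_num⟩
  have hz : ContDiff ℝ (⊤ : ℕ∞) (fun x => zet (x / M)) := zet_smooth.comp (by fun_prop)
  have hc := comp_div_supp zet_supp hM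
  have hd : ∀ x, HasDerivAt (fun x => zet (x / M)) (deriv zet (x / M) / M) x := fun x =>
    (((zet_smooth.differentiable (by simp) _).hasDerivAt).comp x
      ((hasDerivAt_id x).div_const M)).congr_deriv (by simp [div_eq_mul_inv])
  refine ⟨fun x => (zet (x / M) : ℂ), ofReal_smooth hz, hc.comp_left ofReal_zero, ?_⟩
  have e : ∀ x, qd lam 0 (zet (x / M) : ℂ) (deriv (fun x => (zet (x / M) : ℂ)) x) =
      (deriv zet (x / M) / M) ^ 2 - lam * zet (x / M) ^ 2 := by
    intro x
    rw [(hd x).ofReal_comp.deriv]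
    simp only [qd, ip, norm_real, Real.norm_eq_abs, sq_abs, zero_re, zero_im, norm_zero]
    ring
  simp only [e]
  have h2 : Continuous (deriv zet) := zet_smooth.continuous_deriv (by simp)
  have h3 := zet_smooth.continuous
  rw [integral_sub, integral_const_mul]
  · linarith
  · refine Continuous.integrable_of_hasCompactSupport (by fun_prop) ?_
    have : HasCompactSupport (fun x => deriv zet (x / M) * (1 / M * (deriv zet (x / M) / M))) :=
      (comp_div_supp zet_supp.deriv hM).mul_right
    have e : (fun x => (deriv zet (x / M) / M) ^ 2) =
        fun x => deriv zet (x / M) * (1 / M * (deriv zet (x / M) / M)) := by funext x; ring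
    rw [e]; exact this
  · refine Continuous.integrable_of_hasCompactSupport (by fun_prop) ?_
    have : HasCompactSupport (fun x => zet (x / M) * (lam * zet (x / M))) := hc.mul_right
    have e : (fun x => lam * zet (x / M) ^ 2) =
        fun x => zet (x / M) * (lam * zet (x / M)) := by funext x; ring
    rw [e]; exact this

/-- Eckhaus instability: a plane wave of square amplitude `A < 2λ/3` is destabilised by a
modulation of large wavelength. -/
lemma wave_neg {lam κ A : ℝ} {U : ℝ → ℂ} (hs : ContDiff ℝ (⊤ : ℕ∞) U)
    (hU : ∀ x, HasDerivAt U (I * κ * U x) x) (hA : ∀ x, ‖U x‖ ^ 2 = A) (hA0 : 0 < A)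
    (hκ : κ ^ 2 = lam - A) (hlt : A < 2 * lam / 3) :
    ∃ h : ℝ → ℂ, ContDiff ℝ (⊤ : ℕ∞) h ∧ HasCompactSupport h ∧
      ∫ x, qd lam (U x) (h x) (deriv h x) < 0 := by
  obtain ⟨M, hM, hlt⟩ := dilate (μ := 4 * κ ^ 2 - 2 * A) (by rw [hκ]; linarith)
    (deriv_smooth zet_smooth) zet_supp.deriv zet_deriv_ne
  set F : ℝ → ℝ := fun x => M * zet (x / M) with hF
  set F1 : ℝ → ℝ := fun x => deriv zet (x / M) with hF1
  set F2 : ℝ → ℝ := fun x => deriv (deriv zet) (x / M) / M with hF2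
  have sF : ContDiff ℝ (⊤ : ℕ∞) F := contDiff_const.mul (zet_smooth.comp (by fun_prop))
  have sF1 : ContDiff ℝ (⊤ : ℕ∞) F1 := (deriv_smooth zet_smooth).comp (by fun_prop)
  have sF2 : ContDiff ℝ (⊤ : ℕ∞) F2 :=
    ((deriv_smooth (deriv_smooth zet_smooth)).comp (by fun_prop)).div_const M
  have dF : ∀ x, HasDerivAt F (F1 x) x := fun x =>
    ((((zet_smooth.differentiable (by simp) _).hasDerivAt).comp x
      ((hasDerivAt_id x).div_const M)).const_mul M).congr_deriv (by
        simp only [hF1, id]; field_simp)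
  have dF1 : ∀ x, HasDerivAt F1 (F2 x) x := fun x =>
    ((((deriv_smooth zet_smooth).differentiable (by simp) _).hasDerivAt).comp x
      ((hasDerivAt_id x).div_const M)).congr_deriv (by simp [hF2, div_eq_mul_inv])
  have cF : HasCompactSupport F := (comp_div_supp zet_supp hM).mul_left (f := fun _ => M)
  have cF1 : HasCompactSupport F1 := comp_div_supp zet_supp.deriv hM
  have cF2 : HasCompactSupport F2 := by
    have : HasCompactSupport (fun x => deriv (deriv zet) (x / M) * M⁻¹) :=
      (comp_div_supp zet_supp.deriv.deriv hM).mul_right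
    simpa only [hF2, div_eq_mul_inv] using this
  refine ⟨fun x => ((F1 x : ℂ) - (F x : ℂ) * (2 * I * κ)) * U x, ?_, ?_, ?_⟩
  · exact ((ofReal_smooth sF1).sub ((ofReal_smooth sF).mul contDiff_const)).mul hs
  · have k1 : HasCompactSupport (fun x => (F1 x : ℂ)) := cF1.comp_left ofReal_zero
    have k2 : HasCompactSupport (fun x => (F x : ℂ)) := cF.comp_left ofReal_zero
    exact (k1.sub k2.mul_right).mul_right
  · have hd : ∀ x, deriv (fun x => ((F1 x : ℂ) - (F x : ℂ) * (2 * I * κ)) * U x) x =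
        ((F2 x : ℂ) - (F1 x : ℂ) * (2 * I * κ)) * U x +
        ((F1 x : ℂ) - (F x : ℂ) * (2 * I * κ)) * (I * κ * U x) := fun x =>
      (((dF1 x).ofReal_comp.sub ((dF x).ofReal_comp.mul_const _)).mul (hU x)).deriv
    have e : ∀ x, qd lam (U x) (((F1 x : ℂ) - (F x : ℂ) * (2 * I * κ)) * U x)
        (deriv (fun x => ((F1 x : ℂ) - (F x : ℂ) * (2 * I * κ)) * U x) x) =
        (A * F2 x ^ 2 - A * (4 * κ ^ 2 - 2 * A) * F1 x ^ 2) +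
          A * 4 * κ ^ 2 * (F1 x * F1 x + F x * F2 x) := by
      intro x
      rw [hd]
      have h1 := hA x
      have h2 : lam = κ ^ 2 + A := by linarith
      rw [h2]
      simp only [qd, hA]
      have t1 : ((F2 x : ℂ) - (F1 x : ℂ) * (2 * I * κ)) * U x +
        ((F1 x : ℂ) - (F x : ℂ) * (2 * I * κ)) * (I * κ * U x) =
        (⟨F2 x + 2 * κ ^ 2 * F x, - κ * F1 x⟩ : ℂ) * U x := by
        have : (⟨F2 x + 2 * κ ^ 2 * F x, - κ * F1 x⟩ : ℂ) =
          ((F2 x + 2 * κ ^ 2 * F x : ℝ) : ℂ) + ((- κ * F1 x : ℝ) : ℂ) * I := by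
          apply Complex.ext
          · simp only [add_re, ofReal_re, mul_re, I_re, I_im, ofReal_im]; ring
          · simp only [add_im, ofReal_im, mul_im, I_re, I_im, ofReal_re]; ring
        rw [this]
        push_cast
        linear_combination (-2 * κ ^ 2 * F x * U x : ℂ) * I_sq
      have t2 : ((F1 x : ℂ) - (F x : ℂ) * (2 * I * κ)) = (⟨F1 x, - 2 * κ * F x⟩ : ℂ) := by
        apply Complex.ext <;> simp; ring
      have t3 : ip ((⟨F1 x, - 2 * κ * F x⟩ : ℂ) * U x) (U x) = F1 x * A := by
        rw [← h1, normSq_eq]; simp [ip]; ring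
      rw [t1, t2, t3, norm_mul, norm_mul, mul_pow, mul_pow, hA, normSq_eq, normSq_eq]
      simp only
      ring
    simp only [e]
    have c0 := sF.continuous
    have c1 := sF1.continuous
    have c2 := sF2.continuous
    have z := int_deriv_zero (f := fun x => F x * F1 x) (f' := fun x => F1 x * F1 x + F x * F2 x)
      (fun x => (dF x).mul (dF1 x)) (by fun_prop) cF.mul_right (cF1.mul_right.add cF.mul_right)
    have i1 : Integrable (fun x => F2 x ^ 2) := by
      refine Continuous.integrable_of_hasCompactSupport (by fun_prop) ?_
      have : HasCompactSupport (fun x => F2 x * F2 x) := cF2.mul_right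
      simpa only [sq] using this
    have i2 : Integrable (fun x => F1 x ^ 2) := by
      refine Continuous.integrable_of_hasCompactSupport (by fun_prop) ?_
      have : HasCompactSupport (fun x => F1 x * F1 x) := cF1.mul_right
      simpa only [sq] using this
    have i3 : Integrable (fun x => F1 x * F1 x + F x * F2 x) :=
      Continuous.integrable_of_hasCompactSupport (by fun_prop) (cF1.mul_right.add cF.mul_right)
    have i4 : Integrable (fun x => A * F2 x ^ 2 - A * (4 * κ ^ 2 - 2 * A) * F1 x ^ 2) :=
      (i1.const_mul _).sub (i2.const_mul _)
    rw [integral_add i4 (i3.const_mul _), integral_sub (i1.const_mul _) (i2.const_mul _),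
      integral_const_mul, integral_const_mul, integral_const_mul, z]
    have := mul_lt_mul_of_pos_left hlt hA0
    linarith

/-- A bounded one-dimensional profile whose modulus has a critical point with `|U|² < 2λ/3` is
linearly unstable. The kernel of the second variation contains `U'` and `iU`; a combination of them
vanishes at the critical point, and `oned_neg` applies. If the combination vanishes identically,
`U` is a plane wave or `0`. -/
lemma oned_unstable {lam : ℝ} {U : ℝ → ℂ} (hs : ContDiff ℝ (⊤ : ℕ∞) U)
    (heq : ∀ x, deriv (deriv U) x = ((-(lam - ‖U x‖ ^ 2) : ℝ) : ℂ) * U x) {M M' : ℝ}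
    (hM : ∀ x, ‖U x‖ ≤ M) (hM' : ∀ x, ‖deriv U x‖ ≤ M') (h0 : ip (U 0) (deriv U 0) = 0)
    (h1 : ‖U 0‖ ^ 2 < 2 * lam / 3) :
    ∃ h : ℝ → ℂ, ContDiff ℝ (⊤ : ℕ∞) h ∧ HasCompactSupport h ∧
      ∫ x, qd lam (U x) (h x) (deriv h x) < 0 := by
  have hl : 0 < lam := by linarith [sq_nonneg ‖U 0‖]
  have dU : ∀ x, HasDerivAt U (deriv U x) x := fun x => (hs.differentiable (by simp) x).hasDerivAt
  have sU' := deriv_smooth hs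
  have dU' : ∀ x, HasDerivAt (deriv U) (((-(lam - ‖U x‖ ^ 2) : ℝ) : ℂ) * U x) x := fun x => by
    rw [← heq]; exact (sU'.differentiable (by simp) x).hasDerivAt
  by_cases hU0 : U 0 = 0
  · have k1 : ∀ x, HasDerivAt (fun x => I * U x) (I * deriv U x) x := fun x => (dU x).const_mul I
    have k2 : ∀ x, HasDerivAt (fun x => I * deriv U x) (AA lam (U x) (I * U x)) x := fun x =>
      ((dU' x).const_mul I).congr_deriv (by
        have : ip (I * U x) (U x) = 0 := by simp [ip]; ring
        simp only [AA, this]; push_cast; ring)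
    by_cases hd : I * deriv U 0 = 0
    · have hz := lin_unique hM k1 k2 (by simp [hU0]) hd
      have hU : ∀ x, U x = 0 := fun x => by simpa using hz x
      obtain ⟨h, a1, a2, a3⟩ := zero_neg hl
      exact ⟨h, a1, a2, by simpa only [hU] using a3⟩
    · exact oned_neg hs.continuous (contDiff_const.mul hs) k1 k2 (W := M) (W' := M')
        (fun x => by simpa using hM x) (fun x => by simpa using hM' x) (by simp [hU0]) hd
  · have hn : 0 < ‖U 0‖ ^ 2 := by positivity
    set κ : ℝ := ((U 0).re * (deriv U 0).im - (U 0).im * (deriv U 0).re) / ‖U 0‖ ^ 2 with hκ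
    have hκ' : κ * ‖U 0‖ ^ 2 = (U 0).re * (deriv U 0).im - (U 0).im * (deriv U 0).re := by
      rw [hκ]; field_simp
    have hinit : deriv U 0 - I * κ * U 0 = 0 := by
      rw [normSq_eq] at hκ' hn
      unfold ip at h0
      apply Complex.ext
      · simp
        have : ((deriv U 0).re + κ * (U 0).im) * ((U 0).re ^ 2 + (U 0).im ^ 2) = 0 := by
          linear_combination (U 0).im * hκ' + (U 0).re * h0
        exact (mul_eq_zero.mp this).resolve_right hn.ne'
      · simp
        have : ((deriv U 0).im - κ * (U 0).re) * ((U 0).re ^ 2 + (U 0).im ^ 2) = 0 := by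
          linear_combination -(U 0).re * hκ' + (U 0).im * h0
        exact (mul_eq_zero.mp this).resolve_right hn.ne'
    have dN : ∀ x, HasDerivAt (fun x => ((-(lam - ‖U x‖ ^ 2) : ℝ) : ℂ))
        ((2 * ip (deriv U x) (U x) : ℝ) : ℂ) x := fun x => by
      refine HasDerivAt.ofReal_comp (f := fun x => -(lam - ‖U x‖ ^ 2)) ?_
      have e : (fun x => -(lam - ‖U x‖ ^ 2)) = fun x => -(lam - ip (U x) (U x)) := by
        funext x; rw [normSq_eq]; unfold ip; ring
      rw [e]
      exact (((hasDerivAt_ip (dU x) (dU x)).const_sub lam).neg).congr_deriv (by unfold ip; ring)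
    have k1 : ∀ x, HasDerivAt (fun x => deriv U x - I * κ * U x)
        (((-(lam - ‖U x‖ ^ 2) : ℝ) : ℂ) * U x - I * κ * deriv U x) x := fun x =>
      (dU' x).sub ((dU x).const_mul _)
    have k2 : ∀ x, HasDerivAt (fun x => ((-(lam - ‖U x‖ ^ 2) : ℝ) : ℂ) * U x - I * κ * deriv U x)
        (AA lam (U x) (deriv U x - I * κ * U x)) x := fun x =>
      (((dN x).mul (dU x)).sub ((dU' x).const_mul _)).congr_deriv (by
        have : ip (deriv U x - I * κ * U x) (U x) = ip (deriv U x) (U x) := by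
          simp [ip]; ring
        simp only [AA, this]; push_cast; ring)
    have sw : ContDiff ℝ (⊤ : ℕ∞) (fun x => deriv U x - I * κ * U x) :=
      sU'.sub (contDiff_const.mul hs)
    by_cases hd : ((-(lam - ‖U 0‖ ^ 2) : ℝ) : ℂ) * U 0 - I * κ * deriv U 0 = 0
    · have hz := lin_unique hM k1 k2 hinit hd
      have hw : ∀ x, HasDerivAt U (I * κ * U x) x := fun x => by
        rw [← sub_eq_zero.mp (hz x)]; exact dU x
      have hcon : ∀ x, ‖U x‖ ^ 2 = ‖U 0‖ ^ 2 := by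
        intro x
        have e : ∀ x, HasDerivAt (fun x => ip (U x) (U x)) 0 x := fun x =>
          (hasDerivAt_ip (hw x) (hw x)).congr_deriv (by simp [ip]; ring)
        have := is_const_of_deriv_eq_zero (fun x => (e x).differentiableAt)
          (fun x => (e x).deriv) x 0
        have i : ∀ a : ℂ, ip a a = ‖a‖ ^ 2 := fun a => by rw [normSq_eq]; unfold ip; ring
        simpa only [i] using this
      refine wave_neg hs hw hcon hn ?_ h1
      have e1 : deriv U 0 = I * κ * U 0 := sub_eq_zero.mp hinit
      rw [e1] at hd
      have e2 : (((-(lam - ‖U 0‖ ^ 2) + κ ^ 2 : ℝ)) : ℂ) * U 0 = 0 := by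
        push_cast at hd ⊢
        linear_combination hd + (κ : ℂ) ^ 2 * U 0 * I_sq
      have e3 := (mul_eq_zero.mp e2).resolve_right hU0
      have e4 : -(lam - ‖U 0‖ ^ 2) + κ ^ 2 = 0 := by exact_mod_cast e3
      linarith
    · refine oned_neg hs.continuous sw k1 k2 (W := M' + |κ| * M)
        (W' := (|lam| + M ^ 2) * M + |κ| * M') (fun x => ?_) (fun x => ?_) hinit hd
      · refine (norm_sub_le _ _).trans (add_le_add (hM' x) ?_)
        simp only [norm_mul, norm_I, one_mul, norm_real, Real.norm_eq_abs]
        exact mul_le_mul_of_nonneg_left (hM x) (abs_nonneg _)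
      · refine (norm_sub_le _ _).trans (add_le_add ?_ ?_)
        · rw [norm_mul, norm_real, Real.norm_eq_abs, abs_neg]
          refine mul_le_mul ((abs_sub _ _).trans ?_) (hM x) (norm_nonneg _) (by positivity)
          rw [abs_of_nonneg (sq_nonneg ‖U x‖)]
          have := pow_le_pow_left₀ (norm_nonneg _) (hM x) 2
          linarith
        · simp only [norm_mul, norm_I, one_mul, norm_real, Real.norm_eq_abs]
          exact mul_le_mul_of_nonneg_left (hM' x) (abs_nonneg _)

/-! ### Two-dimensional instability -/

lemma int_prod {F G : ℝ → ℝ} (hF : Integrable F) (hG : Integrable G) :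
    Integrable (fun x : Ed 2 => F (x 1) * G (x 0)) ∧
      ∫ x : Ed 2, F (x 1) * G (x 0) = (∫ t, F t) * ∫ t, G t := by
  have hm := EuclideanSpace.volume_preserving_symm_measurableEquiv_toLp (Fin 2)
  have he := (MeasurableEquiv.toLp 2 (Fin 2 → ℝ)).symm.measurableEmbedding
  have h1 : Integrable (fun y : Fin 2 → ℝ => F (y 1) * G (y 0)) := by
    have := Integrable.fintype_prod (f := ![G, F]) (μ := fun _ => volume) (by
      intro i; fin_cases i
      · exact hG
      · exact hF)
    simp only [Fin.prod_univ_two, Matrix.cons_val_zero, Matrix.cons_val_one] at this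
    simpa only [mul_comm, volume_pi] using this
  have h2 : ∫ y : Fin 2 → ℝ, F (y 1) * G (y 0) = (∫ t, F t) * ∫ t, G t := by
    have := integral_fintype_prod_volume_eq_prod (ι := Fin 2) (f := ![G, F])
    simp only [Fin.prod_univ_two, Matrix.cons_val_zero, Matrix.cons_val_one] at this
    rw [mul_comm (∫ t, F t), ← this]
    simp only [mul_comm]
  refine ⟨(hm.integrable_comp_emb he).2 h1, ?_⟩
  rw [← h2]
  exact hm.integral_comp he (fun y : Fin 2 → ℝ => F (y 1) * G (y 0))

lemma prod_supp {F : ℝ → ℂ} {G : ℝ → ℂ} (hF : HasCompactSupport F) (hG : HasCompactSupport G) :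
    HasCompactSupport (fun x : Ed 2 => F (x 1) * G (x 0)) := by
  obtain ⟨A, hA⟩ := hF.isCompact.isBounded.subset_closedBall 0
  obtain ⟨B, hB⟩ := hG.isCompact.isBounded.subset_closedBall 0
  refine HasCompactSupport.of_support_subset_isCompact (isCompact_closedBall (0 : Ed 2) (A + B)) ?_
  intro x hx
  have h1 := hA (subset_tsupport _ (left_ne_zero_of_mul hx))
  have h2 := hB (subset_tsupport _ (right_ne_zero_of_mul hx))
  rw [mem_closedBall_zero_iff] at h1 h2 ⊢
  rw [add_single x]
  refine (norm_add_le _ _).trans ?_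
  rw [norm_smul, norm_smul]
  simp only [PiLp.norm_single, norm_one, mul_one]
  linarith

/-- The density of `Qform`. -/
def Qden (c : ℝ) (ψ φ : Ed 2 → ℂ) (x : Ed 2) : ℝ :=
  ‖dd 0 φ x‖ ^ 2 + ‖dd 1 φ x‖ ^ 2 - c * (φ x * (starRingEnd ℂ) (I * dd 0 φ x)).re
    - (1 - ‖ψ x‖ ^ 2) * ‖φ x‖ ^ 2 + 2 * ((φ x * (starRingEnd ℂ) (ψ x)).re) ^ 2

lemma Qform_eq (c : ℝ) (ψ φ : Ed 2 → ℂ) : Qform c ψ φ = ∫ x, Qden c ψ φ x := by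
  unfold Qform Qden gradSq
  simp only [Fin.sum_univ_two]
  rfl

lemma dd_eq_zero {φ : Ed 2 → ℂ} {x : Ed 2} (hx : x ∉ tsupport φ) (i : Fin 2) : dd i φ x = 0 := by
  have : fderiv ℝ φ x = 0 := image_eq_zero_of_notMem_tsupport
    (fun hh => hx (closure_minimal (support_fderiv_subset ℝ) (isClosed_tsupport φ) hh))
  show fderiv ℝ φ x _ = 0
  rw [this]; rfl

lemma Qden_zero {c : ℝ} {ψ φ : Ed 2 → ℂ} {x : Ed 2} (hx : x ∉ tsupport φ) : Qden c ψ φ x = 0 := by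
  have h1 : φ x = 0 := image_eq_zero_of_notMem_tsupport hx
  have h2 : ∀ i, dd i φ x = 0 := fun i => dd_eq_zero hx i
  simp [Qden, h1, h2]

lemma Qden_continuous {c : ℝ} {ψ φ : Ed 2 → ℂ} (hψ : Continuous ψ) (hφ : Smooth φ) :
    Continuous (Qden c ψ φ) := by
  have h0 := (hφ.dd 0).continuous
  have h1 := (hφ.dd 1).continuous
  have h := hφ.continuous
  have hc := Complex.continuous_conj
  unfold Qden
  fun_prop

lemma supp_of_tsupp {f : Ed 2 → ℝ} {φ : Ed 2 → ℂ} (hc : HasCompactSupport φ)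
    (h : ∀ x, x ∉ tsupport φ → f x = 0) : HasCompactSupport f :=
  HasCompactSupport.of_support_subset_isCompact hc (fun x hx => by
    by_contra hn; exact hx (h x hn))

lemma Qden_integrable {c : ℝ} {ψ φ : Ed 2 → ℂ} (hψ : Continuous ψ) (hφ : Smooth φ)
    (hc : HasCompactSupport φ) : Integrable (Qden c ψ φ) :=
  (Qden_continuous hψ hφ).integrable_of_hasCompactSupport (supp_of_tsupp hc fun _ => Qden_zero)

lemma Qden_translate (c : ℝ) (ψ φ : Ed 2 → ℂ) (ξ : Ed 2) :
    Qform c (fun x => ψ (x - ξ)) φ = Qform c ψ (fun x => φ (x - -ξ)) := by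
  rw [Qform_eq, Qform_eq, ← integral_sub_right_eq_self (μ := (volume : Measure (Ed 2))) _ (-ξ)]
  congr 1
  funext x
  simp only [Qden, dd_translate]
  simp

lemma Qden_comb {c : ℝ} {ψ φ χ : Ed 2 → ℂ} (hφ : Smooth φ) (hχ : Smooth χ)
    (hd : Disjoint (tsupport φ) (tsupport χ)) (a b : ℝ) (x : Ed 2) :
    Qden c ψ (fun x => (a : ℂ) * φ x + (b : ℂ) * χ x) x =
      a ^ 2 * Qden c ψ φ x + b ^ 2 * Qden c ψ χ x := by
  have e : ∀ i, dd i (fun x => (a : ℂ) * φ x + (b : ℂ) * χ x) x =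
      a * dd i φ x + b * dd i χ x := fun i => by
    rw [dd_add ((hφ.diff).const_mul _) ((hχ.diff).const_mul _), dd_const_mul _ hφ.diff,
      dd_const_mul _ hχ.diff]
  have key : ∀ (φ : Ed 2 → ℂ) (a : ℝ), ‖a * dd 0 φ x‖ ^ 2 + ‖a * dd 1 φ x‖ ^ 2
      - c * (a * φ x * (starRingEnd ℂ) (I * (a * dd 0 φ x))).re
      - (1 - ‖ψ x‖ ^ 2) * ‖a * φ x‖ ^ 2 + 2 * ((a * φ x * (starRingEnd ℂ) (ψ x)).re) ^ 2 =
      a ^ 2 * Qden c ψ φ x := by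
    intro φ a
    simp only [Qden, norm_mul, mul_pow, norm_real, Real.norm_eq_abs, sq_abs]
    simp
    ring
  by_cases hx : x ∈ tsupport φ
  · have hx' : x ∉ tsupport χ := fun h => Set.disjoint_left.1 hd hx h
    rw [Qden_zero (φ := χ) hx', mul_zero, add_zero, ← key φ a]
    have h1 : χ x = 0 := image_eq_zero_of_notMem_tsupport hx'
    have h2 : ∀ i, dd i χ x = 0 := fun i => dd_eq_zero hx' i
    simp only [Qden, e, h1, h2, mul_zero, add_zero]
  · rw [Qden_zero (φ := φ) hx, mul_zero, zero_add, ← key χ b]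
    have h1 : φ x = 0 := image_eq_zero_of_notMem_tsupport hx
    have h2 : ∀ i, dd i φ x = 0 := fun i => dd_eq_zero hx i
    simp only [Qden, e, h1, h2, mul_zero, zero_add]

/-- Two negative directions with disjoint supports force the Morse index to be at least two. -/
lemma morse_two {c : ℝ} {ψ φ χ : Ed 2 → ℂ} (hM : MorseIndexLE c ψ 1) (hψ : Continuous ψ)
    (hφ : Smooth φ) (hχ : Smooth χ) (hφc : HasCompactSupport φ) (hχc : HasCompactSupport χ)
    (hd : Disjoint (tsupport φ) (tsupport χ)) (h1 : Qform c ψ φ < 0) (h2 : Qform c ψ χ < 0) :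
    False := by
  have hφ0 : φ ≠ 0 := by
    rintro rfl
    rw [Qform_eq] at h1
    have : Qden c ψ 0 = fun _ => 0 := by
      funext x; exact Qden_zero (by simp [tsupport])
    rw [this] at h1; simp at h1
  have hχ0 : χ ≠ 0 := by
    rintro rfl
    rw [Qform_eq] at h2
    have : Qden c ψ 0 = fun _ => 0 := by
      funext x; exact Qden_zero (by simp [tsupport])
    rw [this] at h2; simp at h2
  have hsp : ∀ f ∈ Submodule.span ℝ {φ, χ}, ∃ a b : ℝ, f = fun x => (a : ℂ) * φ x + (b : ℂ) * χ x := by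
    intro f hf
    obtain ⟨a, b, rfl⟩ := Submodule.mem_span_pair.1 hf
    exact ⟨a, b, by funext x; simp⟩
  have hr := hM (Submodule.span ℝ {φ, χ}) (by
    intro f hf
    obtain ⟨a, b, rfl⟩ := hsp f hf
    have k1 : HasCompactSupport (fun x => (a : ℂ) * φ x) := hφc.mul_left
    have k2 : HasCompactSupport (fun x => (b : ℂ) * χ x) := hχc.mul_left
    exact ⟨(contDiff_const.mul hφ).add (contDiff_const.mul hχ), k1.add k2⟩) (by
    intro f hf hf0
    obtain ⟨a, b, rfl⟩ := hsp f hf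
    rw [Qform_eq]
    simp only [Qden_comb hφ hχ hd]
    rw [integral_add ((Qden_integrable hψ hφ hφc).const_mul _)
      ((Qden_integrable hψ hχ hχc).const_mul _), integral_const_mul, integral_const_mul,
      ← Qform_eq, ← Qform_eq]
    by_cases ha : a = 0
    · have hb : b ≠ 0 := by
        rintro rfl; apply hf0; funext x; simp [ha]
      have := mul_neg_of_pos_of_neg (by positivity : 0 < b ^ 2) h2
      rw [ha]; linarith
    · have := mul_neg_of_pos_of_neg (by positivity : 0 < a ^ 2) h1
      have := mul_nonpos_of_nonneg_of_nonpos (sq_nonneg b) h2.le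
      linarith)
  rw [Nat.cast_one, rank_le_one_iff] at hr
  obtain ⟨v, hv⟩ := hr
  obtain ⟨r, hr⟩ := hv ⟨φ, Submodule.subset_span (by simp)⟩
  obtain ⟨s, hs⟩ := hv ⟨χ, Submodule.subset_span (by simp)⟩
  have hr' : r • (v : Ed 2 → ℂ) = φ := congrArg Subtype.val hr
  have hs' : s • (v : Ed 2 → ℂ) = χ := congrArg Subtype.val hs
  obtain ⟨x, hx⟩ := Function.ne_iff.1 hχ0
  have hxφ : φ x = 0 := image_eq_zero_of_notMem_tsupport
    (fun h => Set.disjoint_left.1 hd h (subset_tsupport _ hx))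
  have hvx : (v : Ed 2 → ℂ) x ≠ 0 := by
    intro h0; apply hx; rw [← hs']; simp [h0]
  have hr0 : r = 0 := by
    rw [← hr'] at hxφ
    simpa [hvx] using hxφ
  apply hφ0
  rw [← hr', hr0, zero_smul]

lemma Q_conv {cn : ℕ → ℝ} {c : ℝ} (hcn : Tendsto cn atTop (𝓝 c)) {Φn : ℕ → Ed 2 → ℂ} {Φ φ : Ed 2 → ℂ}
    (hs : ∀ n, Continuous (Φn n)) {M : ℝ} (hM : ∀ n x, ‖Φn n x‖ ≤ M)
    (hp : ∀ x, Tendsto (fun n => Φn n x) atTop (𝓝 (Φ x))) (hφ : Smooth φ)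
    (hc : HasCompactSupport φ) :
    Tendsto (fun n => Qform (cn n) (Φn n) φ) atTop (𝓝 (Qform c Φ φ)) := by
  obtain ⟨C', hC'⟩ := (Metric.isBounded_range_of_tendsto cn hcn).exists_norm_le
  have hC' : ∀ n, |cn n| ≤ C' := fun n => hC' _ ⟨n, rfl⟩
  have h0 := (hφ.dd 0).continuous
  have h1 := (hφ.dd 1).continuous
  have h := hφ.continuous
  simp only [Qform_eq]
  refine tendsto_integral_of_dominated_convergence (fun x => ‖dd 0 φ x‖ ^ 2 + ‖dd 1 φ x‖ ^ 2 +
    C' * (‖φ x‖ * ‖dd 0 φ x‖) + (1 + M ^ 2) * ‖φ x‖ ^ 2 + 2 * (‖φ x‖ * M) ^ 2)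
    (fun n => (Qden_continuous (hs n) hφ).aestronglyMeasurable) ?_ ?_ ?_
  · refine Continuous.integrable_of_hasCompactSupport (by fun_prop) (supp_of_tsupp hc ?_)
    intro x hx
    have h1 : φ x = 0 := image_eq_zero_of_notMem_tsupport hx
    have h2 : ∀ i, dd i φ x = 0 := fun i => dd_eq_zero hx i
    simp [h1, h2]
  · intro n
    refine Eventually.of_forall fun x => ?_
    have a1 : |cn n * (φ x * (starRingEnd ℂ) (I * dd 0 φ x)).re| ≤ C' * (‖φ x‖ * ‖dd 0 φ x‖) := by
      rw [abs_mul]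
      refine mul_le_mul (hC' n) ((abs_re_le_norm _).trans ?_) (abs_nonneg _)
        ((abs_nonneg _).trans (hC' n))
      simp
    have a2 : |(φ x * (starRingEnd ℂ) (Φn n x)).re| ≤ ‖φ x‖ * M := by
      refine (abs_re_le_norm _).trans ?_
      rw [norm_mul, RCLike.norm_conj]
      exact mul_le_mul_of_nonneg_left (hM n x) (norm_nonneg _)
    have a3 := pow_le_pow_left₀ (abs_nonneg _) a2 2
    rw [sq_abs] at a3
    have a4 := pow_le_pow_left₀ (norm_nonneg _) (hM n x) 2
    have a5 := mul_le_mul_of_nonneg_right a4 (sq_nonneg ‖φ x‖)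
    have a6 := mul_nonneg (sq_nonneg ‖Φn n x‖) (sq_nonneg ‖φ x‖)
    have a7 := sq_nonneg ‖φ x‖
    have a8 := sq_nonneg (φ x * (starRingEnd ℂ) (Φn n x)).re
    have a9 := abs_le.1 a1
    have b1 := sq_nonneg ‖dd 0 φ x‖
    have b2 := sq_nonneg ‖dd 1 φ x‖
    rw [Real.norm_eq_abs, abs_le]
    unfold Qden
    constructor <;> nlinarith
  · refine Eventually.of_forall fun x => ?_
    unfold Qden
    have k := hp x
    have k2 : Tendsto (fun n => (φ x * (starRingEnd ℂ) (Φn n x)).re) atTop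
        (𝓝 (φ x * (starRingEnd ℂ) (Φ x)).re) :=
      (continuous_re.tendsto _).comp
        (tendsto_const_nhds.mul ((Complex.continuous_conj.tendsto _).comp k))
    exact ((tendsto_const_nhds.sub (hcn.mul tendsto_const_nhds)).sub
      ((tendsto_const_nhds.sub (k.norm.pow 2)).mul tendsto_const_nhds)).add
      (tendsto_const_nhds.mul (k2.pow 2))

/-- The phase factor `e^{-ict/2}` removing the first order term of the equation. -/
def ph (c t : ℝ) : ℂ := exp (I * ((-(c / 2) * t : ℝ) : ℂ))

lemma norm_ph (c t : ℝ) : ‖ph c t‖ = 1 := by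
  unfold ph; rw [mul_comm]; exact norm_exp_ofReal_mul_I _

lemma ph_smooth (c : ℝ) : ContDiff ℝ (⊤ : ℕ∞) (ph c) :=
  (contDiff_const.mul (ofReal_smooth (contDiff_const.mul contDiff_id))).cexp

lemma ph_deriv (c t : ℝ) : HasDerivAt (ph c) (-(I * (c / 2)) * ph c t) t := by
  have : HasDerivAt (fun t : ℝ => I * ((-(c / 2) * t : ℝ) : ℂ)) (I * ((-(c / 2) * 1 : ℝ) : ℂ)) t :=
    (((hasDerivAt_id t).const_mul _).ofReal_comp).const_mul _
  exact this.cexp.congr_deriv (by unfold ph; push_cast; ring)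

lemma ph_conj (c t : ℝ) : ph c t * (starRingEnd ℂ) (ph c t) = 1 := by
  rw [mul_conj, normSq_eq_norm_sq, norm_ph]; simp

lemma conj_ph (c t : ℝ) : (starRingEnd ℂ) (ph c t) = ph (-c) t := by
  unfold ph
  rw [← exp_conj, map_mul, conj_I, conj_ofReal]
  congr 1; push_cast; ring

lemma smooth_coord' {f : ℝ → ℂ} (hf : ContDiff ℝ (⊤ : ℕ∞) f) (j : Fin 2) :
    Smooth (fun x : Ed 2 => f (x j)) := by
  have : Smooth (fun x : Ed 2 => x j) := by unfold Smooth; fun_prop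
  exact hf.comp this

/-- The density of the second variation on products: it splits into the one-dimensional density
in the first variable and a gradient term in the second. -/
lemma Qden_prod {c : ℝ} {Φ : Ed 2 → ℂ} {V : ℝ → ℂ} (hV : ∀ x, Φ x = V (x 0))
    {h : ℝ → ℂ} (hh : ContDiff ℝ (⊤ : ℕ∞) h) {b : ℝ → ℝ} (hb : ContDiff ℝ (⊤ : ℕ∞) b) (x : Ed 2) :
    Qden c Φ (fun x => (b (x 1) : ℂ) * (ph c (x 0) * h (x 0))) x =
      b (x 1) ^ 2 * qd (1 + c ^ 2 / 4) (ph (-c) (x 0) * V (x 0)) (h (x 0)) (deriv h (x 0)) +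
      deriv b (x 1) ^ 2 * ‖h (x 0)‖ ^ 2 := by
  have sB : Smooth (fun x : Ed 2 => (b (x 1) : ℂ)) := smooth_coord' (ofReal_smooth hb) 1
  have sg : ContDiff ℝ (⊤ : ℕ∞) (fun t => ph c t * h t) := (ph_smooth c).mul hh
  have sG : Smooth (fun x : Ed 2 => ph c (x 0) * h (x 0)) := smooth_coord' sg 0
  have dh : ∀ t, HasDerivAt h (deriv h t) t := fun t => (hh.differentiable (by simp) t).hasDerivAt
  have e0 : dd 0 (fun x : Ed 2 => (b (x 1) : ℂ) * (ph c (x 0) * h (x 0))) x =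
      (b (x 1) : ℂ) * (ph c (x 0) * (deriv h (x 0) - I * (c / 2) * h (x 0))) := by
    refine dd_of_line (sB.mul sG).diff ?_
    have k : HasDerivAt (fun t : ℝ => (b (x 1) : ℂ) * (ph c (x 0 + t) * h (x 0 + t)))
        ((b (x 1) : ℂ) * (-(I * (c / 2)) * ph c (x 0 + 0) * h (x 0 + 0) +
          ph c (x 0 + 0) * deriv h (x 0 + 0))) 0 :=
      ((((ph_deriv c (x 0 + 0)).comp_const_add (x 0) 0).mul
        ((dh (x 0 + 0)).comp_const_add (x 0) 0)).const_mul _)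
    simp only [add_zero] at k
    have e : (fun t : ℝ => (b ((x + t • (EuclideanSpace.single 0 1 : Ed 2)) 1) : ℂ) *
        (ph c ((x + t • (EuclideanSpace.single 0 1 : Ed 2)) 0) *
          h ((x + t • (EuclideanSpace.single 0 1 : Ed 2)) 0))) =
        fun t => (b (x 1) : ℂ) * (ph c (x 0 + t) * h (x 0 + t)) := by funext t; simp
    rw [e]
    exact k.congr_deriv (by ring)
  have e1 : dd 1 (fun x : Ed 2 => (b (x 1) : ℂ) * (ph c (x 0) * h (x 0))) x =
      ((deriv b (x 1) : ℝ) : ℂ) * (ph c (x 0) * h (x 0)) := by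
    refine dd_of_line (sB.mul sG).diff ?_
    have db : ∀ t, HasDerivAt b (deriv b t) t := fun t =>
      (hb.differentiable (by simp) t).hasDerivAt
    have k : HasDerivAt (fun t : ℝ => (b (x 1 + t) : ℂ) * (ph c (x 0) * h (x 0)))
        (((deriv b (x 1 + 0) : ℝ) : ℂ) * (ph c (x 0) * h (x 0))) 0 :=
      ((((db (x 1 + 0)).comp_const_add (x 1) 0)).ofReal_comp).mul_const _
    simp only [add_zero] at k
    have e : (fun t : ℝ => (b ((x + t • (EuclideanSpace.single 1 1 : Ed 2)) 1) : ℂ) *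
        (ph c ((x + t • (EuclideanSpace.single 1 1 : Ed 2)) 0) *
          h ((x + t • (EuclideanSpace.single 1 1 : Ed 2)) 0))) =
        fun t => (b (x 1 + t) : ℂ) * (ph c (x 0) * h (x 0)) := by funext t; simp
    rw [e]
    exact k
  simp only [Qden, e0, e1, qd, norm_mul, norm_ph, hV, one_mul, norm_real, Real.norm_eq_abs, mul_pow,
    sq_abs]
  have t1 : ((b (x 1) : ℂ) * (ph c (x 0) * h (x 0)) * (starRingEnd ℂ) (I * ((b (x 1) : ℂ) *
      (ph c (x 0) * (deriv h (x 0) - I * (c / 2) * h (x 0)))))) =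
      ((b (x 1) ^ 2 : ℝ) : ℂ) * (h (x 0) * (starRingEnd ℂ) (I * (deriv h (x 0) -
        I * (c / 2) * h (x 0)))) := by
    have := ph_conj c (x 0)
    simp only [map_mul, conj_ofReal]
    push_cast
    linear_combination ((b (x 1) : ℂ) ^ 2 * (h (x 0) * ((starRingEnd ℂ) I *
      (starRingEnd ℂ) (deriv h (x 0) - I * (c / 2) * h (x 0))))) * this
  have t2 : ((b (x 1) : ℂ) * (ph c (x 0) * h (x 0)) * (starRingEnd ℂ) (V (x 0))).re =
      b (x 1) * ip (h (x 0)) (ph (-c) (x 0) * V (x 0)) := by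
    rw [← conj_ph]
    simp [ip]
    ring
  have e2 : (c : ℂ) / 2 = ((c / 2 : ℝ) : ℂ) := by push_cast; rfl
  rw [t1, t2, re_ofReal_mul, e2]
  generalize hk : c / 2 = k
  have hc : c = 2 * k := by linarith
  simp only [normSq_eq]
  simp
  rw [hc]
  ring

lemma prod_smooth {g : ℝ → ℂ} (hg : ContDiff ℝ (⊤ : ℕ∞) g) {b : ℝ → ℝ}
    (hb : ContDiff ℝ (⊤ : ℕ∞) b) : Smooth (fun x : Ed 2 => (b (x 1) : ℂ) * g (x 0)) :=
  (smooth_coord' (ofReal_smooth hb) 1).mul (smooth_coord' hg 0)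

/-- The second variation on products. -/
lemma Qform_prod {c : ℝ} {Φ : Ed 2 → ℂ} {V : ℝ → ℂ} (hV : ∀ x, Φ x = V (x 0)) (hVc : Continuous V)
    {h : ℝ → ℂ} (hh : ContDiff ℝ (⊤ : ℕ∞) h) (hhc : HasCompactSupport h)
    {b : ℝ → ℝ} (hb : ContDiff ℝ (⊤ : ℕ∞) b) (hbc : HasCompactSupport b) :
    Qform c Φ (fun x => (b (x 1) : ℂ) * (ph c (x 0) * h (x 0))) =
      (∫ t, b t ^ 2) * (∫ t, qd (1 + c ^ 2 / 4) (ph (-c) t * V t) (h t) (deriv h t)) +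
      (∫ t, deriv b t ^ 2) * ∫ t, ‖h t‖ ^ 2 := by
  rw [Qform_eq]
  simp only [Qden_prod hV hh hb]
  have cb := hb.continuous
  have cb' := hb.continuous_deriv (by simp)
  have i1 : Integrable (fun t => b t ^ 2) :=
    Continuous.integrable_of_hasCompactSupport (by fun_prop) (hbc.comp_left (g := fun t => t ^ 2) (by simp))
  have i2 : Integrable (fun t => deriv b t ^ 2) :=
    Continuous.integrable_of_hasCompactSupport (by fun_prop)
      (hbc.deriv.comp_left (g := fun t => t ^ 2) (by simp))
  have i3 : Integrable (fun t => ‖h t‖ ^ 2) := by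
    have := hh.continuous
    exact Continuous.integrable_of_hasCompactSupport (by fun_prop)
      (hhc.comp_left (g := fun t => ‖t‖ ^ 2) (by simp))
  have i4 : Integrable (fun t => qd (1 + c ^ 2 / 4) (ph (-c) t * V t) (h t) (deriv h t)) :=
    qd_integrable (lam := 1 + c ^ 2 / 4) ((ph_smooth (-c)).continuous.mul hVc) hh hhc
  have p1 := int_prod i1 i4
  have p2 := int_prod i2 i3
  rw [integral_add p1.1 p2.1]
  exact congrArg₂ _ p1.2 p2.2

lemma tsupport_translate (φ : Ed 2 → ℂ) (s : Ed 2) :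
    tsupport (fun x => φ (x - s)) = (fun x => x - s) ⁻¹' tsupport φ :=
  tsupport_comp_eq_preimage φ (Homeomorph.subRight s)

lemma compact_translate {φ : Ed 2 → ℂ} (h : HasCompactSupport φ) (s : Ed 2) :
    HasCompactSupport (fun x => φ (x - s)) := h.comp_homeomorph (Homeomorph.subRight s)

set_option maxHeartbeats 1000000 in
/-- A solution of the limit equation depending on the first variable only whose modulus dips below
`√(2λ/3)` at a critical point is not a local limit of solutions of Morse index at most one. -/
lemma unstable_contra {cn : ℕ → ℝ} {c : ℝ} (hcn : Tendsto cn atTop (𝓝 c)) {ψn : ℕ → Ed 2 → ℂ}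
    {ξ : ℕ → Ed 2} {Φ : Ed 2 → ℂ} (hs : ∀ n, Smooth (ψn n)) {M : ℝ} (hM : ∀ n x, ‖ψn n x‖ ≤ M)
    (hI : ∀ n, MorseIndexLE (cn n) (ψn n) 1) (hΦ : Smooth Φ) (hG : GPeq c Φ)
    (hp : ∀ x, Tendsto (fun n => ψn n (x - ξ n)) atTop (𝓝 (Φ x))) (hd : ∀ x, dd 1 Φ x = 0)
    {M' : ℝ} (hM' : ∀ x, ‖dd 0 Φ x‖ ≤ M') (h0 : dd 0 (fun x => ‖Φ x‖ ^ 2) 0 = 0)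
    (h1 : ‖Φ 0‖ ^ 2 < 2 * (1 + c ^ 2 / 4) / 3) : False := by
  have hΦM : ∀ x, ‖Φ x‖ ≤ M := fun x => le_of_tendsto (hp x).norm (Eventually.of_forall fun n => hM n _)
  set e0 : Ed 2 := EuclideanSpace.single 0 1 with he0
  set V : ℝ → ℂ := fun t => Φ (t • e0) with hVdef
  have hV : ∀ x, Φ x = V (x 0) := by
    intro x
    have k : ∀ t, HasDerivAt (fun t : ℝ => Φ ((x 0) • e0 + t • EuclideanSpace.single 1 1)) 0 t :=
      fun t => (hasDerivAt_line hΦ.diff _ 1 t).congr_deriv (hd _)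
    have := is_const_of_deriv_eq_zero (fun t => (k t).differentiableAt) (fun t => (k t).deriv) (x 1) 0
    simp only [zero_smul, add_zero] at this
    rw [hVdef]
    show Φ x = Φ (x 0 • e0)
    rw [← this, ← add_single x]
  have sV : ContDiff ℝ (⊤ : ℕ∞) V := hΦ.comp (contDiff_id.smul contDiff_const)
  have dV : ∀ t, HasDerivAt V (dd 0 Φ (t • e0)) t := fun t => by
    have := hasDerivAt_line hΦ.diff 0 0 t
    simpa only [zero_add] using this
  have dV' : ∀ t, HasDerivAt (fun t : ℝ => dd 0 Φ (t • e0)) (dd 0 (dd 0 Φ) (t • e0)) t := fun t => by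
    have := hasDerivAt_line (hΦ.dd 0).diff 0 0 t
    simpa only [zero_add] using this
  have hddz : ∀ x, dd 1 (dd 1 Φ) x = 0 := by
    have : dd 1 Φ = fun _ => 0 := funext hd
    rw [this, dd_const]; simp
  have hVeq : ∀ t : ℝ, I * c * dd 0 Φ (t • e0) + dd 0 (dd 0 Φ) (t • e0) +
      (1 - (‖V t‖ : ℂ) ^ 2) * V t = 0 := by
    intro t
    have := (GPeq_iff c Φ).1 hG (t • e0)
    rw [hddz, add_zero] at this
    exact this
  set U : ℝ → ℂ := fun t => ph (-c) t * V t with hU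
  have nU : ∀ t, ‖U t‖ = ‖V t‖ := fun t => by rw [hU]; simp only [norm_mul, norm_ph, one_mul]
  have sU : ContDiff ℝ (⊤ : ℕ∞) U := (ph_smooth _).mul sV
  have dU : ∀ t, HasDerivAt U (ph (-c) t * (dd 0 Φ (t • e0) + I * (c / 2) * V t)) t := fun t =>
    ((ph_deriv (-c) t).mul (dV t)).congr_deriv (by push_cast; ring)
  have eU : deriv U = fun t => ph (-c) t * (dd 0 Φ (t • e0) + I * (c / 2) * V t) :=
    funext fun t => (dU t).deriv
  have dU' : ∀ t, HasDerivAt (deriv U) (((-((1 + c ^ 2 / 4) - ‖U t‖ ^ 2) : ℝ) : ℂ) * U t) t := by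
    intro t
    rw [eU]
    have k : HasDerivAt (fun t => dd 0 Φ (t • e0) + I * (c / 2) * V t)
        (dd 0 (dd 0 Φ) (t • e0) + I * (c / 2) * dd 0 Φ (t • e0)) t :=
      (dV' t).add ((dV t).const_mul _)
    refine ((ph_deriv (-c) t).mul k).congr_deriv ?_
    rw [nU]
    simp only [hU]
    push_cast
    linear_combination ph (-c) t * hVeq t + (c ^ 2 / 4 * ph (-c) t * V t : ℂ) * I_sq
  have hip : ip (U 0) (deriv U 0) = 0 := by
    have e := dd_normSq hΦ 0
    have e := congrFun e 0
    rw [h0] at e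
    have hph : ph (-c) 0 = 1 := by simp [ph]
    rw [eU]
    simp only [hU, hph, one_mul, hVdef, zero_smul]
    simp [ip]
    linarith
  obtain ⟨h, sh, ch, hneg⟩ := oned_unstable sU (fun t => (dU' t).deriv) (M := M) (M' := M' + |c| / 2 * M)
    (fun t => by rw [nU]; exact hΦM _) (fun t => by
      rw [eU]
      simp only [norm_mul, norm_ph, one_mul]
      refine (norm_add_le _ _).trans (add_le_add (hM' _) ?_)
      simp only [norm_mul, norm_I, one_mul, norm_div, norm_real, Real.norm_eq_abs, RCLike.norm_ofNat]
      exact mul_le_mul_of_nonneg_left (hΦM _) (by positivity)) hip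
    (by rw [nU]; simpa only [hVdef, zero_smul] using h1)
  set q : ℝ := ∫ t, qd (1 + c ^ 2 / 4) (U t) (h t) (deriv h t) with hq
  set H : ℝ := ∫ t, ‖h t‖ ^ 2 with hH
  have hH0 : 0 ≤ H := integral_nonneg fun t => sq_nonneg _
  obtain ⟨N, hN, hlt⟩ := dilate (μ := -q / (H + 1)) (by apply div_pos <;> linarith)
    zet_smooth zet_supp ⟨0, by rw [zet_one le_rfl (by norm_num)]; norm_num⟩
  set b : ℝ → ℝ := fun t => zet (t / N) with hb
  have sb : ContDiff ℝ (⊤ : ℕ∞) b := zet_smooth.comp (by fun_prop)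
  have cb : HasCompactSupport b := comp_div_supp zet_supp hN
  have db : deriv b = fun t => deriv zet (t / N) / N := funext fun t =>
    ((((zet_smooth.differentiable (by simp) _).hasDerivAt).comp t
      ((hasDerivAt_id t).div_const N)).congr_deriv (by simp [div_eq_mul_inv])).deriv
  set φ : Ed 2 → ℂ := fun x => (b (x 1) : ℂ) * (ph c (x 0) * h (x 0)) with hφ
  have sφ : Smooth φ := prod_smooth ((ph_smooth c).mul sh) sb
  have cφ : HasCompactSupport φ := by
    have k1 : HasCompactSupport (fun t => (b t : ℂ)) := cb.comp_left ofReal_zero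
    have k2 : HasCompactSupport (fun t => ph c t * h t) := ch.mul_left
    exact prod_supp (F := fun t => (b t : ℂ)) (G := fun t => ph c t * h t) k1 k2
  have nφ : Qform c Φ φ < 0 := by
    rw [hφ, Qform_prod hV sV.continuous sh ch sb cb, db]
    have hP : 0 ≤ ∫ t, (deriv zet (t / N) / N) ^ 2 := integral_nonneg fun t => sq_nonneg _
    have k1 : (∫ t, (deriv zet (t / N) / N) ^ 2) * (H + 1) < -q * ∫ t, b t ^ 2 := by
      have := mul_lt_mul_of_pos_right hlt (by linarith : 0 < H + 1)
      have e : -q / (H + 1) * (∫ t, zet (t / N) ^ 2) * (H + 1) = -q * ∫ t, zet (t / N) ^ 2 := by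
        field_simp
      rwa [e] at this
    change (∫ t, b t ^ 2) * q + (∫ t, (deriv zet (t / N) / N) ^ 2) * H < 0
    nlinarith
  -- a second unstable direction, obtained by a large shift in the second variable
  set s : Ed 2 := EuclideanSpace.single 1 (-(10 * N)) with hs'
  have nχ : Qform c Φ (fun x => φ (x - -s)) < 0 := by
    rw [← Qden_translate]
    have : (fun x => Φ (x - s)) = Φ := by
      funext x; rw [hV, hV]; simp [hs']
    rwa [this]
  have sub : tsupport φ ⊆ {x : Ed 2 | x 1 ∈ Set.Icc (-N) (2 * N)} := by
    refine closure_minimal (fun x hx => ?_) (isClosed_Icc.preimage (by fun_prop))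
    by_contra hn
    apply hx
    have : b (x 1) = 0 := zet_zero (by
      rw [Set.mem_ofPred_eq, Set.mem_Icc, not_and_or, not_le, not_le] at hn
      rw [div_le_iff₀ hN, le_div_iff₀ hN]
      exact hn.imp (fun h => by linarith) (fun h => by linarith))
    simp [hφ, this]
  have hdis : Disjoint (tsupport φ) (tsupport (fun x => φ (x - -s))) := by
    rw [tsupport_translate, Set.disjoint_left]
    intro x hx hx'
    have a1 := sub hx
    have a2 := sub hx'
    simp only [Set.mem_ofPred_eq, Set.mem_Icc, hs'] at a1 a2
    simp at a2
    linarith [a1.1, a1.2, a2.1, a2.2]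
  have cn1 := fun n => (smooth_translate (hs n) (ξ n)).continuous
  have e1 := (Q_conv hcn cn1 (fun n x => hM n _) hp sφ cφ).eventually (gt_mem_nhds nφ)
  have e2 := (Q_conv hcn cn1 (fun n x => hM n _) hp (smooth_translate sφ (-s))
    (compact_translate cφ (-s))).eventually (gt_mem_nhds nχ)
  obtain ⟨n, h1, h2⟩ := (e1.and e2).exists
  rw [Qden_translate] at h1 h2
  refine morse_two (hI n) (hs n).continuous (smooth_translate sφ _)
    (smooth_translate (smooth_translate sφ (-s)) (-ξ n)) (compact_translate cφ _)
    (compact_translate (compact_translate cφ (-s)) (-ξ n)) ?_ h1 h2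
  rw [tsupport_translate, tsupport_translate (fun x => φ (x - -s))]
  exact hdis.preimage _

/-! ### Only a bounded number of strips carry a density dip -/

lemma tendsto_Dl {f : ℕ → Ed 2 → ℂ} {g : Ed 2 → ℂ} {l : List (Fin 2)}
    (h : TendstoLocallyUniformly (fun n => Dl l (f n)) (Dl l g) atTop) (x : Ed 2) :
    Tendsto (fun n => Dl l (f n) x) atTop (𝓝 (Dl l g x)) :=
  (tendstoLocallyUniformlyOn_univ.2 h).tendsto_at (Set.mem_univ x)

lemma cut_nonneg (L : ℝ) (x : Ed 2) : 0 ≤ cut L x := bump2.nonneg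

/-- Critical dips of the density at which the transverse derivative is negligible on
ever wider strips converge to a one-dimensional profile with a dip, which is unstable. -/
lemma dip_contra {cn : ℕ → ℝ} {c : ℝ} (hcn : Tendsto cn atTop (𝓝 c)) {f : ℕ → Ed 2 → ℂ}
    (hs : ∀ n, Smooth (f n)) (hG : ∀ n, GPeq (cn n) (f n)) {M : ℝ} (hM : ∀ n x, ‖f n x‖ ≤ M)
    (hI : ∀ n, MorseIndexLE (cn n) (f n) 1) (hE : ∀ n, Integrable (SS (f n) 1))
    {y : ℕ → Ed 2} {r : ℝ} (hr : r < 2 * (1 + c ^ 2 / 4) / 3) (hy : ∀ n, ‖f n (y n)‖ ^ 2 ≤ r)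
    (hy0 : ∀ n, dd 0 (fun x => ‖f n x‖ ^ 2) (y n) = 0)
    (hT : ∀ n : ℕ, ∫ x in {x : Ed 2 | |x 1 - y n 1| ≤ n}, SS (f n) 1 x ≤ 1 / ((n : ℝ) + 1)) :
    False := by
  obtain ⟨Mc, hMc⟩ : ∃ M, ∀ n, |cn n| ≤ M := by
    obtain ⟨M, hM⟩ := hcn.norm.bddAbove_range
    exact ⟨M, fun n => hM ⟨n, rfl⟩⟩
  have hb := uniform_bounds ⟨Mc, hMc⟩ hs hG ⟨M, hM⟩
  set ξ : ℕ → Ed 2 := fun n => -y n with hξ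
  have hsF : ∀ n, Smooth (fun x => f n (x - ξ n)) := fun n => smooth_translate (hs n) _
  obtain ⟨φ, hφ, g, hg, hconv⟩ := compactness hsF (fun k => (hb k).translate ξ)
  have hl : ∀ l x, Tendsto (fun n => Dl l (fun x => f (φ n) (x - ξ (φ n))) x) atTop
      (𝓝 (Dl l g x)) := fun l x => tendsto_Dl (hconv l) x
  have hd1 : ∀ x, dd 1 g x = 0 := by
    by_contra! hx
    obtain ⟨x0, hx0⟩ := hx
    set L := ‖x0‖ + 1 with hL
    have hL0 : 0 < L := by positivity
    obtain ⟨K, hK⟩ := BD.Dl_bound (l := [1]) (fun k => (hb k).translate ξ)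
    have hlim : Tendsto (fun n => ∫ x, cut L x * SS (fun x => f (φ n) (x - ξ (φ n))) 1 x) atTop
        (𝓝 (∫ x, cut L x * SS g 1 x)) := by
      refine tendsto_integral_of_dominated_convergence (fun x => cut L x * K ^ 2)
        (fun n => ((cut_smooth L).continuous.mul
          (smooth_SS (hsF _) 1).continuous).aestronglyMeasurable)
        (((cut_smooth L).continuous.mul continuous_const).integrable_of_hasCompactSupport
          (cut_compact hL0).mul_right)
        (fun n => ae_of_all _ fun x => ?_) (ae_of_all _ fun x => ?_)
      · rw [Real.norm_of_nonneg (mul_nonneg (cut_nonneg _ _) (SS_nonneg _ _))]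
        refine mul_le_mul_of_nonneg_left ?_ (cut_nonneg _ _)
        exact pow_le_pow_left₀ (norm_nonneg _) (hK (φ n) x) 2
      · exact ((hl [1] x).norm.pow 2).const_mul _
    have hle : ∀ᶠ n in atTop, ∫ x, cut L x * SS (fun x => f (φ n) (x - ξ (φ n))) 1 x
        ≤ 1 / ((φ n : ℝ) + 1) := by
      filter_upwards [(tendsto_natCast_atTop_atTop.comp hφ.tendsto_atTop).eventually_ge_atTop
        (2 * L)] with n hn
      have hn' : 2 * L ≤ (φ n : ℝ) := hn
      have e : (∫ x, cut L x * SS (fun x => f (φ n) (x - ξ (φ n))) 1 x) =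
          ∫ x, cut L (x - y (φ n)) * SS (f (φ n)) 1 x := by
        rw [← integral_sub_right_eq_self (μ := volume) _ (y (φ n))]
        congr 1; ext x
        simp only [SS, dd_translate, hξ]
        congr 4; abel
      have hms : MeasurableSet {x : Ed 2 | |x 1 - y (φ n) 1| ≤ (φ n : ℕ)} := by
        apply IsClosed.measurableSet
        exact isClosed_le (by fun_prop) continuous_const
      rw [e]
      refine le_trans ?_ (hT (φ n))
      rw [← integral_indicator hms]
      refine integral_mono_of_nonneg (ae_of_all _ fun x => mul_nonneg (cut_nonneg _ _)
        (SS_nonneg _ _)) ((hE _).indicator hms) (ae_of_all _ fun x => ?_)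
      show cut L (x - y (φ n)) * SS (f (φ n)) 1 x ≤ _
      by_cases hx : x ∈ {x : Ed 2 | |x 1 - y (φ n) 1| ≤ (φ n : ℕ)}
      · rw [Set.indicator_of_mem hx]
        exact mul_le_of_le_one_left (SS_nonneg _ _) (le_trans (le_abs_self _) (cut_le _ _))
      · rw [Set.indicator_of_notMem hx, cut_zero hL0, zero_mul]
        simp only [Set.mem_ofPred_eq, not_le] at hx
        have := PiLp.norm_apply_le (x - y (φ n)) 1
        simp only [PiLp.sub_apply, Real.norm_eq_abs] at this
        linarith
    have h0 : Tendsto (fun n => 1 / ((φ n : ℝ) + 1)) atTop (𝓝 0) :=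
      tendsto_one_div_add_atTop_nhds_zero_nat.comp hφ.tendsto_atTop
    have hfin := le_of_tendsto_of_tendsto hlim h0 hle
    have hpos : 0 < ∫ x, cut L x * SS g 1 x := by
      refine Continuous.integral_pos_of_hasCompactSupport_nonneg_nonzero (x := x0)
        ((cut_smooth L).continuous.mul (smooth_SS hg 1).continuous)
        (cut_compact hL0).mul_right
        (fun x => mul_nonneg (cut_nonneg _ _) (SS_nonneg _ _)) ?_
      rw [cut_one hL0 (by linarith), one_mul]
      simpa [SS] using hx0
    linarith
  have hGg : GPeq c g := GPeq_limit (hcn.comp hφ.tendsto_atTop)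
    (fun n => GPeq_translate (hG (φ n)) (ξ (φ n))) hl
  obtain ⟨K, hK⟩ := BD.Dl_bound (l := [0]) (fun k => (hb k).translate ξ)
  refine unstable_contra (hcn.comp hφ.tendsto_atTop) (ψn := fun n => f (φ n))
    (ξ := fun n => ξ (φ n)) (fun n => hs _) (fun n x => hM _ x) (fun n => hI _) hg hGg
    (fun x => hl [] x) hd1 (M' := K) (fun x => ?_) ?_ ?_
  · exact le_of_tendsto (hl [0] x).norm (Eventually.of_forall fun n => hK _ x)
  · have h1 : Tendsto (fun n => dd 0 (fun x => ‖f (φ n) (x - ξ (φ n))‖ ^ 2) 0) atTop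
        (𝓝 (dd 0 (fun x => ‖g x‖ ^ 2) 0)) := by
      rw [dd_normSq hg]
      have e : (fun n => dd 0 (fun x => ‖f (φ n) (x - ξ (φ n))‖ ^ 2) 0) = fun n =>
          2 * ((f (φ n) (0 - ξ (φ n))).re * (dd 0 (fun x => f (φ n) (x - ξ (φ n))) 0).re +
          (f (φ n) (0 - ξ (φ n))).im * (dd 0 (fun x => f (φ n) (x - ξ (φ n))) 0).im) := by
        ext n; rw [dd_normSq (hsF _)]
      rw [e]
      have a1 := hl [] 0
      have a2 := hl [0] 0
      have r1 := (continuous_re.tendsto _).comp a1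
      have r2 := (continuous_re.tendsto _).comp a2
      have i1 := (continuous_im.tendsto _).comp a1
      have i2 := (continuous_im.tendsto _).comp a2
      exact ((r1.mul r2).add (i1.mul i2)).const_mul 2
    refine tendsto_nhds_unique h1 ?_
    have e : ∀ n, dd 0 (fun x => ‖f (φ n) (x - ξ (φ n))‖ ^ 2) 0 = 0 := by
      intro n
      have := dd_translate (fun x => ‖f (φ n) x‖ ^ 2) 0 (ξ (φ n))
      rw [this]
      simpa [hξ] using hy0 (φ n)
    simp only [e]
    exact tendsto_const_nhds
  · refine lt_of_le_of_lt ?_ hr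
    refine le_of_tendsto ((hl [] 0).norm.pow 2) (Eventually.of_forall fun n => ?_)
    have := hy (φ n)
    simpa [Dl, hξ] using this

lemma count_near (D : Finset ℤ) (t : ℝ) (w : ℕ) :
    ((D.filter (fun k : ℤ => |t - k| ≤ w)).card : ℝ) ≤ 2 * w + 1 := by
  have h1 : D.filter (fun k : ℤ => |t - k| ≤ w) ⊆ Finset.Icc ⌈t - w⌉ ⌊t + w⌋ := by
    intro k hk
    obtain ⟨a, b⟩ := abs_le.1 (Finset.mem_filter.1 hk).2
    rw [Finset.mem_Icc, Int.ceil_le, Int.le_floor]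
    constructor <;> linarith
  have h2 := Finset.card_le_card h1
  rw [Int.card_Icc] at h2
  have h3 : (⌊t + w⌋ + 1 - ⌈t - w⌉).toNat ≤ 2 * w + 1 := by
    have a : (⌊t + w⌋ : ℝ) ≤ t + w := Int.floor_le _
    have b : t - w ≤ (⌈t - w⌉ : ℝ) := Int.le_ceil _
    have : ⌊t + w⌋ ≤ ⌈t - w⌉ + 2 * w := by
      have : (⌊t + w⌋ : ℝ) ≤ ((⌈t - w⌉ + 2 * w : ℤ) : ℝ) := by push_cast; linarith
      exact_mod_cast this
    omega
  exact_mod_cast h2.trans h3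

lemma strip_measurable (a : ℝ) (w : ℝ) : MeasurableSet {x : Ed 2 | |x 1 - a| ≤ w} :=
  (isClosed_le (by fun_prop) continuous_const).measurableSet

/-- Integer-centred strips of half-width `w` overlap at most `2w+1` times. -/
lemma sum_strips {T : Ed 2 → ℝ} (hT : Integrable T) (h0 : ∀ x, 0 ≤ T x) (D : Finset ℤ) (w : ℕ) :
    ∑ k ∈ D, ∫ x in {x : Ed 2 | |x 1 - k| ≤ w}, T x ≤ (2 * w + 1) * ∫ x, T x := by
  have e : ∀ k : ℤ, ∫ x in {x : Ed 2 | |x 1 - k| ≤ w}, T x =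
      ∫ x, Set.indicator {x : Ed 2 | |x 1 - k| ≤ w} T x := fun k =>
    (integral_indicator (strip_measurable k w)).symm
  simp only [e]
  have h_intble : ∀ k ∈ D, Integrable (Set.indicator {x : Ed 2 | |x 1 - (k : ℤ)| ≤ w} T) :=
    fun k _ => hT.indicator (strip_measurable k w)
  rw [← integral_finsetSum D h_intble, ← integral_const_mul]
  refine integral_mono (integrable_finsetSum D h_intble) (hT.const_mul _) fun x => ?_
  show ∑ k ∈ D, Set.indicator {x : Ed 2 | |x 1 - k| ≤ w} T x ≤ (2 * w + 1) * T x
  have : ∑ k ∈ D, Set.indicator {x : Ed 2 | |x 1 - k| ≤ w} T x =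
      ((D.filter (fun k : ℤ => |x 1 - k| ≤ w)).card : ℝ) * T x := by
    rw [← nsmul_eq_mul, ← Finset.sum_const, Finset.sum_filter]
    refine Finset.sum_congr rfl fun k _ => ?_
    simp only [Set.indicator_apply, Set.mem_ofPred_eq]
  rw [this]
  exact mul_le_mul_of_nonneg_right (count_near D _ w) (h0 x)

/-- A dip below `r < 1` yields a critical dip on the same horizontal line. -/
lemma line_min {ψ : Ed 2 → ℂ} (hs : Smooth ψ) (hlim : Tendsto ψ (cocompact (Ed 2)) (𝓝 1))
    {r : ℝ} (hr : r < 1) {x : Ed 2} (hx : ‖ψ x‖ ^ 2 < r) :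
    ∃ y : Ed 2, y 1 = x 1 ∧ ‖ψ y‖ ^ 2 ≤ r ∧ dd 0 (fun z => ‖ψ z‖ ^ 2) y = 0 := by
  set u : ℝ → ℝ := fun t => ‖ψ (x + t • EuclideanSpace.single 0 1)‖ ^ 2 with hu
  have hline : Tendsto (fun t : ℝ => x + t • (EuclideanSpace.single 0 1 : Ed 2)) (cocompact ℝ)
      (cocompact (Ed 2)) := by
    rw [← Metric.cobounded_eq_cocompact, ← Metric.cobounded_eq_cocompact,
      ← tendsto_norm_atTop_iff_cobounded]
    have : Tendsto (fun t : ℝ => ‖t‖ - ‖x‖) (Bornology.cobounded ℝ) atTop :=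
      tendsto_atTop_add_const_right _ _ tendsto_norm_cobounded_atTop
    refine tendsto_atTop_mono (fun t => ?_) this
    have := norm_sub_norm_le (t • (EuclideanSpace.single 0 1 : Ed 2)) (-x)
    rw [norm_smul, norm_neg, PiLp.norm_single, norm_one, mul_one, sub_neg_eq_add] at this
    rw [add_comm]; exact this
  have hu1 : Tendsto u (cocompact ℝ) (𝓝 1) := by
    have := ((hlim.comp hline).norm).pow 2
    simpa using this
  have hd : ∀ t, HasDerivAt u (dd 0 (fun z => ‖ψ z‖ ^ 2) (x + t • EuclideanSpace.single 0 1)) t :=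
    fun t => hasDerivAt_line (smooth_normSq hs).diff x 0 t
  have hc : Continuous u := continuous_iff_continuousAt.2 fun t => (hd t).continuousAt
  have hu0 : u 0 < r := by simpa [hu] using hx
  obtain ⟨t, ht⟩ := hc.exists_forall_le' 0
    ((hu1.eventually_const_lt (hu0.trans hr)).mono fun _ h => h.le)
  refine ⟨x + t • EuclideanSpace.single 0 1, by simp, (ht 0).trans hu0.le, ?_⟩
  exact IsLocalMin.hasDerivAt_eq_zero (Eventually.of_forall ht) (hd t)

/-- Far enough in the sequence, the number of strips `k - 1 ≤ x₁ ≤ k + 2` in which the density dips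
below `r` is bounded: if it were not, one of these strips would, by pigeonhole, lie in an arbitrarily
wide strip of negligible transverse energy. -/
lemma few_dips {cn : ℕ → ℝ} {c : ℝ} (hcn : Tendsto cn atTop (𝓝 c)) {ψn : ℕ → Ed 2 → ℂ}
    (hs : ∀ n, Smooth (ψn n)) (hG : ∀ n, GPeq (cn n) (ψn n)) {M : ℝ} (hM : ∀ n x, ‖ψn n x‖ ≤ M)
    (hI : ∀ n, MorseIndexLE (cn n) (ψn n) 1) (hE : ∀ n, Integrable (SS (ψn n) 1))
    (hlim : ∀ n, Tendsto (ψn n) (cocompact (Ed 2)) (𝓝 1))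
    {C' : ℝ} (hT : ∀ n, ∫ x, SS (ψn n) 1 x ≤ C')
    {r : ℝ} (hr : r < 2 * (1 + c ^ 2 / 4) / 3) (hr1 : r < 1) :
    ∃ N : ℕ, ∀ n ≥ N, ∀ D : Finset ℤ, (∀ k ∈ D, ∃ x : Ed 2, (k : ℝ) - 1 ≤ x 1 ∧ x 1 ≤ k + 2 ∧
      ‖ψn n x‖ ^ 2 < r) → D.card ≤ N := by
  by_contra! hcon
  have key : ∀ j : ℕ, ∃ n ≥ j, ∃ y : Ed 2, ‖ψn n y‖ ^ 2 ≤ r ∧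
      dd 0 (fun x => ‖ψn n x‖ ^ 2) y = 0 ∧
      ∫ x in {x : Ed 2 | |x 1 - y 1| ≤ j}, SS (ψn n) 1 x ≤ 1 / ((j : ℝ) + 1) := by
    intro j
    set B : ℝ := (2 * ((j + 2 : ℕ) : ℝ) + 1) * C' * (j + 1) with hB
    obtain ⟨n, hn, D, hD, hcard⟩ := hcon (max j ⌈B⌉₊)
    refine ⟨n, le_trans (le_max_left _ _) hn, ?_⟩
    have hcB : B < D.card := lt_of_le_of_lt (Nat.le_ceil B)
      (by exact_mod_cast lt_of_le_of_lt (le_max_right _ _) hcard)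
    have hsum := sum_strips (hE n) (SS_nonneg 1) D (j + 2)
    obtain ⟨k, hk, hkle⟩ : ∃ k ∈ D, ∫ x in {x : Ed 2 | |x 1 - k| ≤ (j + 2 : ℕ)}, SS (ψn n) 1 x ≤
        1 / ((j : ℝ) + 1) := by
      by_contra! hall
      have h1 : (D.card : ℝ) * (1 / ((j : ℝ) + 1)) ≤
          ∑ k ∈ D, ∫ x in {x : Ed 2 | |x 1 - k| ≤ (j + 2 : ℕ)}, SS (ψn n) 1 x := by
        rw [← nsmul_eq_mul, ← Finset.sum_const]
        exact Finset.sum_le_sum fun k hk => (hall k hk).le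
      have h2 : (D.card : ℝ) * (1 / ((j : ℝ) + 1)) ≤ (2 * ((j + 2 : ℕ) : ℝ) + 1) * C' :=
        h1.trans (hsum.trans (mul_le_mul_of_nonneg_left (hT n) (by positivity)))
      rw [mul_one_div, div_le_iff₀ (by positivity)] at h2
      linarith
    obtain ⟨x, hx1, hx2, hx3⟩ := hD k hk
    obtain ⟨y, hy1, hy2, hy3⟩ := line_min (hs n) (hlim n) hr1 hx3
    refine ⟨y, hy2, hy3, le_trans ?_ hkle⟩
    refine setIntegral_mono_set (hE n).integrableOn (ae_of_all _ fun x => SS_nonneg _ _)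
      (LE.le.eventuallyLE fun z hz => ?_)
    simp only [Set.mem_ofPred_eq] at hz ⊢
    have : |y 1 - k| ≤ 2 := by rw [hy1, abs_le]; constructor <;> linarith
    have h3 := abs_sub_le (z 1) (y 1) k
    push_cast
    linarith
  choose ν hν y hy hy0 hyT using key
  have hνt : Tendsto ν atTop atTop := tendsto_atTop_mono hν tendsto_id
  exact dip_contra (hcn.comp hνt) (f := fun j => ψn (ν j)) (fun j => hs _) (fun j => hG _)
    (fun j x => hM _ x) (fun j => hI _) (fun j => hE _) hr hy hy0 hyT

/-! ### A bound for the energy -/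

lemma zet_shift_smooth (k : ℝ) : ContDiff ℝ (⊤ : ℕ∞) (fun t => zet (t - k)) :=
  zet_smooth.comp (contDiff_id.sub contDiff_const)

lemma zet_shift_supp (k : ℝ) : HasCompactSupport (fun t => zet (t - k)) :=
  zet_supp.comp_homeomorph (Homeomorph.subRight k)

/-- The mass of the strip cutoff. -/
def zmass : ℝ := ∫ t, zet t

/-- In boundedly many unit strips `η²` is controlled by integrating by parts in `x₁` against a
bounded primitive of the strip cutoffs; half of the total may be absorbed. -/
lemma bad_bound {ψ : Ed 2 → ℂ} (hs : Smooth ψ) (hE : FiniteEnergy ψ) {M : ℝ}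
    (hM : ∀ x, ‖ψ x‖ ≤ M) {N : ℕ} {D : Finset ℤ} (hN : D.card ≤ N) :
    ∫ x : Ed 2, (∑ k ∈ D, zet (x 1 - k)) * etaF ψ x ^ 2 ≤
      1 / 2 * (∫ x, etaF ψ x ^ 2) + 8 * (M * (N * zmass)) ^ 2 * ∫ x, SS ψ 1 x := by
  have hM0 : 0 ≤ M := le_trans (norm_nonneg _) (hM 0)
  have hz0 : 0 ≤ zmass := integral_nonneg zet_nonneg
  set b : ℝ → ℝ := fun t => ∑ k ∈ D, zet (t - k) with hb
  have hbs : ContDiff ℝ (⊤ : ℕ∞) b := ContDiff.sum fun k _ => zet_shift_smooth k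
  have hzint : Integrable zet := zet_smooth.continuous.integrable_of_hasCompactSupport zet_supp
  have hbi : Integrable b := integrable_finsetSum D fun k _ => hzint.comp_sub_right (k : ℝ)
  have hb0 : ∀ t, 0 ≤ b t := fun t => Finset.sum_nonneg fun k _ => zet_nonneg _
  have hbint : ∫ t, b t = D.card * zmass := by
    rw [hb, integral_finsetSum D fun k _ => hzint.comp_sub_right (k : ℝ)]
    simp only [integral_sub_right_eq_self (fun t => zet t)]
    rw [Finset.sum_const, nsmul_eq_mul, zmass]
  set Z : ℝ := N * zmass with hZ
  have hZ0 : 0 ≤ Z := by positivity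
  obtain ⟨hB, hB'⟩ := primitive hbs 0
  set B : ℝ → ℝ := fun s => ∫ t in (0:ℝ)..s, b t with hBdef
  have hBb : ∀ s, |B s| ≤ Z := by
    intro s
    have h1 : |B s| ≤ ∫ t, |b t| := by
      rw [← Real.norm_eq_abs]
      refine (intervalIntegral.norm_integral_le_integral_norm_uIoc).trans ?_
      exact setIntegral_le_integral hbi.norm (ae_of_all _ fun x => norm_nonneg _)
    have h2 : (fun t => |b t|) = b := by ext t; exact abs_of_nonneg (hb0 t)
    rw [h2, hbint] at h1
    exact h1.trans (mul_le_mul_of_nonneg_right (by exact_mod_cast hN) hz0)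
  have hη := smooth_eta hs
  have hη2 := int_eta_sq hs hE
  have hT := int_SS hs hE 1
  have hBx : Smooth (fun x : Ed 2 => B (x 1)) := smooth_coord hB 1
  set X : Fin 2 → Ed 2 → ℝ := fun i x => if i = 0 then 0 else B (x 1) * (etaF ψ x * etaF ψ x)
  have hX1 : X 1 = fun x => B (x 1) * (etaF ψ x * etaF ψ x) := by ext x; simp [X]
  have hX0 : X 0 = fun x => 0 := by ext x; simp [X]
  have hX : ∀ i, Smooth (X i) := by
    intro i; fin_cases i
    · show Smooth (X 0); rw [hX0]; exact contDiff_const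
    · show Smooth (X 1); rw [hX1]; exact hBx.mul (hη.mul hη)
  set W : Ed 2 → ℝ := fun x => B (x 1) * (2 * etaF ψ x * dd 1 (etaF ψ) x) with hW
  have hdivx : ∀ x, dd 0 (X 0) x + dd 1 (X 1) x = b (x 1) * etaF ψ x ^ 2 + W x := by
    intro x
    rw [hX0, dd_const, hX1, dd_mul hBx.diff (hη.mul hη).diff, dd_mul hη.diff hη.diff, dd_coord hB]
    simp only [if_true, hW]
    rw [hB']; ring
  have hWb : ∀ x, |W x| ≤ 1 / 2 * etaF ψ x ^ 2 + 8 * (M * Z) ^ 2 * SS ψ 1 x := by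
    intro x
    have h1 : |dd 1 (etaF ψ) x| ≤ 2 * (M * ‖dd 1 ψ x‖) := by
      rw [dd_eta hs, abs_neg, abs_mul, abs_two]
      refine mul_le_mul_of_nonneg_left ?_ zero_le_two
      have e : (ψ x).re * (dd 1 ψ x).re + (ψ x).im * (dd 1 ψ x).im =
          (ψ x * (starRingEnd ℂ) (dd 1 ψ x)).re := by simp [mul_re]
      rw [e]
      refine (abs_re_le_norm _).trans ?_
      rw [norm_mul, RCLike.norm_conj]
      exact mul_le_mul_of_nonneg_right (hM x) (norm_nonneg _)
    have h2 : |W x| ≤ Z * (2 * |etaF ψ x| * (2 * (M * ‖dd 1 ψ x‖))) := by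
      simp only [hW]
      rw [abs_mul, abs_mul, abs_mul, abs_two]
      gcongr
      exact hBb _
    refine h2.trans ?_
    unfold SS
    rw [← sq_abs (etaF ψ x)]
    nlinarith [sq_nonneg (|etaF ψ x| - 4 * (M * Z) * ‖dd 1 ψ x‖)]
  have hWi : Integrable W := by
    refine ((hη2.const_mul (1/2)).add (hT.const_mul (8 * (M * Z) ^ 2))).mono' ?_
      (ae_of_all _ hWb)
    exact (hBx.continuous.mul ((continuous_const.mul hη.continuous).mul
      (hη.dd 1).continuous)).aestronglyMeasurable
  have hbη : Integrable (fun x : Ed 2 => b (x 1) * etaF ψ x ^ 2) := by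
    refine (hη2.const_mul D.card).mono'
      ((smooth_coord hbs 1).continuous.mul (hη.continuous.pow 2)).aestronglyMeasurable
      (ae_of_all _ fun x => ?_)
    rw [Real.norm_of_nonneg (mul_nonneg (hb0 _) (sq_nonneg _))]
    refine mul_le_mul_of_nonneg_right ?_ (sq_nonneg _)
    have : b (x 1) ≤ ∑ k ∈ D, (1:ℝ) := Finset.sum_le_sum fun k _ => zet_le_one _
    simpa using this
  have hdiv := div_thm hX (g := fun x => Z * etaF ψ x ^ 2) (h := fun _ => 0) (k := fun _ => 0)
    (hη2.const_mul Z) (fun x => by positivity) (by simp) tendsto_const_nhds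
    (by
      intro i x
      fin_cases i
      · show |X 0 x| ≤ _
        rw [hX0]; simp; positivity
      · show |X 1 x| ≤ _
        rw [hX1]
        simp only [abs_mul, abs_zero, zero_mul, add_zero]
        rw [← sq_abs (etaF ψ x), sq]
        exact mul_le_mul_of_nonneg_right (hBb _) (by positivity))
    (by simp only [hdivx]; exact hbη.add hWi)
  simp only [hdivx] at hdiv
  rw [integral_add hbη hWi] at hdiv
  have h3 : -∫ x, W x ≤ ∫ x, (1 / 2 * etaF ψ x ^ 2 + 8 * (M * Z) ^ 2 * SS ψ 1 x) := by
    rw [← integral_neg]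
    exact integral_mono hWi.neg ((hη2.const_mul (1/2)).add (hT.const_mul (8 * (M * Z) ^ 2)))
      fun x => (neg_le_abs _).trans (hWb x)
  rw [integral_add (hη2.const_mul (1/2)) (hT.const_mul (8 * (M * Z) ^ 2)), integral_const_mul,
    integral_const_mul] at h3
  linarith

/-- Summation over unit strips of the bounds on `∫ η²`: coercivity on the good ones, `bad_bound` on
the others. -/
lemma int_eta_bound {ψ : Ed 2 → ℂ} (hs : Smooth ψ) (hE : FiniteEnergy ψ) {M : ℝ}
    (hM : ∀ x, ‖ψ x‖ ≤ M) {C' : ℝ} (hT : ∫ x, SS ψ 1 x ≤ C') {K : ℝ} (hK : 0 ≤ K) {N : ℕ}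
    {bad : ℤ → Prop} (hN : ∀ D : Finset ℤ, (∀ k ∈ D, bad k) → D.card ≤ N)
    (hgood : ∀ k : ℤ, ¬ bad k → ∫ x : Ed 2, zet (x 1 - k) * etaF ψ x ^ 2 ≤
      K * ∫ x : Ed 2, zet (x 1 - k) * SS ψ 1 x) :
    ∫ x, etaF ψ x ^ 2 ≤ 2 * (5 * K + 8 * (M * (N * zmass)) ^ 2) * C' := by
  classical
  have hη := smooth_eta hs
  have hη2 := int_eta_sq hs hE
  have hTi := int_SS hs hE 1
  have hzb : ∀ (k : ℤ) {f : Ed 2 → ℝ}, Continuous f → Integrable f →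
      Integrable (fun x : Ed 2 => zet (x 1 - k) * f x) := fun k f hf hfi =>
    hfi.bdd_mul (c := 1) (smooth_coord (zet_shift_smooth k) 1).continuous.aestronglyMeasurable
      (ae_of_all _ fun x => by rw [Real.norm_of_nonneg (zet_nonneg _)]; exact zet_le_one _)
  have hsumint : ∀ D : Finset ℤ, ∫ x : Ed 2, (∑ k ∈ D, zet (x 1 - k)) * etaF ψ x ^ 2 =
      ∑ k ∈ D, ∫ x : Ed 2, zet (x 1 - k) * etaF ψ x ^ 2 := by
    intro D
    simp only [Finset.sum_mul]
    exact integral_finsetSum D fun k _ => hzb k (hη.continuous.pow 2) hη2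
  have hstrip : ∀ k : ℤ, ∫ x : Ed 2, zet (x 1 - k) * SS ψ 1 x ≤
      ∫ x in {x : Ed 2 | |x 1 - k| ≤ (2:ℕ)}, SS ψ 1 x := by
    intro k
    rw [← integral_indicator (strip_measurable _ _)]
    refine integral_mono (hzb k (smooth_SS hs 1).continuous hTi)
      (hTi.indicator (strip_measurable _ _)) fun x => ?_
    show zet (x 1 - k) * SS ψ 1 x ≤ _
    by_cases hx : x ∈ {x : Ed 2 | |x 1 - k| ≤ (2:ℕ)}
    · rw [Set.indicator_of_mem hx]
      exact mul_le_of_le_one_left (SS_nonneg _ _) (zet_le_one _)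
    · rw [Set.indicator_of_notMem hx, zet_zero, zero_mul]
      simp only [Set.mem_ofPred_eq, not_le, lt_abs] at hx
      push_cast at hx
      rcases hx with h | h
      · right; linarith
      · left; linarith
  have hF : ∀ L : ℕ, ∫ x in {x : Ed 2 | |x 1 - 0| ≤ (L:ℝ)}, etaF ψ x ^ 2 ≤
      5 * K * C' + (1 / 2 * (∫ x, etaF ψ x ^ 2) + 8 * (M * (N * zmass)) ^ 2 * C') := by
    intro L
    set F : Finset ℤ := Finset.Icc (-(L:ℤ)) L
    have h1 : ∫ x in {x : Ed 2 | |x 1 - 0| ≤ (L:ℝ)}, etaF ψ x ^ 2 ≤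
        ∫ x : Ed 2, (∑ k ∈ F, zet (x 1 - k)) * etaF ψ x ^ 2 := by
      rw [← integral_indicator (strip_measurable _ _)]
      refine integral_mono (hη2.indicator (strip_measurable _ _)) ?_ fun x => ?_
      · simp only [Finset.sum_mul]
        exact integrable_finsetSum F fun k _ => hzb k (hη.continuous.pow 2) hη2
      · show _ ≤ (∑ k ∈ F, zet (x 1 - k)) * etaF ψ x ^ 2
        have hsn : 0 ≤ ∑ k ∈ F, zet (x 1 - k) := Finset.sum_nonneg fun k _ => zet_nonneg _
        by_cases hx : x ∈ {x : Ed 2 | |x 1 - 0| ≤ (L:ℝ)}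
        · rw [Set.indicator_of_mem hx]
          refine le_mul_of_one_le_left (sq_nonneg _) ?_
          simp only [Set.mem_ofPred_eq, sub_zero, abs_le] at hx
          have hm : ⌊x 1⌋ ∈ F := by
            rw [Finset.mem_Icc]
            constructor
            · rw [Int.le_floor]; push_cast; exact hx.1
            · have : (⌊x 1⌋ : ℝ) ≤ (L : ℤ) := by push_cast; exact (Int.floor_le _).trans hx.2
              exact_mod_cast this
          rw [← zet_one (x := x 1 - ⌊x 1⌋) (by linarith [Int.floor_le (x 1)])
            (by linarith [Int.lt_floor_add_one (x 1)])]
          exact Finset.single_le_sum (f := fun k : ℤ => zet (x 1 - k))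
            (fun k _ => zet_nonneg _) hm
        · rw [Set.indicator_of_notMem hx]
          positivity
    refine h1.trans ?_
    rw [hsumint, ← Finset.sum_filter_not_add_sum_filter F bad, ← hsumint (F.filter bad)]
    refine add_le_add ?_ ?_
    · have h2 : ∑ k ∈ F.filter (fun k => ¬ bad k), ∫ x : Ed 2, zet (x 1 - k) * etaF ψ x ^ 2 ≤
          ∑ k ∈ F.filter (fun k => ¬ bad k),
            K * ∫ x in {x : Ed 2 | |x 1 - k| ≤ (2:ℕ)}, SS ψ 1 x :=
        Finset.sum_le_sum fun k hk => (hgood k (Finset.mem_filter.1 hk).2).trans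
          (mul_le_mul_of_nonneg_left (hstrip k) hK)
      rw [← Finset.mul_sum] at h2
      have h3 := sum_strips hTi (SS_nonneg 1) (F.filter (fun k => ¬ bad k)) 2
      push_cast at h3 h2
      have h4 := mul_le_mul_of_nonneg_left (h3.trans
        (mul_le_mul_of_nonneg_left hT (by norm_num))) hK
      linarith
    · refine (bad_bound hs hE hM (hN _ fun k hk => (Finset.mem_filter.1 hk).2)).trans ?_
      gcongr
  have hlim : Tendsto (fun L : ℕ => ∫ x in {x : Ed 2 | |x 1 - 0| ≤ (L:ℝ)}, etaF ψ x ^ 2) atTop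
      (𝓝 (∫ x, etaF ψ x ^ 2)) := by
    have hmono : Monotone (fun L : ℕ => {x : Ed 2 | |x 1 - 0| ≤ (L:ℝ)}) := by
      intro a b hab x hx
      simp only [Set.mem_ofPred_eq] at hx ⊢
      exact hx.trans (by exact_mod_cast hab)
    have h := tendsto_setIntegral_of_monotone (μ := volume) (f := fun x => etaF ψ x ^ 2)
      (fun L : ℕ => strip_measurable 0 (L:ℝ)) hmono hη2.integrableOn
    have hU : (⋃ L : ℕ, {x : Ed 2 | |x 1 - 0| ≤ (L:ℝ)}) = Set.univ := by
      rw [Set.eq_univ_iff_forall]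
      intro x
      rw [Set.mem_iUnion]
      exact exists_nat_ge |x 1 - 0|
    rw [hU, setIntegral_univ] at h
    exact h
  have := le_of_tendsto' hlim hF
  linarith

lemma pos_lower {ψ : Ed 2 → ℂ} (hc : Continuous ψ) (hlim : Tendsto ψ (cocompact (Ed 2)) (𝓝 1))
    {S : Set (Ed 2)} (hS : IsClosed S) (hne : ∀ x ∈ S, ψ x ≠ 0) :
    ∃ m > 0, ∀ x ∈ S, m ≤ ‖ψ x‖ := by
  have h1 : ∀ᶠ x in cocompact (Ed 2), 1 / 2 < ‖ψ x‖ := by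
    have := hlim.norm
    rw [norm_one] at this
    exact this.eventually_const_lt (by norm_num)
  obtain ⟨K, hK, hKs⟩ := mem_cocompact.1 h1
  rcases (S ∩ K).eq_empty_or_nonempty with he | he
  · refine ⟨1 / 2, by norm_num, fun x hx => ?_⟩
    have : x ∉ K := fun hxK => by
      have : x ∈ S ∩ K := ⟨hx, hxK⟩
      rw [he] at this; exact this
    exact (hKs this : _ < _).le
  · obtain ⟨x0, hx0, hmin⟩ := (hK.inter_left hS).exists_isMinOn he hc.norm.continuousOn
    refine ⟨min (1 / 2) ‖ψ x0‖, lt_min (by norm_num) (norm_pos_iff.2 (hne _ hx0.1)),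
      fun x hx => ?_⟩
    by_cases hxK : x ∈ K
    · exact (min_le_right _ _).trans (hmin ⟨hx, hxK⟩)
    · exact (min_le_left _ _).trans (hKs hxK : _ < _).le

lemma abs_coord_le (x : Ed 2) (i : Fin 2) : |x i| ≤ ‖x‖ := by
  simpa using PiLp.norm_apply_le x i

/-- By the virial identity for `∂₀ψ`, the energy is determined by `∂₁ψ` and `η`. -/
lemma energy_eq {ψ : Ed 2 → ℂ} {c : ℝ} (hs : Smooth ψ) (h : GPeq c ψ) (hE : FiniteEnergy ψ) :
    energy ψ = (∫ x, SS ψ 1 x) + 1 / 2 * ∫ x, etaF ψ x ^ 2 := by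
  have h0 := virial0 hs h hE
  have h1 : energy ψ = 1 / 2 * (∫ x, SS ψ 0 x) + 1 / 2 * (∫ x, SS ψ 1 x) +
      1 / 4 * ∫ x, etaF ψ x ^ 2 := by
    have a := (int_SS hs hE 0).const_mul (1/2)
    have b := (int_SS hs hE 1).const_mul (1/2)
    have d := (int_eta_sq hs hE).const_mul (1/4)
    unfold energy
    simp only [eDen_eq]
    have ab : Integrable (fun x => 1 / 2 * SS ψ 0 x + 1 / 2 * SS ψ 1 x) := a.add b
    rw [integral_add ab d, integral_add a b, integral_const_mul, integral_const_mul,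
      integral_const_mul]
  linarith

/-- A bound for the energy in terms of the transverse energy, the location of the zeros and the
number of strips carrying a dip. -/
lemma energy_bound {ψ : Ed 2 → ℂ} {c : ℝ} (hs : Smooth ψ) (h : GPeq c ψ) (hE : FiniteEnergy ψ)
    (hlim : Tendsto ψ (cocompact (Ed 2)) (𝓝 1)) {R : ℝ} (hR : ∀ x, ψ x = 0 → ‖x‖ < R) {M : ℝ}
    (hM : ∀ x, ‖ψ x‖ ≤ M) {C' : ℝ} (hT : ∫ x, SS ψ 1 x ≤ C') {r κ : ℝ} (hr : 0 < r) (hκ : 0 < κ)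
    (hκr : κ ≤ 1 / 4 - c ^ 2 / (8 * r)) {N : ℕ}
    (hN : ∀ D : Finset ℤ, (∀ k ∈ D, ∃ x : Ed 2, (k : ℝ) - 1 ≤ x 1 ∧ x 1 ≤ k + 2 ∧
      ‖ψ x‖ ^ 2 < r) → D.card ≤ N) :
    energy ψ ≤ C' + (5 * (1 / (2 * κ)) +
      8 * (M * (((N + (2 * (⌈R⌉₊ + 2) + 1) : ℕ) : ℝ) * zmass)) ^ 2) * C' := by
  classical
  set w : ℕ := ⌈R⌉₊ + 2 with hw
  have hRw : R + 2 ≤ w := by rw [hw]; push_cast; linarith [Nat.le_ceil R]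
  set dip : ℤ → Prop := fun k => ∃ x : Ed 2, (k : ℝ) - 1 ≤ x 1 ∧ x 1 ≤ k + 2 ∧ ‖ψ x‖ ^ 2 < r
  set bad : ℤ → Prop := fun k => dip k ∨ |(0:ℝ) - k| ≤ w
  have hbad : ∀ D : Finset ℤ, (∀ k ∈ D, bad k) → D.card ≤ N + (2 * w + 1) := by
    intro D hD
    have h1 : D ⊆ D.filter dip ∪ D.filter (fun k : ℤ => |(0:ℝ) - k| ≤ w) := by
      intro k hk
      rw [Finset.mem_union, Finset.mem_filter, Finset.mem_filter]
      exact (hD k hk).imp (fun h => ⟨hk, h⟩) (fun h => ⟨hk, h⟩)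
    have h2 := (Finset.card_le_card h1).trans (Finset.card_union_le _ _)
    have h3 := hN (D.filter dip) fun k hk => (Finset.mem_filter.1 hk).2
    have h4 : (D.filter (fun k : ℤ => |(0:ℝ) - k| ≤ w)).card ≤ 2 * w + 1 := by
      exact_mod_cast count_near D 0 w
    omega
  have hgood : ∀ k : ℤ, ¬ bad k → ∫ x : Ed 2, zet (x 1 - k) * etaF ψ x ^ 2 ≤
      1 / (2 * κ) * ∫ x : Ed 2, zet (x 1 - k) * SS ψ 1 x := by
    intro k hk
    simp only [bad, dip, not_or, not_exists, not_and, not_lt, not_le] at hk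
    obtain ⟨hk1, hk2⟩ := hk
    have hz : ∀ t : ℝ, zet (t - k) ≠ 0 → (k:ℝ) - 1 ≤ t ∧ t ≤ k + 2 := by
      intro t ht
      by_contra hcon
      apply ht
      apply zet_zero
      by_contra! h2
      exact hcon ⟨by linarith [h2.1], by linarith [h2.2]⟩
    obtain ⟨m, hm, a, hab⟩ : ∃ m > 0, ∃ a : ℝ,
        ((∀ t ≤ a, zet (t - k) = 0) ∧ (∀ x : Ed 2, a ≤ x 1 → m ≤ ‖ψ x‖)) ∨
        ((∀ t, a ≤ t → zet (t - k) = 0) ∧ (∀ x : Ed 2, x 1 ≤ a → m ≤ ‖ψ x‖)) := by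
      rw [lt_abs] at hk2
      rcases hk2 with h2 | h2
      · obtain ⟨m, hm, hmS⟩ := pos_lower hs.continuous hlim (S := {x : Ed 2 | x 1 ≤ -R})
          (isClosed_le (by fun_prop) continuous_const) (fun x hx h0 => by
            have hx' : x 1 ≤ -R := hx
            linarith [hR x h0, abs_coord_le x 1, neg_abs_le (x 1)])
        exact ⟨m, hm, -R, Or.inr ⟨fun t ht => zet_zero (Or.inr (by linarith)), hmS⟩⟩
      · obtain ⟨m, hm, hmS⟩ := pos_lower hs.continuous hlim (S := {x : Ed 2 | R ≤ x 1})
          (isClosed_le continuous_const (by fun_prop)) (fun x hx h0 => by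
            have hx' : R ≤ x 1 := hx
            linarith [hR x h0, abs_coord_le x 1, le_abs_self (x 1)])
        exact ⟨m, hm, R, Or.inl ⟨fun t ht => zet_zero (Or.inl (by linarith)), hmS⟩⟩
    have := strip_coercive hs h hE hm (zet_shift_smooth k) (zet_shift_supp k)
      (fun t => zet_nonneg _) a hab hr
      (fun x hx => hk1 x (hz _ hx).1 (hz _ hx).2)
    have hpos : 0 ≤ ∫ x : Ed 2, zet (x 1 - k) * etaF ψ x ^ 2 :=
      integral_nonneg fun x => mul_nonneg (zet_nonneg _) (sq_nonneg _)
    have h3 := (mul_le_mul_of_nonneg_right hκr hpos).trans this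
    rw [one_div_mul_eq_div, le_div_iff₀ (by positivity)]
    linarith
  have := int_eta_bound hs hE hM hT (K := 1 / (2 * κ)) (by positivity) hbad hgood
  rw [energy_eq hs h hE]
  linarith

/-! ### The global phase of a vortexless solution -/

lemma exterior_preconnected (R : ℝ) (hR : 0 ≤ R) : IsPreconnected {x : Ed 2 | R < ‖x‖} := by
  have h1 : IsPreconnected (Set.Ioi R ×ˢ (Set.univ : Set ℝ)) := isPreconnected_Ioi.prod
    isPreconnected_univ
  have h2 : Continuous (fun p : ℝ × ℝ => (!₂[p.1 * Real.cos p.2, p.1 * Real.sin p.2] : Ed 2)) := by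
    rw [show (fun p : ℝ × ℝ => (!₂[p.1 * Real.cos p.2, p.1 * Real.sin p.2] : Ed 2)) =
      fun p => (WithLp.toLp 2 (![p.1 * Real.cos p.2, p.1 * Real.sin p.2]) : Ed 2) from rfl]
    refine (PiLp.continuous_toLp 2 _).comp (continuous_pi fun i => ?_)
    fin_cases i
    · show Continuous fun p : ℝ × ℝ => p.1 * Real.cos p.2
      fun_prop
    · show Continuous fun p : ℝ × ℝ => p.1 * Real.sin p.2
      fun_prop
  have h3 := h1.image _ h2.continuousOn
  convert h3 using 1
  ext x
  simp only [Set.mem_ofPred_eq, Set.mem_image, Set.mem_prod, Set.mem_Ioi, Set.mem_univ, and_true,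
    Prod.exists]
  constructor
  · intro hx
    set z : ℂ := ⟨x 0, x 1⟩
    have hz : ‖x‖ = ‖z‖ := by
      rw [EuclideanSpace.norm_eq, Complex.norm_def, Fin.sum_univ_two, Complex.normSq_apply]
      simp [z, sq]
    refine ⟨‖z‖, arg z, by rw [← hz]; exact hx, ?_⟩
    rw [Complex.norm_mul_cos_arg, Complex.norm_mul_sin_arg]
    ext i; fin_cases i <;> rfl
  · rintro ⟨s, a, hs, rfl⟩
    have : ‖(!₂[s * Real.cos a, s * Real.sin a] : Ed 2)‖ = s := by
      rw [EuclideanSpace.norm_eq, Fin.sum_univ_two]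
      simp only [Real.norm_eq_abs, sq_abs]
      have : (s * Real.cos a) ^ 2 + (s * Real.sin a) ^ 2 = s ^ 2 := by
        nlinarith [Real.sin_sq_add_cos_sq a]
      simp only [Matrix.cons_val_zero, Matrix.cons_val_one]
      rw [this, Real.sqrt_sq (hR.trans hs.le)]
    rw [this]; exact hs

set_option maxHeartbeats 1000000 in
/-- A nowhere vanishing `ψ` tending to `1` has a smooth phase tending to `0`. -/
lemma phase {ψ : Ed 2 → ℂ} (hs : Smooth ψ) (hlim : Tendsto ψ (cocompact (Ed 2)) (𝓝 1))
    (hne : ∀ x, ψ x ≠ 0) :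
    ∃ θ : Ed 2 → ℝ, Smooth θ ∧ (∀ i, dd i θ = pp ψ i) ∧ Tendsto θ (cocompact (Ed 2)) (𝓝 0) := by
  have hp : ∀ i, Smooth (pp ψ i) := fun i =>
    contDiff_iff_contDiffAt.2 fun x => pp_contDiffAt hs i x (hne x)
  set ω : Ed 2 → (Ed 2 →L[ℝ] ℝ) := fun x => coordL 0 (pp ψ 0 x) + coordL 1 (pp ψ 1 x) with hω
  have hωs : ContDiff ℝ (⊤ : ℕ∞) ω :=
    ((coordL 0).contDiff.comp (hp 0)).add ((coordL 1).contDiff.comp (hp 1))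
  have hcurl : ∀ x, dd 0 (pp ψ 1) x = dd 1 (pp ψ 0) x := by
    intro x
    rw [dd_of_line (hp 1).diff (pp_line hs 0 1 x (hne x)),
      dd_of_line (hp 0).diff (pp_line hs 1 0 x (hne x)), dd_jj hs, dd_jj hs, dd_eta hs, dd_eta hs,
      dd_comm hs 0 1, normSq_eq]
    unfold jj
    congr 1
    ring
  obtain ⟨θ0, hθ0⟩ := Convex.exists_forall_hasFDerivAt_of_fderiv_symmetric
    (s := (Set.univ : Set (Ed 2))) (ω := ω) convex_univ isOpen_univ
    (hωs.differentiable (by simp)).differentiableOn (by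
      intro x _ v w
      have hd : fderiv ℝ ω x = (coordL 0).comp (fderiv ℝ (pp ψ 0) x) +
          (coordL 1).comp (fderiv ℝ (pp ψ 1) x) := by
        have h0 := (coordL (F := ℝ) 0).hasFDerivAt.comp x ((hp 0).diff x).hasFDerivAt
        have h1 := (coordL (F := ℝ) 1).hasFDerivAt.comp x ((hp 1).diff x).hasFDerivAt
        exact (h0.add h1).fderiv
      rw [hd, fderiv_eq_coord, fderiv_eq_coord (pp ψ 1)]
      simp only [add_apply, ContinuousLinearMap.comp_apply, coordL_apply, smul_eq_mul]
      rw [hcurl]; ring)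
  have hf0 : ∀ x, fderiv ℝ θ0 x = ω x := fun x => (hθ0 x (Set.mem_univ x)).fderiv
  have hθd : Differentiable ℝ θ0 := fun x => (hθ0 x (Set.mem_univ x)).differentiableAt
  have hθs : Smooth θ0 := by
    refine contDiff_infty_iff_fderiv.2 ⟨hθd, ?_⟩
    rw [show fderiv ℝ θ0 = ω from funext hf0]
    exact hωs
  have hdθ : ∀ i, dd i θ0 = pp ψ i := by
    intro i
    ext x
    show fderiv ℝ θ0 x _ = _
    rw [hf0]
    simp only [hω, add_apply, coordL_apply]
    fin_cases i <;> simp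
  -- `e^{-2iθ₀} ψ / conj ψ` has vanishing gradient.
  set g : Ed 2 → ℂ := fun x => Complex.exp (-(2 * I * (θ0 x : ℂ))) * ψ x *
    ((starRingEnd ℂ) (ψ x))⁻¹ with hg
  have hcne : ∀ x, (starRingEnd ℂ) (ψ x) ≠ 0 := fun x => by simpa using hne x
  have hgs : Smooth g := by
    refine ContDiff.mul (ContDiff.mul ?_ hs) (hs.conj.inv hcne)
    exact ContDiff.cexp (((contDiff_const.mul (ofRealCLM.contDiff.comp hθs))).neg)
  have hg0 : ∀ i x, dd i g x = 0 := by
    intro i x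
    refine dd_of_line hgs.diff ?_
    have h1 := (dd_line hθd i x).ofReal_comp
    have h2 := (((h1.const_mul (2 * I)).neg).cexp)
    have h3 := dd_line hs.diff i x
    have h4 := dd_line hs.conj.diff i x
    have h5 := (h2.mul h3).mul (h4.inv (by simpa using hne x))
    refine h5.congr_deriv ?_
    simp only [zero_smul, add_zero, Pi.mul_apply, Pi.inv_apply, Pi.neg_apply]
    rw [dd_conj hs.diff, hdθ, pp]
    have hcx := hcne x
    have hx := hne x
    have hn : ((‖ψ x‖ ^ 2 : ℝ) : ℂ) = ψ x * (starRingEnd ℂ) (ψ x) := by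
      rw [Complex.mul_conj, Complex.normSq_eq_norm_sq]
    have hj : ((jj ψ i x : ℝ) : ℂ) * (2 * I) = (starRingEnd ℂ) (ψ x) * dd i ψ x -
        ψ x * (starRingEnd ℂ) (dd i ψ x) := by
      apply Complex.ext <;> simp [jj] <;> ring
    rw [ofReal_div, hn]
    have h6 : 2 * I * (((jj ψ i x : ℝ) : ℂ) / (ψ x * (starRingEnd ℂ) (ψ x))) =
        ((starRingEnd ℂ) (ψ x) * dd i ψ x - ψ x * (starRingEnd ℂ) (dd i ψ x)) /
          (ψ x * (starRingEnd ℂ) (ψ x)) := by rw [← hj]; ring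
    rw [h6]
    field_simp
    ring
  have hgc : ∀ x, g x = g 0 := by
    intro x
    refine is_const_of_fderiv_eq_zero hgs.diff (fun x => ?_) x 0
    rw [fderiv_eq_coord, hg0, hg0]; simp
  have hgn : ‖g 0‖ = 1 := by
    have : ‖Complex.exp (-(2 * I * (θ0 0 : ℂ)))‖ = 1 := by
      rw [Complex.norm_exp]; simp
    simp only [hg]
    rw [norm_mul, norm_mul, norm_inv, this, RCLike.norm_conj, one_mul,
      mul_inv_cancel₀ (norm_ne_zero_iff.2 (hne 0))]
  set β : ℝ := arg (g 0) / 2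
  have hβ : Complex.exp (2 * I * (β : ℂ)) = g 0 := by
    have := Complex.norm_mul_exp_arg_mul_I (g 0)
    rw [hgn, ofReal_one, one_mul] at this
    rw [← this]
    congr 1
    simp only [β]; push_cast; ring
  have hexp : ∀ x, Complex.exp (2 * I * ((θ0 x + β : ℝ) : ℂ)) =
      ψ x * ((starRingEnd ℂ) (ψ x))⁻¹ := by
    intro x
    have h1 : Complex.exp (2 * I * ((θ0 x + β : ℝ) : ℂ)) =
        Complex.exp (2 * I * (θ0 x : ℂ)) * g x := by
      rw [hgc, ← hβ, ← Complex.exp_add]; congr 1; push_cast; ring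
    rw [h1]
    simp only [hg]
    have e0 : Complex.exp (2 * I * (θ0 x : ℂ)) * Complex.exp (-(2 * I * (θ0 x : ℂ))) = 1 := by
      rw [← Complex.exp_add]; simp
    linear_combination (ψ x * ((starRingEnd ℂ) (ψ x))⁻¹) * e0
  have hulim : Tendsto (fun x => Complex.exp (2 * I * ((θ0 x + β : ℝ) : ℂ))) (cocompact (Ed 2))
      (𝓝 1) := by
    simp only [hexp]
    have := hlim.mul ((continuous_conj.tendsto _ |>.comp hlim).inv₀ (by simp))
    simpa using this
  have hre : ∀ t : ℝ, (Complex.exp (2 * I * (t : ℂ))).re = Real.cos (2 * t) ∧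
      (Complex.exp (2 * I * (t : ℂ))).im = Real.sin (2 * t) := by
    intro t
    have : 2 * I * (t : ℂ) = ((2 * t : ℝ) : ℂ) * I := by push_cast; ring
    rw [this, Complex.exp_ofReal_mul_I_re, Complex.exp_ofReal_mul_I_im]
    exact ⟨rfl, rfl⟩
  have hcos : Tendsto (fun x => Real.cos (2 * (θ0 x + β))) (cocompact (Ed 2)) (𝓝 1) := by
    have := (continuous_re.tendsto _).comp hulim
    simpa only [Function.comp_def, (hre _).1, one_re] using this
  have hsin : Tendsto (fun x => Real.sin (2 * (θ0 x + β))) (cocompact (Ed 2)) (𝓝 0) := by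
    have := (continuous_im.tendsto _).comp hulim
    simpa only [Function.comp_def, (hre _).2, one_im] using this
  obtain ⟨R, hR0, hR⟩ : ∃ R : ℝ, 0 ≤ R ∧ ∀ x : Ed 2, R < ‖x‖ → 0 < Real.cos (2 * (θ0 x + β)) := by
    have h1 := hcos.eventually_const_lt one_pos
    rw [← Metric.cobounded_eq_cocompact, ← comap_norm_atTop, eventually_comap,
      eventually_atTop] at h1
    obtain ⟨R, hR⟩ := h1
    exact ⟨max R 0, le_max_right _ _, fun x hx => hR ‖x‖ ((le_max_left _ _).trans hx.le) x rfl⟩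
  set x0 : Ed 2 := EuclideanSpace.single 0 (R + 1)
  have hx0 : R < ‖x0‖ := by
    rw [PiLp.norm_single, Real.norm_of_nonneg (by linarith)]; linarith
  set k : ℤ := round ((θ0 x0 + β) / Real.pi) with hk
  set θ : Ed 2 → ℝ := fun x => θ0 x + (β - k * Real.pi) with hθ
  have hθ2 : ∀ x, 2 * θ x = 2 * (θ0 x + β) - k * (2 * Real.pi) := fun x => by simp only [hθ]; ring
  have hθcos : ∀ x : Ed 2, R < ‖x‖ → 0 < Real.cos (2 * θ x) := by
    intro x hx
    rw [hθ2, Real.cos_sub_int_mul_two_pi]; exact hR x hx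
  have hx0θ : |2 * θ x0| ≤ Real.pi := by
    have h1 := abs_sub_round ((θ0 x0 + β) / Real.pi)
    have h2 : 2 * θ x0 = ((θ0 x0 + β) / Real.pi - k) * (2 * Real.pi) := by
      rw [hθ2]; field_simp
    rw [h2, abs_mul, abs_of_pos (by positivity : (0:ℝ) < 2 * Real.pi)]
    nlinarith [Real.pi_pos]
  have hθc : Continuous θ := hθs.continuous.add continuous_const
  have hpi := Real.pi_pos
  have hsmall : ∀ x : Ed 2, R < ‖x‖ → -(Real.pi / 2) < 2 * θ x ∧ 2 * θ x < Real.pi / 2 := by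
    have hpre : IsPreconnected ((fun x => 2 * θ x) '' {x : Ed 2 | R < ‖x‖}) :=
      (exterior_preconnected R hR0).image _ (continuous_const.mul hθc).continuousOn
    have hord := hpre.ordConnected
    have hno : ∀ t ∈ (fun x => 2 * θ x) '' {x : Ed 2 | R < ‖x‖}, 0 < Real.cos t := by
      rintro _ ⟨x, hx, rfl⟩
      exact hθcos x hx
    have hm0 : 2 * θ x0 ∈ (fun x => 2 * θ x) '' {x : Ed 2 | R < ‖x‖} := ⟨x0, hx0, rfl⟩
    obtain ⟨a1, a2⟩ := abs_le.1 hx0θ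
    have b2 : 2 * θ x0 < Real.pi / 2 := by
      by_contra! h
      have := Real.cos_nonpos_of_pi_div_two_le_of_le h (by linarith)
      linarith [hno _ hm0]
    have b1 : -(Real.pi / 2) < 2 * θ x0 := by
      by_contra! h
      have := Real.cos_nonpos_of_pi_div_two_le_of_le (x := -(2 * θ x0)) (by linarith) (by linarith)
      rw [Real.cos_neg] at this
      linarith [hno _ hm0]
    intro x hx
    have hm : 2 * θ x ∈ (fun x => 2 * θ x) '' {x : Ed 2 | R < ‖x‖} := ⟨x, hx, rfl⟩
    constructor
    · by_contra! h
      have := hno _ (hord.out hm hm0 ⟨h, b1.le⟩)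
      rw [Real.cos_neg, Real.cos_pi_div_two] at this
      exact lt_irrefl _ this
    · by_contra! h
      have := hno _ (hord.out hm0 hm ⟨b2.le, h⟩)
      rw [Real.cos_pi_div_two] at this
      exact lt_irrefl _ this
  refine ⟨θ, hθs.add contDiff_const, fun i => ?_, ?_⟩
  · rw [hθ, dd_add hθd (by fun_prop), dd_const, hdθ]
    simp
  · have h1 : Tendsto (fun x => Real.arcsin (Real.sin (2 * θ x)) / 2) (cocompact (Ed 2)) (𝓝 0) := by
      have h2 : Tendsto (fun x => Real.sin (2 * θ x)) (cocompact (Ed 2)) (𝓝 0) := by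
        refine hsin.congr fun x => ?_
        rw [hθ2, Real.sin_sub_int_mul_two_pi]
      have := ((Real.continuous_arcsin.tendsto 0).comp h2).div_const 2
      simpa using this
    refine h1.congr' ?_
    have hext : ∀ᶠ x in cocompact (Ed 2), R < ‖x‖ := by
      rw [← Metric.cobounded_eq_cocompact]
      exact tendsto_norm_cobounded_atTop.eventually_gt_atTop R
    filter_upwards [hext] with x hx
    obtain ⟨h3, h4⟩ := hsmall x hx
    rw [Real.arcsin_sin h3.le h4.le]; ring

/-! ### Every solution dips -/

lemma eq_zero_of_integral_nonpos {f : Ed 2 → ℝ} (hf : Continuous f) (h0 : ∀ x, 0 ≤ f x)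
    (hi : Integrable f) (h : ∫ x, f x ≤ 0) (x : Ed 2) : f x = 0 := by
  have h1 : ∫ x, f x = 0 := le_antisymm h (integral_nonneg h0)
  have h2 := (integral_eq_zero_iff_of_nonneg h0 hi).1 h1
  exact congrFun (Continuous.ae_eq_iff_eq volume hf continuous_const |>.1 h2) x

/-- A nontrivial finite energy solution of speed `c` dips below any level `r > c² / 2`.
Otherwise `ψ` lifts to a phase `θ` vanishing at infinity; testing the continuity equation
`div (j - (c/2) η e₀) = 0` with `θ`, together with the virial identities, gives
`∫ |ψ|² |∇θ|² = (c/2) ∫ η ∂₀θ = (1/2) ∫ η²`, which for `|ψ|² > r` forces `η = 0`, `∇θ = 0`. -/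
lemma dip_exists {ψ : Ed 2 → ℂ} {c r : ℝ} (hs : Smooth ψ) (h : GPeq c ψ) (hE : FiniteEnergy ψ)
    (hlim : Tendsto ψ (cocompact (Ed 2)) (𝓝 1)) (hr : c ^ 2 / 2 < r) (hnt : Nontriv ψ) :
    ∃ y, ‖ψ y‖ ^ 2 ≤ r := by
  by_contra! hlow
  have hr0 : 0 < r := lt_of_le_of_lt (by positivity) hr
  have hne : ∀ x, ψ x ≠ 0 := fun x hx => by
    have := hlow x; rw [hx] at this; simp at this; linarith
  obtain ⟨θ, hθs, hdθ, hθ0⟩ := phase hs hlim hne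
  have hps : ∀ i, Smooth (pp ψ i) := fun i => hdθ i ▸ hθs.dd i
  have hρp : ∀ i x, ‖ψ x‖ ^ 2 * pp ψ i x = jj ψ i x := fun i x => by
    unfold pp
    have := norm_pos_iff.2 (hne x)
    field_simp
  have hηs := smooth_eta hs
  have hη2 := int_eta_sq hs hE
  have hψc : Continuous (fun x => ‖ψ x‖ ^ 2) := hs.continuous.norm.pow 2
  have hP : ∀ i, Integrable (fun x => ‖ψ x‖ ^ 2 * pp ψ i x ^ 2) := fun i =>
    (int_SS hs hE i).mono' (hψc.mul ((hps i).continuous.pow 2)).aestronglyMeasurable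
      (ae_of_all _ fun x => by
        rw [Real.norm_of_nonneg (by positivity)]; exact pp_sq_le i x)
  have hp2 : ∀ i, Integrable (fun x => pp ψ i x ^ 2) := fun i =>
    ((hP i).const_mul (1 / r)).mono' ((hps i).continuous.pow 2).aestronglyMeasurable
      (ae_of_all _ fun x => by
        rw [Real.norm_of_nonneg (by positivity), one_div, ← div_eq_inv_mul, le_div_iff₀ hr0]
        nlinarith [hlow x, sq_nonneg (pp ψ i x)])
  have hηp : Integrable (fun x => etaF ψ x * pp ψ 0 x) :=
    (hη2.add (hp2 0)).mono' (hηs.continuous.mul (hps 0).continuous).aestronglyMeasurable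
      (ae_of_all _ fun x => by
        rw [Real.norm_eq_abs, abs_le]
        simp only [Pi.add_apply]
        constructor <;> nlinarith [sq_nonneg (etaF ψ x + pp ψ 0 x), sq_nonneg (etaF ψ x - pp ψ 0 x),
          sq_nonneg (etaF ψ x), sq_nonneg (pp ψ 0 x)])
  -- the continuity equation tested with the phase
  set F : Fin 2 → Ed 2 → ℝ := ![fun x => jj ψ 0 x - c / 2 * etaF ψ x, jj ψ 1] with hF
  have hF0 : F 0 = fun x => jj ψ 0 x - c / 2 * etaF ψ x := rfl
  have hF1 : F 1 = jj ψ 1 := rfl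
  have hFs : ∀ i, Smooth (F i) := by
    intro i
    fin_cases i
    · exact (smooth_jj hs 0).sub (contDiff_const.mul hηs)
    · exact smooth_jj hs 1
  have hFdiv : ∀ x, dd 0 (F 0) x + dd 1 (F 1) x = 0 := by
    intro x
    have hcs : Smooth (fun x => c / 2 * etaF ψ x) := contDiff_const.mul hηs
    rw [hF0, hF1, dd_sub (smooth_jj hs 0).diff hcs.diff,
      dd_mul (by fun_prop) hηs.diff, dd_const, dd_jj hs, dd_jj hs, dd_eta hs]
    have e1 := GPeq_re h x
    have e2 := GPeq_im h x
    simp only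
    linear_combination (ψ x).re * e2 - (ψ x).im * e1
  have hdiv : ∀ x, dd 0 (fun x => θ x * F 0 x) x + dd 1 (fun x => θ x * F 1 x) x =
      ‖ψ x‖ ^ 2 * pp ψ 0 x ^ 2 + ‖ψ x‖ ^ 2 * pp ψ 1 x ^ 2 -
        c / 2 * (etaF ψ x * pp ψ 0 x) := by
    intro x
    rw [dd_mul hθs.diff (hFs 0).diff, dd_mul hθs.diff (hFs 1).diff, hdθ, hdθ]
    have := hFdiv x
    simp only [hF0, hF1, ← hρp] at this ⊢
    linear_combination θ x * this
  have hWi : Integrable (fun x => ‖ψ x‖ ^ 2 * pp ψ 0 x ^ 2 + ‖ψ x‖ ^ 2 * pp ψ 1 x ^ 2 -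
        c / 2 * (etaF ψ x * pp ψ 0 x)) := ((hP 0).add (hP 1)).sub (hηp.const_mul _)
  obtain ⟨M, hM0, hM⟩ : ∃ M : ℝ, 0 ≤ M ∧ ∀ x, ‖ψ x‖ ^ 2 ≤ M :=
    ⟨1 + c ^ 2 / 4, by positivity, sup_bound hs h hlim⟩
  have hjj2 : ∀ i x, jj ψ i x ^ 2 ≤ M * SS ψ i x := by
    intro i x
    have h1 := abs_jj_le (ψ := ψ) i x
    have h2 : jj ψ i x ^ 2 ≤ (‖ψ x‖ * ‖dd i ψ x‖) ^ 2 := by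
      rw [← sq_abs]; exact pow_le_pow_left₀ (abs_nonneg _) h1 2
    unfold SS
    nlinarith [hM x, sq_nonneg (‖dd i ψ x‖)]
  have hk2 : Integrable (fun x => (|F 0 x| + |F 1 x|) ^ 2) := by
    have hb : Integrable (fun x => 4 * M * SS ψ 0 x + 4 * M * SS ψ 1 x + c ^ 2 * etaF ψ x ^ 2) :=
      (((int_SS hs hE 0).const_mul (4 * M)).add ((int_SS hs hE 1).const_mul (4 * M))).add
        (hη2.const_mul _)
    refine hb.mono' (((hFs 0).continuous.abs.add (hFs 1).continuous.abs).pow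
      2).aestronglyMeasurable (ae_of_all _ fun x => ?_)
    rw [Real.norm_of_nonneg (by positivity)]
    have a0 : (|F 0 x| + |F 1 x|) ^ 2 ≤ 2 * (F 0 x ^ 2 + F 1 x ^ 2) := by
      rw [← sq_abs (F 0 x), ← sq_abs (F 1 x)]
      nlinarith [sq_nonneg (|F 0 x| - |F 1 x|)]
    have a1 : F 0 x ^ 2 ≤ 2 * jj ψ 0 x ^ 2 + c ^ 2 / 2 * etaF ψ x ^ 2 := by
      rw [hF0]; simp only
      nlinarith [sq_nonneg (jj ψ 0 x + c / 2 * etaF ψ x)]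
    have a2 : F 1 x ^ 2 = jj ψ 1 x ^ 2 := rfl
    nlinarith [hjj2 0 x, hjj2 1 x, sq_nonneg (jj ψ 1 x)]
  have hW0 : ∫ x, (‖ψ x‖ ^ 2 * pp ψ 0 x ^ 2 + ‖ψ x‖ ^ 2 * pp ψ 1 x ^ 2 -
        c / 2 * (etaF ψ x * pp ψ 0 x)) = 0 := by
    have := div_thm (X := fun i x => θ x * F i x) (fun i => hθs.mul (hFs i))
      (g := fun _ => 0) (h := θ) (k := fun x => |F 0 x| + |F 1 x|) (integrable_zero _ _ _)
      (fun _ => le_rfl) hk2 hθ0 (by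
        intro i x
        rw [abs_mul, zero_add, abs_of_nonneg (add_nonneg (abs_nonneg (F 0 x)) (abs_nonneg (F 1 x)))]
        refine mul_le_mul_of_nonneg_left ?_ (abs_nonneg _)
        fin_cases i
        · exact le_add_of_nonneg_right (abs_nonneg _)
        · exact le_add_of_nonneg_left (abs_nonneg _)) (by simpa only [hdiv] using hWi)
    simpa only [hdiv] using this
  have hPP : Integrable (fun x => ‖ψ x‖ ^ 2 * pp ψ 0 x ^ 2 + ‖ψ x‖ ^ 2 * pp ψ 1 x ^ 2) :=
    (hP 0).add (hP 1)
  rw [integral_sub hPP (hηp.const_mul _), integral_const_mul, integral_add (hP 0) (hP 1)] at hW0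
  have hX : ∫ x, XX c ψ 1 x = 0 := (total_id hs h hE (Real.sqrt_pos.2 hr0) fun x =>
    Real.sqrt_le_iff.2 ⟨norm_nonneg _, (hlow x).le⟩).2
  simp only [XX1_eq] at hX
  have i1 := (int_SS hs hE 1).const_mul (1 / 2)
  have i0 := (int_SS hs hE 0).const_mul (1 / 2)
  have i2 := hη2.const_mul (1 / 4)
  have i3 := hηp.const_mul (c / 2)
  have i02 : Integrable (fun x => 1 / 2 * SS ψ 0 x + 1 / 4 * etaF ψ x ^ 2) := i0.add i2
  have i023 : Integrable (fun x => 1 / 2 * SS ψ 0 x + 1 / 4 * etaF ψ x ^ 2 -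
    c / 2 * (etaF ψ x * pp ψ 0 x)) := i02.sub i3
  rw [integral_sub i1 i023, integral_sub i02 i3, integral_add i0 i2, integral_const_mul,
    integral_const_mul, integral_const_mul, integral_const_mul, virial0 hs h hE,
    energy_eq hs h hE] at hX
  have hcs : c / 2 * ∫ x, etaF ψ x * pp ψ 0 x ≤
      1 / 4 * (∫ x, etaF ψ x ^ 2) + c ^ 2 / 4 * ∫ x, pp ψ 0 x ^ 2 := by
    rw [← integral_const_mul, ← integral_const_mul, ← integral_const_mul,
      ← integral_add i2 ((hp2 0).const_mul _)]
    refine integral_mono i3 (i2.add ((hp2 0).const_mul _)) fun x => ?_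
    simp only
    nlinarith [sq_nonneg (etaF ψ x - c * pp ψ 0 x)]
  have hrP : r * ∫ x, pp ψ 0 x ^ 2 ≤ ∫ x, ‖ψ x‖ ^ 2 * pp ψ 0 x ^ 2 := by
    rw [← integral_const_mul]
    refine integral_mono ((hp2 0).const_mul _) (hP 0) fun x => ?_
    exact mul_le_mul_of_nonneg_right (hlow x).le (sq_nonneg _)
  have hn0 : 0 ≤ ∫ x, pp ψ 0 x ^ 2 := integral_nonneg fun x => sq_nonneg _
  have hnP : ∀ i, 0 ≤ ∫ x, ‖ψ x‖ ^ 2 * pp ψ i x ^ 2 := fun i =>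
    integral_nonneg fun x => by positivity
  have hz : ∫ x, pp ψ 0 x ^ 2 ≤ 0 := by nlinarith [hnP 1]
  have hz0 : ∫ x, pp ψ 0 x ^ 2 = 0 := le_antisymm hz hn0
  rw [hz0] at hcs
  have hηn : ∫ x, etaF ψ x ^ 2 ≤ 0 := by linarith
  have hη0 : ∀ x, etaF ψ x = 0 := fun x => by
    simpa using eq_zero_of_integral_nonpos (hηs.continuous.pow 2) (fun x => sq_nonneg _) hη2 hηn x
  have hj0 : ∀ i x, jj ψ i x = 0 := by
    intro i x
    have hPi : ∫ x, ‖ψ x‖ ^ 2 * pp ψ i x ^ 2 ≤ 0 := by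
      have := hnP 0; have := hnP 1
      fin_cases i
      · show ∫ x, ‖ψ x‖ ^ 2 * pp ψ 0 x ^ 2 ≤ 0
        linarith
      · show ∫ x, ‖ψ x‖ ^ 2 * pp ψ 1 x ^ 2 ≤ 0
        linarith
    have := eq_zero_of_integral_nonpos (hψc.mul ((hps i).continuous.pow 2))
      (fun x => mul_nonneg (sq_nonneg _) (sq_nonneg _)) (hP i) hPi x
    have hpz : pp ψ i x = 0 := by simpa [hne x] using this
    rw [← hρp, hpz, mul_zero]
  have hd0 : ∀ i x, dd i ψ x = 0 := by
    intro i x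
    have e1 := hj0 i x
    have e2 : dd i (etaF ψ) x = 0 := by
      rw [show etaF ψ = fun _ => 0 from funext hη0, dd_const]
    rw [dd_eta hs] at e2
    unfold jj at e1
    have e3 : ‖ψ x‖ ^ 2 * ‖dd i ψ x‖ ^ 2 = 0 := by
      rw [normSq_eq, normSq_eq]
      simp only at e2
      have e2' : (ψ x).re * (dd i ψ x).re + (ψ x).im * (dd i ψ x).im = 0 := by linarith
      linear_combination ((ψ x).re * (dd i ψ x).im - (ψ x).im * (dd i ψ x).re) * e1 +
        ((ψ x).re * (dd i ψ x).re + (ψ x).im * (dd i ψ x).im) * e2'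
    simpa [hne x] using e3
  refine hnt ⟨ψ 0, ?_, funext fun x => is_const_of_fderiv_eq_zero hs.diff (fun x => ?_) x 0⟩
  · have := hη0 0
    unfold etaF at this
    have h2 : ‖ψ 0‖ ^ 2 = 1 := by linarith
    nlinarith [norm_nonneg (ψ 0)]
  · rw [fderiv_eq_coord, hd0, hd0]; simp

/-! ### Passage to the limit -/

lemma eDen_translate (ψ : Ed 2 → ℂ) (ξ x : Ed 2) :
    eDen (fun x => ψ (x - ξ)) x = eDen ψ (x - ξ) := by
  simp only [eDen_eq, SS, etaF, dd_translate]

/-- Lower semicontinuity of the energy (Fatou). -/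
lemma finiteEnergy_limit {f : ℕ → Ed 2 → ℂ} {g : Ed 2 → ℂ} (hs : ∀ n, Smooth (f n))
    (hg : Smooth g) (hl : ∀ l x, Tendsto (fun n => Dl l (f n) x) atTop (𝓝 (Dl l g x)))
    (hE : ∀ n, FiniteEnergy (f n)) {B : ℝ} (hB : ∀ n, energy (f n) ≤ B) : FiniteEnergy g := by
  have hpt : ∀ x, Tendsto (fun n => eDen (f n) x) atTop (𝓝 (eDen g x)) := by
    intro x
    simp only [eDen_eq]
    exact ((((hl [0] x).norm.pow 2).const_mul _).add (((hl [1] x).norm.pow 2).const_mul _)).add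
      (((tendsto_const_nhds.sub ((hl [] x).norm.pow 2)).pow 2).const_mul _)
  refine ⟨(smooth_eDen hg).continuous.aestronglyMeasurable, ?_⟩
  rw [hasFiniteIntegral_iff_ofReal (ae_of_all _ eDen_nonneg)]
  have h1 : ∀ x, ENNReal.ofReal (eDen g x) =
      liminf (fun n => ENNReal.ofReal (eDen (f n) x)) atTop := fun x =>
    ((ENNReal.tendsto_ofReal (hpt x)).liminf_eq).symm
  simp only [h1]
  refine lt_of_le_of_lt (lintegral_liminf_le fun n =>
    (smooth_eDen (hs n)).continuous.measurable.ennreal_ofReal) ?_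
  refine lt_of_le_of_lt (liminf_le_of_le (a := ENNReal.ofReal B)
    (by isBoundedDefault) fun b hb => ?_) ENNReal.ofReal_lt_top
  obtain ⟨n, hn⟩ := hb.exists
  refine hn.trans ?_
  rw [← ofReal_integral_eq_lintegral_ofReal (hE n) (ae_of_all _ eDen_nonneg)]
  exact ENNReal.ofReal_le_ofReal (hB n)

/-- compactness in dimension 2 under a Morse index bound and a control on
the vortex set. -/
theorem statement3 (c : ℝ) (hc : c ∈ Set.Ioo 0 (Real.sqrt 2))
    (cn : ℕ → ℝ) (hcn : ∀ n, cn n ∈ Set.Ioo 0 (Real.sqrt 2))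
    (hclim : Tendsto cn atTop (𝓝 c))
    (ψn : ℕ → Ed 2 → ℂ)
    (hsol : ∀ n, ContDiff ℝ (⊤ : ℕ∞) (ψn n) ∧ GPeq (cn n) (ψn n) ∧
      FiniteEnergy (ψn n) ∧ Nontriv (ψn n) ∧
      Tendsto (ψn n) (cocompact (Ed 2)) (𝓝 1))
    (C : ℝ) (hC : 0 < C) (hI : ∀ n, lagr (cn n) (ψn n) ≤ C)
    (hmorse : ∀ n, MorseIndexLE (cn n) (ψn n) 1)
    (hvortex : (∀ n, ∀ x, ψn n x ≠ 0) ∨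
      ∃ R > (0 : ℝ), ∃ δ > (0 : ℝ), ∀ n,
        {x | ψn n x = 0} ⊆ Metric.ball (0 : Ed 2) R ∧
        ∀ x ∈ Metric.sphere (0 : Ed 2) R, δ ≤ ‖ψn n x‖) :
    ∃ (ξ : ℕ → Ed 2) (φ : ℕ → ℕ), StrictMono φ ∧
      ∃ ψ : Ed 2 → ℂ, ContDiff ℝ (⊤ : ℕ∞) ψ ∧ GPeq c ψ ∧ FiniteEnergy ψ ∧
        Nontriv ψ ∧ LocCk (fun n x => ψn (φ n) (x - ξ (φ n))) ψ := by
  have hs : ∀ n, Smooth (ψn n) := fun n => (hsol n).1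
  have hG : ∀ n, GPeq (cn n) (ψn n) := fun n => (hsol n).2.1
  have hE : ∀ n, FiniteEnergy (ψn n) := fun n => (hsol n).2.2.1
  have hlim : ∀ n, Tendsto (ψn n) (cocompact (Ed 2)) (𝓝 1) := fun n => (hsol n).2.2.2.2
  have hsq : ∀ a ∈ Set.Ioo 0 (Real.sqrt 2), a ^ 2 < 2 := fun a ha => by
    have := Real.sq_sqrt (show (0:ℝ) ≤ 2 by norm_num)
    nlinarith [ha.1, ha.2]
  have hc2 := hsq c hc
  have hM : ∀ n x, ‖ψn n x‖ ≤ 2 := fun n x => by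
    have := sup_bound (hs n) (hG n) (hlim n) x
    nlinarith [hsq _ (hcn n), norm_nonneg (ψn n x)]
  have hT : ∀ n, ∫ x, SS (ψn n) 1 x ≤ 2 * C := fun n =>
    transverse_bound (hs n) (hG n) (hE n) (hlim n) hC.le (hI n)
  obtain ⟨R, hR⟩ : ∃ R : ℝ, ∀ n x, ψn n x = 0 → ‖x‖ < R := by
    rcases hvortex with h | ⟨R, -, δ, -, h⟩
    · exact ⟨0, fun n x hx => absurd hx (h n x)⟩
    · exact ⟨R, fun n x hx => by simpa using (h n).1 hx⟩
  -- a level between the threshold `c² / 2` for dips and the threshold for instability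
  obtain ⟨r, hr1, hr2⟩ : ∃ r, c ^ 2 / 2 < r ∧ r < min 1 (2 * (1 + c ^ 2 / 4) / 3) :=
    exists_between (lt_min (by linarith) (by linarith))
  have hr0 : 0 < r := lt_of_le_of_lt (by positivity) hr1
  have hrlt1 : r < 1 := hr2.trans_le (min_le_left _ _)
  obtain ⟨N, hN⟩ := few_dips hclim hs hG hM hmorse (fun n => int_SS (hs n) (hE n) 1) hlim hT
    (hr2.trans_le (min_le_right _ _)) hrlt1
  have hκ0 : 0 < 1 / 4 - c ^ 2 / (8 * r) := by
    rw [sub_pos, div_lt_iff₀ (by positivity)]; linarith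
  obtain ⟨κ, hκ, hκ1⟩ := exists_between hκ0
  have hev : ∀ᶠ n in atTop, κ ≤ 1 / 4 - cn n ^ 2 / (8 * r) ∧ cn n ^ 2 / 2 < r ∧ N ≤ n := by
    have t1 : Tendsto (fun n => 1 / 4 - cn n ^ 2 / (8 * r)) atTop
        (𝓝 (1 / 4 - c ^ 2 / (8 * r))) := tendsto_const_nhds.sub ((hclim.pow 2).div_const _)
    filter_upwards [t1.eventually_const_lt hκ1,
      ((hclim.pow 2).div_const 2).eventually_lt_const hr1, eventually_ge_atTop N] with n a b d
    exact ⟨a.le, b, d⟩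
  obtain ⟨n0, hn0⟩ := eventually_atTop.1 hev
  obtain ⟨B, hB⟩ : ∃ B, ∀ n ≥ n0, energy (ψn n) ≤ B :=
    ⟨_, fun n hn => energy_bound (hs n) (hG n) (hE n) (hlim n) (hR n) (hM n) (hT n) hr0 hκ
      (hn0 n hn).1 (hN n (hn0 n hn).2.2)⟩
  have hy : ∀ n, ∃ y, n0 ≤ n → ‖ψn n y‖ ^ 2 ≤ r := fun n => by
    by_cases hn : n0 ≤ n
    · obtain ⟨y, hy⟩ := dip_exists (hs n) (hG n) (hE n) (hlim n) (hn0 n hn).2.1 (hsol n).2.2.2.1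
      exact ⟨y, fun _ => hy⟩
    · exact ⟨0, fun h => absurd h hn⟩
  choose y hy using hy
  set ξ : ℕ → Ed 2 := fun n => -y n with hξ
  have hbd : ∀ k, BD k (fun n => ψn (n + n0)) := fun k => BD.comp (fun n => n + n0)
    (uniform_bounds ⟨2, fun n => by
      rw [abs_of_pos (hcn n).1]; nlinarith [hsq _ (hcn n), (hcn n).1]⟩ hs hG ⟨2, hM⟩ k)
  set f : ℕ → Ed 2 → ℂ := fun n x => ψn (n + n0) (x - ξ (n + n0)) with hf
  have hfs : ∀ n, Smooth (f n) := fun n => smooth_translate (hs _) _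
  obtain ⟨φ, hφ, g, hg, hconv⟩ := compactness hfs
    (fun k => (hbd k).translate (fun n => ξ (n + n0)))
  have hl : ∀ l x, Tendsto (fun n => Dl l (f (φ n)) x) atTop (𝓝 (Dl l g x)) :=
    fun l x => tendsto_Dl (hconv l) x
  have hφ' : StrictMono fun n => φ n + n0 := fun a b hab => Nat.add_lt_add_right (hφ hab) n0
  refine ⟨ξ, fun n => φ n + n0, hφ', g, hg,
    GPeq_limit (hclim.comp hφ'.tendsto_atTop) (fun n => GPeq_translate (hG (φ n + n0)) _) hl, ?_, ?_,
    locCk_of_Dl (fun n => hfs (φ n)) hg hconv⟩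
  · refine finiteEnergy_limit (fun n => hfs (φ n)) hg hl (fun n => ?_) (B := B) (fun n => ?_)
    · have : eDen (f (φ n)) = fun x => eDen (ψn (φ n + n0)) (x - ξ (φ n + n0)) :=
        funext fun x => eDen_translate _ _ _
      unfold FiniteEnergy
      rw [this]
      exact (hE _).comp_sub_right _
    · have : energy (f (φ n)) = energy (ψn (φ n + n0)) := by
        unfold energy
        simp only [hf, eDen_translate]
        exact integral_sub_right_eq_self _ _
      rw [this]
      exact hB _ (Nat.le_add_left _ _)
  · rintro ⟨z, hz, rfl⟩
    have h0 : ‖z‖ ^ 2 ≤ r := by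
      refine le_of_tendsto ((hl [] 0).norm.pow 2) (Eventually.of_forall fun n => ?_)
      show ‖ψn (φ n + n0) (0 - ξ (φ n + n0))‖ ^ 2 ≤ r
      rw [hξ]
      simpa using hy _ (Nat.le_add_left n0 (φ n))
    rw [hz] at h0
    linarith
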